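/- arXiv:2208.13890 — 2 statements merged into one kernel-verified Lean document; each statement's English description precedes it below -/
import Mathlib

section
/- Every Peano space (compact, connected, locally connected metric space) is homeomorphic to a compact length space (i.e., a compact metric space in which the distance between any two points equals the infimum of lengths of paths joining them). -/
open Metric Set

/-- Length of a path, as the total variation of the parametrization. -/
noncomputable def pathLength {X : Type} [MetricSpace X] {x y : X} (γ : Path x y) : ENNReal :=
  eVariationOn γ Set.univ

/-- A length space: the distance between two points is the infimum of lengths of
paths joining them. -/
def IsLengthSpace (X : Type) [MetricSpace X] : Prop :=
  ∀ x y : X, edist x y = ⨅ γ : Path x y, pathLength γ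

section PartitionTheorem

variable {X : Type*} [MetricSpace X]

/-- A set has property S if it is, for every `δ > 0`, a finite union of preconnected subsets of
diameter at most `δ`. -/
def PropertyS (P : Set X) : Prop :=
  ∀ δ > 0, ∃ 𝓔 : Set (Set X), 𝓔.Finite ∧ P ⊆ ⋃₀ 𝓔 ∧
    ∀ E ∈ 𝓔, IsPreconnected E ∧ E ⊆ P ∧ ∀ x ∈ E, ∀ y ∈ E, dist x y ≤ δ

/-- Thinly colored metric spaces: there are open covers by arbitrarily few sets, relative to the
size of the preconnected subsets of their members. -/
def ThinlyColored (X : Type*) [MetricSpace X] : Prop :=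
  ∀ η > 0, ∃ (l : List (Set X)) (e : ℝ), 0 ≤ e ∧ l.length * e ≤ η ∧
    (∀ O ∈ l, IsOpen O) ∧ (∀ x, ∃ O ∈ l, x ∈ O) ∧
    ∀ O ∈ l, ∀ H ⊆ O, IsPreconnected H → ∀ x ∈ H, ∀ y ∈ H, dist x y ≤ e

lemma exists_pos_le_of_finite {ι : Type*} [Finite ι] (f : ι → ℝ) (hf : ∀ i, 0 < f i) :
    ∃ r > 0, ∀ i, r ≤ f i := by
  cases isEmpty_or_nonempty ι with
  | inl h => exact ⟨1, one_pos, fun i => h.elim i⟩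
  | inr h =>
    obtain ⟨i, hi⟩ := Finite.exists_min f
    exact ⟨f i, hf i, hi⟩

lemma exists_small_connected_nhd [LocallyConnectedSpace X] {O : Set X} (hO : IsOpen O) {y : X}
    (hy : y ∈ O) {δ : ℝ} (hδ : 0 < δ) :
    ∃ N, IsOpen N ∧ IsConnected N ∧ y ∈ N ∧ closure N ⊆ O ∧
      ∀ p ∈ N, ∀ q ∈ N, dist p q ≤ δ := by
  obtain ⟨r, hr, hrO⟩ := Metric.nhds_basis_closedBall.mem_iff.1 (hO.mem_nhds hy)
  have hr' : 0 < min r (δ / 2) := lt_min hr (half_pos hδ)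
  have hyB : y ∈ ball y (min r (δ / 2)) := mem_ball_self hr'
  have hsub : connectedComponentIn (ball y (min r (δ / 2))) y ⊆ ball y (min r (δ / 2)) :=
    connectedComponentIn_subset _ _
  refine ⟨_, isOpen_ball.connectedComponentIn, isConnected_connectedComponentIn_iff.2 hyB,
    mem_connectedComponentIn hyB, ?_, ?_⟩
  · refine (closure_mono hsub).trans (closure_ball_subset_closedBall.trans ?_)
    exact (closedBall_subset_closedBall (min_le_left _ _)).trans hrO
  · intro p hp q hq
    have h1 := mem_ball.1 (hsub hp)
    have h2 := mem_ball.1 (hsub hq)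
    have h3 := min_le_right r (δ / 2)
    linarith [dist_triangle_right p q y]

/-- A finger from a point of a connected open set towards one member of a family. -/
lemma exists_finger [LocallyConnectedSpace X] {J : Type*} [Finite J] {A : J → Set X}
    (hAo : ∀ i, IsOpen (A i)) (hd : Pairwise fun i j => Disjoint (closure (A i)) (closure (A j)))
    {V : Set X} (hV : IsOpen V) (hVc : IsPreconnected V) (hm : (V ∩ ⋃ i, A i).Nonempty)
    {y : X} (hy : y ∈ V) :
    ∃ j Φ, IsOpen Φ ∧ IsConnected Φ ∧ closure Φ ⊆ V ∧ y ∈ Φ ∧ (Φ ∩ A j).Nonempty ∧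
      ∀ i ≠ j, Disjoint (closure Φ) (closure (A i)) := by
  set Y : Set X := {y | ∃ j Φ, IsOpen Φ ∧ IsConnected Φ ∧ closure Φ ⊆ V ∧ y ∈ Φ ∧
    (Φ ∩ A j).Nonempty ∧ ∀ i ≠ j, Disjoint (closure Φ) (closure (A i))} with hY
  have hYo : IsOpen Y := by
    refine isOpen_iff_forall_mem_open.2 ?_
    rintro z ⟨j, Φ, h1, h2, h3, h4, h5⟩
    exact ⟨Φ, fun w hw => ⟨j, Φ, h1, h2, h3, hw, h5⟩, h1, h4⟩
  refine hVc.subset_of_closure_inter_subset hYo ?_ ?_ hy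
  · obtain ⟨z, hzV, hz⟩ := hm
    obtain ⟨i, hzi⟩ := mem_iUnion.1 hz
    obtain ⟨N, hN1, hN2, hN3, hN4, -⟩ :=
      exists_small_connected_nhd (hV.inter (hAo i)) ⟨hzV, hzi⟩ one_pos
    refine ⟨z, hzV, i, N, hN1, hN2, hN4.trans inter_subset_left, hN3, ⟨z, hN3, hzi⟩, ?_⟩
    intro k hk
    exact (hd hk.symm).mono_left ((hN4.trans inter_subset_right).trans subset_closure)
  · rintro z ⟨hzY, hzV⟩
    by_cases hz : ∃ i, z ∈ closure (A i)
    · obtain ⟨i, hzi⟩ := hz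
      have hO : IsOpen (V ∩ ⋂ k : {k // k ≠ i}, (closure (A k))ᶜ) :=
        hV.inter (isOpen_iInter_of_finite fun k => isClosed_closure.isOpen_compl)
      obtain ⟨N, hN1, hN2, hN3, hN4, -⟩ := exists_small_connected_nhd hO
        ⟨hzV, mem_iInter.2 fun k => fun hk => (hd k.2).le_bot ⟨hk, hzi⟩⟩ one_pos
      refine ⟨i, N, hN1, hN2, hN4.trans inter_subset_left, hN3, ?_, ?_⟩
      · exact mem_closure_iff.1 hzi N hN1 hN3
      · intro k hk
        refine disjoint_left.2 fun w hw => ?_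
        exact mem_iInter.1 (hN4 hw).2 ⟨k, hk⟩
    · push Not at hz
      have hO : IsOpen (V ∩ ⋂ k, (closure (A k))ᶜ) :=
        hV.inter (isOpen_iInter_of_finite fun k => isClosed_closure.isOpen_compl)
      obtain ⟨N, hN1, hN2, hN3, hN4, -⟩ := exists_small_connected_nhd hO
        ⟨hzV, mem_iInter.2 hz⟩ one_pos
      obtain ⟨w, hwN, j, Φ, h1, h2, h3, h4, h5, h6⟩ := mem_closure_iff.1 hzY N hN1 hN3
      refine ⟨j, N ∪ Φ, hN1.union h1, hN2.union ⟨w, hwN, h4⟩ h2, ?_, Or.inl hN3,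
        h5.mono (inter_subset_inter_left _ subset_union_right), ?_⟩
      · rw [closure_union]
        exact union_subset (hN4.trans inter_subset_left) h3
      · intro i hi
        rw [closure_union]
        refine Disjoint.union_left (disjoint_left.2 fun w hw => ?_) (h6 i hi)
        exact mem_iInter.1 (hN4 hw).2 i

/-- A family of connected open sets with pairwise disjoint closures inside `P`. -/
structure IsSeedFamily (P : Set X) {J : Type*} (A : J → Set X) : Prop where
  isOpen : ∀ j, IsOpen (A j)
  isConnected : ∀ j, IsConnected (A j)
  closure_subset : ∀ j, closure (A j) ⊆ P
  disjoint : Pairwise fun i j => Disjoint (closure (A i)) (closure (A j))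

/-- The members of `A'` arise from those of `A` by attaching preconnected sets inside `O`. -/
def AttachedIn (O : Set X) {J : Type*} (A A' : J → Set X) : Prop :=
  ∀ j, A j ⊆ A' j ∧ ∀ x ∈ A' j, x ∈ A j ∨
    ∃ H, IsPreconnected H ∧ H ⊆ A' j ∧ H ⊆ O ∧ x ∈ H ∧ (H ∩ A j).Nonempty

/-- The members of `A'` arise from those of `A` by attaching preconnected sets of radius at
most `δ`. -/
def AttachedWithin (δ : ℝ) {J : Type*} (A A' : J → Set X) : Prop :=
  ∀ j, A j ⊆ A' j ∧ ∀ x ∈ A' j,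
    ∃ H, IsPreconnected H ∧ H ⊆ A' j ∧ x ∈ H ∧ (H ∩ A j).Nonempty ∧ ∀ p ∈ H, dist x p ≤ δ

variable {J : Type*} {P O : Set X} {A A' A₂ : J → Set X}

lemma AttachedIn.refl (O : Set X) (A : J → Set X) : AttachedIn O A A :=
  fun _ => ⟨Subset.rfl, fun _ hx => Or.inl hx⟩

lemma AttachedIn.trans (h : AttachedIn O A A') (h' : AttachedIn O A' A₂) :
    AttachedIn O A A₂ := by
  refine fun j => ⟨(h j).1.trans (h' j).1, fun x hx => ?_⟩
  have lift : ∀ z ∈ A' j, z ∈ A j ∨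
      ∃ H, IsPreconnected H ∧ H ⊆ A₂ j ∧ H ⊆ O ∧ z ∈ H ∧ (H ∩ A j).Nonempty := by
    intro z hz
    refine ((h j).2 z hz).imp id ?_
    rintro ⟨H, h1, h2, h3⟩
    exact ⟨H, h1, h2.trans (h' j).1, h3⟩
  rcases (h' j).2 x hx with hx | ⟨H, h1, h2, h3, h4, z, hzH, hz⟩
  · exact lift x hx
  · right
    rcases lift z hz with hz | ⟨K, k1, k2, k3, k4, k5⟩
    · exact ⟨H, h1, h2, h3, h4, z, hzH, hz⟩
    · exact ⟨H ∪ K, h1.union z hzH k4 k1, union_subset h2 k2, union_subset h3 k3, Or.inl h4,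
        k5.mono (inter_subset_inter_left _ subset_union_right)⟩

lemma AttachedWithin.refl (A : J → Set X) : AttachedWithin 0 A A :=
  fun _ => ⟨Subset.rfl, fun x hx => ⟨{x}, isPreconnected_singleton, singleton_subset_iff.2 hx, rfl,
    ⟨x, rfl, hx⟩, by rintro p rfl; simp⟩⟩

lemma AttachedWithin.mono {δ δ' : ℝ} (h : AttachedWithin δ A A') (hδ : δ ≤ δ') :
    AttachedWithin δ' A A' := by
  refine fun j => ⟨(h j).1, fun x hx => ?_⟩
  obtain ⟨H, h1, h2, h3, h4, h5⟩ := (h j).2 x hx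
  exact ⟨H, h1, h2, h3, h4, fun p hp => (h5 p hp).trans hδ⟩

lemma AttachedWithin.trans {δ δ' : ℝ} (hδ : 0 ≤ δ) (h : AttachedWithin δ A A')
    (h' : AttachedWithin δ' A' A₂) : AttachedWithin (δ + δ') A A₂ := by
  refine fun j => ⟨(h j).1.trans (h' j).1, fun x hx => ?_⟩
  obtain ⟨H, h1, h2, h3, ⟨z, hzH, hz⟩, h5⟩ := (h' j).2 x hx
  obtain ⟨K, k1, k2, k3, k4, k5⟩ := (h j).2 z hz
  refine ⟨H ∪ K, h1.union z hzH k3 k1, union_subset h2 (k2.trans (h' j).1), Or.inl h3,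
    k4.mono (inter_subset_inter_left _ subset_union_right), ?_⟩
  rintro p (hp | hp)
  · linarith [h5 p hp]
  · linarith [h5 z hzH, k5 p hp, dist_triangle x z p]

lemma AttachedIn.attachedWithin (h : AttachedIn O A A') {e : ℝ} (he : 0 ≤ e)
    (hO : ∀ H ⊆ O, IsPreconnected H → ∀ x ∈ H, ∀ y ∈ H, dist x y ≤ e) :
    AttachedWithin e A A' := by
  refine fun j => ⟨(h j).1, fun x hx => ?_⟩
  rcases (h j).2 x hx with hx | ⟨H, h1, h2, h3, h4, h5⟩
  · exact ⟨{x}, isPreconnected_singleton, singleton_subset_iff.2 ((h j).1 hx), rfl,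
      ⟨x, rfl, hx⟩, by rintro p rfl; simpa⟩
  · exact ⟨H, h1, h2, h4, h5, fun p hp => hO H h3 h1 x h4 p hp⟩

lemma AttachedIn.mono {O' : Set X} (h : AttachedIn O A A') (hO : O ⊆ O') :
    AttachedIn O' A A' := by
  refine fun j => ⟨(h j).1, fun x hx => ((h j).2 x hx).imp id ?_⟩
  rintro ⟨H, h1, h2, h3, h4⟩
  exact ⟨H, h1, h2, h3.trans hO, h4⟩

variable [LocallyConnectedSpace X]

lemma IsSeedFamily.exists_reach_point [Finite J] (hA : IsSeedFamily P A) {V : Set X}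
    (hV : IsOpen V) (hVc : IsPreconnected V) (hVP : V ⊆ P) (hm : (V ∩ ⋃ i, A i).Nonempty)
    {y : X} (hy : y ∈ V) :
    ∃ A' : J → Set X, IsSeedFamily P A' ∧ AttachedIn V A A' ∧ y ∈ ⋃ j, A' j := by
  classical
  obtain ⟨j, Φ, h1, h2, h3, h4, h5, h6⟩ := exists_finger hA.isOpen hA.disjoint hV hVc hm hy
  refine ⟨Function.update A j (A j ∪ Φ), ⟨?_, ?_, ?_, ?_⟩, ?_, ?_⟩
  · intro i
    by_cases hi : i = j
    · subst hi; simpa using (hA.isOpen i).union h1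
    · simpa [hi] using hA.isOpen i
  · intro i
    by_cases hi : i = j
    · subst hi; simpa using (hA.isConnected i).union (by rwa [inter_comm]) h2
    · simpa [hi] using hA.isConnected i
  · intro i
    by_cases hi : i = j
    · subst hi
      simpa [closure_union] using ⟨hA.closure_subset i, h3.trans hVP⟩
    · simpa [hi] using hA.closure_subset i
  · intro i k hik
    by_cases hi : i = j
    · subst hi
      simpa [hik.symm, closure_union] using ⟨hA.disjoint hik, h6 k hik.symm⟩
    · by_cases hk : k = j
      · subst hk
        simpa [hik, closure_union] using ⟨hA.disjoint hik, (h6 i hik).symm⟩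
      · simpa [hi, hk] using hA.disjoint hik
  · intro i
    by_cases hi : i = j
    · subst hi
      simp only [Function.update_self]
      refine ⟨subset_union_left, ?_⟩
      rintro x (hx | hx)
      · exact Or.inl hx
      · exact Or.inr ⟨Φ, h2.isPreconnected, subset_union_right, subset_closure.trans h3, hx, h5⟩
    · simp only [Function.update_of_ne hi]
      exact AttachedIn.refl V A i
  · exact mem_iUnion.2 ⟨j, by simp [h4]⟩

lemma IsSeedFamily.exists_reach_color [Finite J] (hA : IsSeedFamily P A) (hP : IsOpen P)
    (hO : IsOpen O) (F : Finset X)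
    (hF : ∀ y ∈ F, y ∈ P ∩ O ∧ (connectedComponentIn (P ∩ O) y ∩ ⋃ i, A i).Nonempty) :
    ∃ A' : J → Set X, IsSeedFamily P A' ∧ AttachedIn O A A' ∧ ∀ y ∈ F, y ∈ ⋃ j, A' j := by
  classical
  induction F using Finset.induction_on with
  | empty => exact ⟨A, hA, AttachedIn.refl O A, by simp⟩
  | insert y F hyF ih =>
    obtain ⟨A', hA', hAA', hFA'⟩ := ih fun z hz => hF z (Finset.mem_insert_of_mem hz)
    obtain ⟨hy, hym⟩ := hF y (Finset.mem_insert_self _ _)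
    have hsub := connectedComponentIn_subset (P ∩ O) y
    obtain ⟨A₂, hA₂, hAA₂, hyA₂⟩ := hA'.exists_reach_point (hP.inter hO).connectedComponentIn
      isPreconnected_connectedComponentIn (hsub.trans inter_subset_left)
      (hym.mono (inter_subset_inter_right _ (iUnion_mono fun j => (hAA' j).1)))
      (mem_connectedComponentIn hy)
    refine ⟨A₂, hA₂, hAA'.trans (hAA₂.mono (hsub.trans inter_subset_right)), ?_⟩
    intro z hz
    rcases Finset.mem_insert.1 hz with rfl | hz
    · exact hyA₂
    · exact iUnion_mono (fun j => (hAA₂ j).1) (hFA' z hz)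

lemma IsSeedFamily.exists_reach_colors [Finite J] (hA : IsSeedFamily P A) (hP : IsOpen P)
    (F : Finset X) (hFP : ∀ y ∈ F, y ∈ P) {e : ℝ} (he : 0 ≤ e) (l : List (Set X))
    (hlo : ∀ O ∈ l, IsOpen O)
    (hl : ∀ O ∈ l, ∀ H ⊆ O, IsPreconnected H → ∀ x ∈ H, ∀ y ∈ H, dist x y ≤ e) :
    ∃ A' : J → Set X, IsSeedFamily P A' ∧ AttachedWithin (l.length * e) A A' ∧
      ∀ O ∈ l, ∀ y ∈ F, y ∈ O → (connectedComponentIn (P ∩ O) y ∩ ⋃ i, A i).Nonempty →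
        y ∈ ⋃ j, A' j := by
  classical
  induction l with
  | nil => exact ⟨A, hA, by simpa using AttachedWithin.refl A, by simp⟩
  | cons O l ih =>
    obtain ⟨A', hA', hAA', hFA'⟩ := ih (fun U hU => hlo U (List.mem_cons_of_mem _ hU))
      fun U hU => hl U (List.mem_cons_of_mem _ hU)
    have hmono : ⋃ i, A i ⊆ ⋃ i, A' i := iUnion_mono fun j => (hAA' j).1
    obtain ⟨A₂, hA₂, hAA₂, hFA₂⟩ := hA'.exists_reach_color hP (hlo O List.mem_cons_self)
      (F.filter fun y => y ∈ O ∧ (connectedComponentIn (P ∩ O) y ∩ ⋃ i, A' i).Nonempty)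
      (by
        intro y hy
        obtain ⟨h1, h2, h3⟩ := Finset.mem_filter.1 hy
        exact ⟨⟨hFP y h1, h2⟩, h3⟩)
    refine ⟨A₂, hA₂, ?_, ?_⟩
    · have := hAA'.trans (by positivity)
        (hAA₂.attachedWithin he (hl O List.mem_cons_self))
      convert this using 1
      push_cast [List.length_cons]
      ring
    · intro U hU y hy hyU hm
      rcases List.mem_cons.1 hU with rfl | hU
      · exact hFA₂ y (Finset.mem_filter.2
          ⟨hy, hyU, hm.mono (inter_subset_inter_right _ hmono)⟩)
      · exact iUnion_mono (fun j => (hAA₂ j).1) (hFA' U hU y hy hyU hm)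

lemma IsSeedFamily.exists_thickening [CompactSpace X] [Finite J] (hA : IsSeedFamily P A)
    (hP : IsOpen P) {τ : ℝ} (hτ : 0 < τ) :
    ∃ A' : J → Set X, IsSeedFamily P A' ∧ AttachedWithin τ A A' ∧
      ∀ j, closure (A j) ⊆ A' j := by
  have hc : ∀ j, IsCompact (closure (A j)) := fun j => isClosed_closure.isCompact
  choose r hr hrP using fun j => (hc j).exists_cthickening_subset_open hP (hA.closure_subset j)
  have hsep : ∀ p : {p : J × J // p.1 ≠ p.2}, ∃ δ > 0,
      Disjoint (cthickening δ (closure (A p.1.1))) (cthickening δ (closure (A p.1.2))) := by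
    intro p
    exact (hA.disjoint p.2).exists_cthickenings (hc _) isClosed_closure
  choose s hs hsd using hsep
  obtain ⟨a, ha, har⟩ := exists_pos_le_of_finite r hr
  obtain ⟨b, hb, hbs⟩ := exists_pos_le_of_finite s hs
  set δ := min τ (min a b) with hδ
  have hδ0 : 0 < δ := lt_min hτ (lt_min ha hb)
  choose N hNo hNc hzN _ hNd using fun z : X =>
    exists_small_connected_nhd isOpen_univ (mem_univ z) hδ0
  set A' : J → Set X := fun j => ⋃ z : closure (A j), (A j ∪ N z) with hA'
  have hmeet : ∀ j, ∀ z : closure (A j), (A j ∩ N z).Nonempty := fun j z => by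
    rw [inter_comm]
    exact mem_closure_iff.1 z.2 _ (hNo z) (hzN z)
  have hne : ∀ j, Nonempty (closure (A j)) := fun j =>
    (hA.isConnected j).nonempty.closure.to_subtype
  have hsub : ∀ j, A j ⊆ A' j := fun j =>
    subset_iUnion_of_subset (Classical.choice (hne j)) subset_union_left
  have hcl : ∀ j, closure (A' j) ⊆ cthickening δ (closure (A j)) := by
    intro j
    refine closure_minimal (iUnion_subset fun z => union_subset ?_ ?_) isClosed_cthickening
    · exact subset_closure.trans (self_subset_cthickening _)
    · exact fun p hp => mem_cthickening_of_dist_le p z δ _ z.2 (hNd z p hp z (hzN z))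
  refine ⟨A', ⟨?_, ?_, ?_, ?_⟩, fun j => ⟨hsub j, ?_⟩, ?_⟩
  · exact fun j => isOpen_iUnion fun z => (hA.isOpen j).union (hNo z)
  · intro j
    refine ⟨(hA.isConnected j).nonempty.mono (hsub j), ?_⟩
    obtain ⟨p, hp⟩ := (hA.isConnected j).nonempty
    exact isPreconnected_iUnion ⟨p, mem_iInter.2 fun z => Or.inl hp⟩ fun z =>
      ((hA.isConnected j).union (hmeet j z) (hNc z)).isPreconnected
  · exact fun j => (hcl j).trans ((cthickening_mono (((min_le_right _ _).trans
      (min_le_left _ _)).trans (har j)) _).trans (hrP j))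
  · intro i j hij
    have hle : δ ≤ s ⟨(i, j), hij⟩ := ((min_le_right _ _).trans (min_le_right _ _)).trans (hbs _)
    exact (hsd ⟨(i, j), hij⟩).mono ((hcl i).trans (cthickening_mono hle _))
      ((hcl j).trans (cthickening_mono hle _))
  · intro x hx
    obtain ⟨z, hz | hz⟩ := mem_iUnion.1 hx
    · exact ⟨{x}, isPreconnected_singleton, singleton_subset_iff.2 hx, rfl,
        ⟨x, rfl, hz⟩, by rintro p rfl; simpa using hτ.le⟩
    · refine ⟨N z, (hNc z).isPreconnected, subset_iUnion_of_subset z subset_union_right, hz,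
        by rw [inter_comm]; exact hmeet j z, fun p hp => ?_⟩
      exact (hNd z x hz p hp).trans (min_le_left _ _)
  · exact fun j z hz => mem_iUnion.2 ⟨⟨z, hz⟩, Or.inr (hzN z)⟩

end PartitionTheorem

section PartitionTheoremLimit

variable {X : Type*} [MetricSpace X]

/-- A set with property S contains finite nets whose points are linked to arbitrary points inside
the members of a given cover. -/
lemma PropertyS.exists_linked_net [CompactSpace X] {P : Set X} (hP : PropertyS P)
    {l : List (Set X)} (hlo : ∀ O ∈ l, IsOpen O) (hlc : ∀ x, ∃ O ∈ l, x ∈ O) {ρ : ℝ}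
    (hρ : 0 < ρ) :
    ∃ F : Finset X, (∀ y ∈ F, y ∈ P) ∧ ∀ x ∈ P, ∃ y ∈ F, dist x y ≤ ρ ∧
      ∃ O ∈ l, ∃ E, IsPreconnected E ∧ E ⊆ P ∩ O ∧ x ∈ E ∧ y ∈ E := by
  classical
  cases isEmpty_or_nonempty X
  · exact ⟨∅, by simp, fun x => isEmptyElim x⟩
  obtain ⟨δ, hδ, hδl⟩ := lebesgue_number_lemma_of_metric_sUnion (s := (univ : Set X))
    (c := {O | O ∈ l}) isCompact_univ hlo (fun x _ => by simpa using hlc x)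
  obtain ⟨𝓔, hf, hcov, h𝓔⟩ := hP (min ρ (δ / 2)) (lt_min hρ (half_pos hδ))
  have hex : ∀ E : Set X, ∃ y : X, E.Nonempty → y ∈ E := fun E => by
    by_cases h : E.Nonempty
    · exact ⟨h.some, fun _ => h.some_mem⟩
    · exact ⟨Classical.arbitrary X, fun h' => absurd h' h⟩
  choose c hc using hex
  refine ⟨(hf.toFinset.filter fun E => E.Nonempty).image c, ?_, ?_⟩
  · intro y hy
    obtain ⟨E, hE, rfl⟩ := Finset.mem_image.1 hy
    rw [Finset.mem_filter, Set.Finite.mem_toFinset] at hE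
    exact (h𝓔 E hE.1).2.1 (hc E hE.2)
  · intro x hx
    obtain ⟨E, hE, hxE⟩ := hcov hx
    have hcE := hc E ⟨x, hxE⟩
    obtain ⟨h1, h2, h3⟩ := h𝓔 E hE
    obtain ⟨O, hO, hbO⟩ := hδl x (mem_univ x)
    refine ⟨c E, Finset.mem_image.2 ⟨E, by simpa [hE] using ⟨x, hxE⟩, rfl⟩,
      (h3 x hxE _ hcE).trans (min_le_left _ _), O, hO, E, h1, fun p hp => ⟨h2 hp, hbO ?_⟩,
      hxE, hcE⟩
    have := (h3 p hp x hxE).trans (min_le_right _ _)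
    exact mem_ball.2 (by linarith)

lemma exists_seedFamily_at_points [LocallyConnectedSpace X] {P : Set X} (hP : IsOpen P)
    (F : Finset X) (hF : ∀ y ∈ F, y ∈ P) {ε : ℝ} (hε : 0 < ε) :
    ∃ A : F → Set X, IsSeedFamily P A ∧ (∀ y, y.1 ∈ A y) ∧
      ∀ y, ∀ p ∈ A y, ∀ q ∈ A y, dist p q ≤ ε := by
  obtain ⟨r, hr, hrd⟩ := exists_pos_le_of_finite
    (fun p : {p : F × F // p.1 ≠ p.2} => dist p.1.1.1 p.1.2.1)
    (fun p => dist_pos.2 fun h => p.2 (Subtype.ext h))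
  have hr3 : 0 < r / 3 := by positivity
  choose A h1 h2 h3 h4 h5 using fun y : F =>
    exists_small_connected_nhd (hP.inter (isOpen_ball (x := y.1) (ε := r / 3)))
      ⟨hF y.1 y.2, mem_ball_self hr3⟩ hε
  refine ⟨A, ⟨h1, h2, fun j => (h4 j).trans inter_subset_left, fun i j hij => ?_⟩, h3, h5⟩
  refine disjoint_left.2 fun p hp hq => ?_
  have e1 := mem_ball'.1 (h4 i hp).2
  have e2 := mem_ball.1 (h4 j hq).2
  have e3 := hrd ⟨(i, j), hij⟩
  simp only at e3
  linarith [dist_triangle i.1 p j.1]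

/-- Connected open sets with property S and small diameter partition, up to a nowhere dense
remainder, every open set with property S. -/
theorem PropertyS.exists_partition [CompactSpace X] [LocallyConnectedSpace X]
    (hX : ThinlyColored X) {P : Set X} (hPo : IsOpen P) (hP : PropertyS P) {ε : ℝ} (hε : 0 < ε) :
    ∃ 𝒬 : Set (Set X), 𝒬.Finite ∧ (∀ Q ∈ 𝒬, IsOpen Q ∧ IsConnected Q ∧ PropertyS Q ∧ Q ⊆ P ∧
      ∀ x ∈ Q, ∀ y ∈ Q, dist x y ≤ ε) ∧ 𝒬.PairwiseDisjoint id ∧ P ⊆ closure (⋃₀ 𝒬) := by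
  classical
  set u : ℕ → ℝ := fun s => ε / 5 * (1 / 2) ^ s with hu
  have hu0 : ∀ s, 0 < u s := fun s => by positivity
  have husucc : ∀ s, u (s + 1) = u s / 2 := fun s => by simp only [hu]; ring
  have huhalf : ∀ s, 0 < u s / 2 := fun s => half_pos (hu0 s)
  choose l e he hle hlo hlc hl using fun s => hX (u s / 2) (huhalf s)
  have hpow : ∀ s : ℕ, (0 : ℝ) < (1 / 2) ^ s := fun s => by positivity
  choose F hFP hF using fun s => hP.exists_linked_net (hlo s) (hlc s) (hpow s)
  obtain ⟨A₀, hA₀, hFA₀, hdA₀⟩ := exists_seedFamily_at_points hPo (F 0) (hFP 0) (hu0 0)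
  have hstep : ∀ (s : ℕ) (A : {A : F 0 → Set X // IsSeedFamily P A ∧ ∀ y ∈ F s, y ∈ ⋃ j, A j}),
      ∃ A' : {A : F 0 → Set X // IsSeedFamily P A ∧ ∀ y ∈ F (s + 1), y ∈ ⋃ j, A j},
        AttachedWithin (u s) A.1 A'.1 ∧ ∀ j, closure (A.1 j) ⊆ A'.1 j := by
    rintro s ⟨A, hA, hFA⟩
    obtain ⟨A', hA', hAA', hFA'⟩ := hA.exists_reach_colors hPo (F (s + 1)) (hFP (s + 1)) (he s)
      (l s) (hlo s) (hl s)
    obtain ⟨A₂, hA₂, hAA₂, hcl⟩ := hA'.exists_thickening hPo (huhalf s)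
    refine ⟨⟨A₂, hA₂, fun y hy => ?_⟩, ?_, fun j => (closure_mono (hAA' j).1).trans (hcl j)⟩
    · refine iUnion_mono (fun j => (hAA₂ j).1) ?_
      obtain ⟨z, hz, -, O, hO, E, hEc, hEO, hyE, hzE⟩ := hF s y (hFP _ y hy)
      exact hFA' O hO y hy (hEO hyE).2
        ⟨z, hEc.subset_connectedComponentIn hyE hEO hzE, hFA z hz⟩
    · refine (hAA'.trans (by have := he s; positivity) hAA₂).mono ?_
      linarith [hle s]
  choose next hnext hnextcl using hstep
  let B : ∀ s, {A : F 0 → Set X // IsSeedFamily P A ∧ ∀ y ∈ F s, y ∈ ⋃ j, A j} := fun s =>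
    Nat.rec ⟨A₀, hA₀, fun y hy => mem_iUnion.2 ⟨⟨y, hy⟩, hFA₀ ⟨y, hy⟩⟩⟩ (fun s A => next s A) s
  set A : ℕ → F 0 → Set X := fun s => (B s).1 with hAdef
  have hA : ∀ s, IsSeedFamily P (A s) := fun s => (B s).2.1
  have hFA : ∀ s, ∀ y ∈ F s, y ∈ ⋃ j, A s j := fun s => (B s).2.2
  have hatt : ∀ s, AttachedWithin (u s) (A s) (A (s + 1)) := fun s => hnext s (B s)
  have hcl : ∀ s j, closure (A s j) ⊆ A (s + 1) j := fun s => hnextcl s (B s)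
  have hatts : ∀ s k, AttachedWithin (2 * u s - 2 * u (s + k)) (A s) (A (s + k)) := by
    intro s k
    induction k with
    | zero => simpa using AttachedWithin.refl (A s)
    | succ k ih =>
      have hmono : u (s + k) ≤ u s := by
        simp only [hu]
        have : (1 / 2 : ℝ) ^ (s + k) ≤ (1 / 2) ^ s :=
          pow_le_pow_of_le_one (by norm_num) (by norm_num) (Nat.le_add_right _ _)
        gcongr
      refine (ih.trans (by linarith) (hatt (s + k))).mono ?_
      have := husucc (s + k)
      rw [← add_assoc]
      linarith
  have hAmono : ∀ j, Monotone fun s => A s j := fun j =>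
    monotone_nat_of_le_succ fun s => (hatt s j).1
  set R : F 0 → Set X := fun j => ⋃ s, A s j with hR
  have hRo : ∀ j, IsOpen (R j) := fun j => isOpen_iUnion fun s => (hA s).isOpen j
  refine ⟨range R, finite_range R, ?_, ?_, ?_⟩
  · rintro _ ⟨j, rfl⟩
    refine ⟨hRo j, ⟨⟨j.1, mem_iUnion.2 ⟨0, hFA₀ j⟩⟩, ?_⟩, ?_, ?_, ?_⟩
    · exact isPreconnected_iUnion ⟨j.1, mem_iInter.2 fun s => hAmono j (Nat.zero_le s) (hFA₀ j)⟩
        fun s => ((hA s).isConnected j).isPreconnected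
    · intro δ hδ
      obtain ⟨s, hs⟩ : ∃ s, 2 * u s ≤ δ / 5 := by
        obtain ⟨s, hs⟩ := exists_pow_lt_of_lt_one (show 0 < δ / 5 / (2 * (ε / 5)) by positivity)
          (show (1 / 2 : ℝ) < 1 by norm_num)
        refine ⟨s, ?_⟩
        rw [lt_div_iff₀ (by positivity)] at hs
        simp only [hu]
        linarith
      have hδ5 : 0 < δ / 5 := by positivity
      choose! N hNo hNc hzN hNR hNd using fun (z : X) (hz : z ∈ R j) =>
        exists_small_connected_nhd (hRo j) hz hδ5
      have hsubR : closure (A s j) ⊆ R j := (hcl s j).trans (subset_iUnion (fun s => A s j) (s + 1))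
      obtain ⟨t, htA, htc⟩ := (isClosed_closure (s := A s j)).isCompact.elim_nhds_subcover N
        fun z hz => (hNo z (hsubR hz)).mem_nhds (hzN z (hsubR hz))
      set 𝓗 : X → Set (Set X) := fun z => {H | IsPreconnected H ∧ H ⊆ R j ∧ (H ∩ N z).Nonempty ∧
        ∀ p ∈ H, ∀ q ∈ H, dist p q ≤ 2 * (δ / 5)} with h𝓗
      have hN𝓗 : ∀ z ∈ t, N z ∈ 𝓗 z := fun z hz => by
        have hz' := hsubR (htA z hz)
        refine ⟨(hNc z hz').isPreconnected, subset_closure.trans (hNR z hz'),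
          ⟨z, hzN z hz', hzN z hz'⟩, fun p hp q hq => ?_⟩
        linarith [hNd z hz' p hp q hq]
      refine ⟨(fun z => ⋃₀ 𝓗 z) '' t, t.finite_toSet.image _, ?_, ?_⟩
      · intro x hx
        obtain ⟨k, hk⟩ := mem_iUnion.1 hx
        obtain ⟨H, h1, h2, h3, ⟨z, hzH, hz⟩, h5⟩ :=
          (hatts s k j).2 x (hAmono j (Nat.le_add_left k s) hk)
        obtain ⟨w, hwt, hzw⟩ := mem_iUnion₂.1 (htc (subset_closure hz))
        refine ⟨_, mem_image_of_mem _ hwt, H, ⟨h1,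
          h2.trans (subset_iUnion (fun s => A s j) (s + k)), ⟨z, hzH, hzw⟩, ?_⟩, h3⟩
        intro p hp q hq
        linarith [h5 p hp, h5 q hq, dist_triangle_left p q x, hu0 (s + k)]
      · rintro _ ⟨z, hz, rfl⟩
        have hzR := hsubR (htA z hz)
        refine ⟨?_, sUnion_subset fun H hH => hH.2.1, ?_⟩
        · have : ⋃₀ 𝓗 z = ⋃₀ ((fun H => N z ∪ H) '' 𝓗 z) := by
            refine Subset.antisymm ?_ ?_
            · exact sUnion_subset fun H hH =>
                subset_sUnion_of_subset _ _ subset_union_right (mem_image_of_mem _ hH)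
            · refine sUnion_subset ?_
              rintro _ ⟨H, hH, rfl⟩
              exact union_subset (subset_sUnion_of_mem (hN𝓗 z hz)) (subset_sUnion_of_mem hH)
          change IsPreconnected (⋃₀ 𝓗 z)
          rw [this]
          refine isPreconnected_sUnion z _ ?_ ?_
          · rintro _ ⟨H, hH, rfl⟩
            exact Or.inl (hzN z hzR)
          · rintro _ ⟨H, hH, rfl⟩
            exact (hNc z hzR).isPreconnected.union' (by rw [inter_comm]; exact hH.2.2.1) hH.1
        · rintro x ⟨H, hH, hx⟩ y ⟨K, hK, hy⟩
          obtain ⟨p, hpH, hpN⟩ := hH.2.2.1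
          obtain ⟨q, hqK, hqN⟩ := hK.2.2.1
          linarith [hH.2.2.2 x hx p hpH, hK.2.2.2 q hqK y hy, hNd z hzR p hpN q hqN,
            dist_triangle4 x p q y]
    · exact iUnion_subset fun s => subset_closure.trans ((hA s).closure_subset j)
    · have key : ∀ x ∈ R j, ∃ z ∈ A₀ j, dist x z ≤ 2 * u 0 := by
        intro x hx
        obtain ⟨k, hk⟩ := mem_iUnion.1 hx
        obtain ⟨H, -, -, -, ⟨z, hzH, hz⟩, h5⟩ :=
          (hatts 0 k j).2 x (hAmono j (Nat.le_add_left k 0) hk)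
        exact ⟨z, hz, by linarith [h5 z hzH, hu0 (0 + k)]⟩
      intro x hx y hy
      obtain ⟨p, hp, hxp⟩ := key x hx
      obtain ⟨q, hq, hyq⟩ := key y hy
      have hu0' : u 0 = ε / 5 := by simp [hu]
      rw [dist_comm] at hyq
      linarith [dist_triangle4 x p q y, hdA₀ j p hp q hq]
  · rintro _ ⟨i, rfl⟩ _ ⟨j, rfl⟩ hij
    have hij' : i ≠ j := fun h => hij (by rw [h])
    refine disjoint_left.2 ?_
    intro p hp hq
    obtain ⟨s, hs⟩ := mem_iUnion.1 hp
    obtain ⟨k, hk⟩ := mem_iUnion.1 hq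
    exact ((hA (max s k)).disjoint hij').le_bot
      ⟨subset_closure (hAmono i (le_max_left s k) hs), subset_closure (hAmono j (le_max_right s k) hk)⟩
  · intro x hx
    refine Metric.mem_closure_iff.2 fun δ hδ => ?_
    obtain ⟨s, hs⟩ := exists_pow_lt_of_lt_one hδ (show (1 / 2 : ℝ) < 1 by norm_num)
    obtain ⟨y, hy, hxy, -⟩ := hF s x hx
    obtain ⟨j, hj⟩ := mem_iUnion.1 (hFA s y hy)
    exact ⟨y, ⟨R j, mem_range_self j, mem_iUnion.2 ⟨s, hj⟩⟩, hxy.trans_lt hs⟩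

end PartitionTheoremLimit

section CellRefinement

variable {X : Type*} [MetricSpace X]

lemma dist_le_of_mem_closure {Q : Set X} {ε : ℝ} (hQ : ∀ x ∈ Q, ∀ y ∈ Q, dist x y ≤ ε) :
    ∀ x ∈ closure Q, ∀ y ∈ closure Q, dist x y ≤ ε := by
  intro x hx y hy
  have hxy : (x, y) ∈ closure (Q ×ˢ Q) := by rw [closure_prod_eq]; exact ⟨hx, hy⟩
  have hcl : IsClosed {p : X × X | dist p.1 p.2 ≤ ε} :=
    isClosed_le continuous_dist continuous_const
  exact closure_minimal (s := Q ×ˢ Q) (fun p hp => hQ p.1 hp.1 p.2 hp.2) hcl hxy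

lemma mem_closure_sUnion_iff {𝒬 : Set (Set X)} (h : 𝒬.Finite) {x : X} :
    x ∈ closure (⋃₀ 𝒬) ↔ ∃ Q ∈ 𝒬, x ∈ closure Q := by
  rw [sUnion_eq_biUnion, h.closure_biUnion]
  simp

lemma PropertyS.exists_components [LocallyConnectedSpace X] {R : Set X} (hRo : IsOpen R)
    (hR : PropertyS R) :
    ∃ ℬ : Set (Set X), ℬ.Finite ∧ (∀ B ∈ ℬ, IsOpen B ∧ IsConnected B ∧ PropertyS B ∧ B ⊆ R ∧
      closure B ∩ R ⊆ B) ∧ ℬ.PairwiseDisjoint id ∧ R ⊆ ⋃₀ ℬ := by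
  set comp : X → Set X := connectedComponentIn R with hcomp
  refine ⟨comp '' R, ?_, ?_, ?_, ?_⟩
  · obtain ⟨𝓔, hf, hcov, h𝓔⟩ := hR 1 one_pos
    have hex : ∀ E ∈ 𝓔, ∃ B : Set X, ∀ x ∈ E, comp x = B := by
      intro E hE
      rcases E.eq_empty_or_nonempty with rfl | ⟨y, hy⟩
      · exact ⟨∅, by simp⟩
      · refine ⟨comp y, fun x hx => ?_⟩
        exact (connectedComponentIn_eq
          ((h𝓔 E hE).1.subset_connectedComponentIn hy (h𝓔 E hE).2.1 hx)).symm
    choose! B hB using hex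
    refine (hf.image B).subset ?_
    rintro _ ⟨x, hx, rfl⟩
    obtain ⟨E, hE, hxE⟩ := hcov hx
    exact ⟨E, hE, (hB E hE x hxE).symm⟩
  · rintro _ ⟨x, hx, rfl⟩
    refine ⟨hRo.connectedComponentIn, isConnected_connectedComponentIn_iff.2 hx, ?_,
      connectedComponentIn_subset _ _, ?_⟩
    · intro δ hδ
      obtain ⟨𝓔, hf, hcov, h𝓔⟩ := hR δ hδ
      refine ⟨{E ∈ 𝓔 | E ⊆ comp x}, hf.subset (sep_subset _ _), ?_, ?_⟩
      · intro y hy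
        obtain ⟨E, hE, hyE⟩ := hcov (connectedComponentIn_subset _ _ hy)
        refine ⟨E, ⟨hE, ?_⟩, hyE⟩
        rw [hcomp, connectedComponentIn_eq hy]
        exact (h𝓔 E hE).1.subset_connectedComponentIn hyE (h𝓔 E hE).2.1
      · exact fun E hE => ⟨(h𝓔 E hE.1).1, hE.2, (h𝓔 E hE.1).2.2⟩
    · rintro z ⟨hz, hzR⟩
      obtain ⟨w, hw, hw'⟩ := mem_closure_iff.1 hz _ (hRo.connectedComponentIn (x := z))
        (mem_connectedComponentIn hzR)
      have := (connectedComponentIn_eq hw').trans (connectedComponentIn_eq hw).symm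
      rw [hcomp, this]
      exact mem_connectedComponentIn hzR
  · rintro _ ⟨x, hx, rfl⟩ _ ⟨y, hy, rfl⟩ hxy
    refine disjoint_left.2 fun z hz hz' => hxy ?_
    exact (connectedComponentIn_eq hz).trans (connectedComponentIn_eq hz').symm
  · exact fun x hx => ⟨comp x, mem_image_of_mem _ hx, mem_connectedComponentIn hx⟩

lemma exists_closed_preconnected_subset [LocallyConnectedSpace X] {P : Set X} (hPo : IsOpen P)
    (hPc : IsConnected P) {F : Set X} (hF : F.Finite) (hFP : F ⊆ P) :
    ∃ K, IsClosed K ∧ IsPreconnected K ∧ F ⊆ K ∧ K ⊆ P := by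
  obtain ⟨p, hp⟩ := hPc.nonempty
  obtain ⟨N, hNo, hNc, hpN, hNP, -⟩ := exists_small_connected_nhd hPo hp one_pos
  have hex : ∀ y ∈ F, ∃ Φ, IsConnected Φ ∧ closure Φ ⊆ P ∧ y ∈ Φ ∧ (Φ ∩ N).Nonempty := by
    intro y hy
    obtain ⟨-, Φ, -, h2, h3, h4, h5, -⟩ := exists_finger (J := Unit) (A := fun _ => N)
      (fun _ => hNo) (fun i j hij => absurd rfl hij) hPo hPc.isPreconnected
      ⟨p, hp, mem_iUnion.2 ⟨(), hpN⟩⟩ (hFP hy)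
    exact ⟨Φ, h2, h3, h4, h5⟩
  choose! Φ h1 h2 h3 h4 using hex
  refine ⟨⋃ y ∈ F, closure (N ∪ Φ y), hF.isClosed_biUnion fun _ _ => isClosed_closure, ?_, ?_, ?_⟩
  · refine isPreconnected_sUnion p ((fun y => closure (N ∪ Φ y)) '' F) ?_ ?_ |> fun h => by
      simpa [sUnion_image] using h
    · rintro _ ⟨y, hy, rfl⟩
      exact subset_closure (Or.inl hpN)
    · rintro _ ⟨y, hy, rfl⟩
      exact (hNc.isPreconnected.union' (by rw [inter_comm]; exact h4 y hy)
        (h1 y hy).isPreconnected).closure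
  · exact fun y hy => mem_biUnion hy (subset_closure (Or.inr (h3 y hy)))
  · refine iUnion₂_subset fun y hy => ?_
    rw [closure_union]
    exact union_subset hNP (h2 y hy)

variable [CompactSpace X] [LocallyConnectedSpace X]

/-- A connected open set splits into small cells touching a given set, and connected cells each of
which touches one of the former. -/
lemma PropertyS.exists_core_border (hX : ThinlyColored X) {Q K : Set X} (hQo : IsOpen Q)
    (hQc : IsConnected Q) (hQ : PropertyS Q) (hK : (K ∩ Q).Nonempty) {μ : ℝ} (hμ : 0 < μ) :
    ∃ 𝒞 ℬ : Set (Set X), 𝒞.Finite ∧ ℬ.Finite ∧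
      (∀ B ∈ 𝒞 ∪ ℬ, IsOpen B ∧ IsConnected B ∧ PropertyS B ∧ B ⊆ Q) ∧
      (𝒞 ∪ ℬ).PairwiseDisjoint id ∧ Q ⊆ closure (⋃₀ (𝒞 ∪ ℬ)) ∧
      (∀ q ∈ 𝒞, (closure q ∩ K).Nonempty ∧ ∀ x ∈ q, ∀ y ∈ q, dist x y ≤ μ) ∧
      (∀ x ∈ K ∩ closure Q, ∃ q ∈ 𝒞, x ∈ closure q) ∧
      ∀ B ∈ ℬ, ∃ q ∈ 𝒞, (closure B ∩ closure q).Nonempty := by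
  obtain ⟨𝓕, hf, h𝓕, hdisj, hdense⟩ := hQ.exists_partition hX hQo hμ
  set 𝒞 := {q ∈ 𝓕 | (closure q ∩ K).Nonempty} with h𝒞
  have hCf : 𝒞.Finite := hf.subset (sep_subset _ _)
  have hKC : ∀ x ∈ K ∩ closure Q, ∃ q ∈ 𝒞, x ∈ closure q := by
    rintro x ⟨hxK, hxQ⟩
    obtain ⟨q, hq, hxq⟩ :=
      (mem_closure_sUnion_iff hf).1 (closure_minimal hdense isClosed_closure hxQ)
    exact ⟨q, ⟨hq, x, hxq, hxK⟩, hxq⟩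
  have hCcl : IsClosed (⋃ q ∈ 𝒞, closure q) := hCf.isClosed_biUnion fun _ _ => isClosed_closure
  set R := Q \ ⋃ q ∈ 𝒞, closure q with hR
  have hRo : IsOpen R := hQo.sdiff hCcl
  have hqR : ∀ q ∈ 𝓕, q ∉ 𝒞 → q ⊆ R := by
    intro q hq hqC x hx
    refine ⟨(h𝓕 q hq).2.2.2.1 hx, fun hx' => ?_⟩
    obtain ⟨q', hq', hxq'⟩ := mem_iUnion₂.1 hx'
    have hd : Disjoint q q' := hdisj hq hq'.1 fun h => hqC (h ▸ hq')
    exact (hd.closure_right (h𝓕 q hq).1).le_bot ⟨hx, hxq'⟩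
  have hRS : PropertyS R := by
    intro δ hδ
    choose! 𝓔 he hecov h𝓔 using fun q (hq : q ∈ 𝓕) => (h𝓕 q hq).2.2.1 δ hδ
    refine ⟨(fun E => R ∩ closure E) '' ⋃ q ∈ 𝓕 \ 𝒞, 𝓔 q,
      ((hf.subset sdiff_subset).biUnion fun q hq => he q hq.1).image _, ?_, ?_⟩
    · intro x hx
      obtain ⟨q, hq, hxq⟩ := (mem_closure_sUnion_iff hf).1 (hdense hx.1)
      have hqC : q ∉ 𝒞 := fun h => hx.2 (mem_biUnion h hxq)
      obtain ⟨E, hE, hxE⟩ := (mem_closure_sUnion_iff (he q hq)).1 (closure_mono (hecov q hq) hxq)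
      exact ⟨_, mem_image_of_mem _ (mem_biUnion ⟨hq, hqC⟩ hE), hx, hxE⟩
    · rintro _ ⟨E, hE, rfl⟩
      obtain ⟨q, ⟨hq, hqC⟩, hE⟩ := mem_iUnion₂.1 hE
      obtain ⟨h1, h2, h3⟩ := h𝓔 q hq E hE
      refine ⟨h1.subset_closure (subset_inter (h2.trans (hqR q hq hqC)) subset_closure)
        inter_subset_right, inter_subset_left, fun x hx y hy => ?_⟩
      exact dist_le_of_mem_closure h3 x hx.2 y hy.2
  obtain ⟨ℬ, hBf, hB, hBd, hBR⟩ := hRS.exists_components hRo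
  refine ⟨𝒞, ℬ, hCf, hBf, ?_, ?_, ?_, ?_, hKC, ?_⟩
  · rintro B (hC | hB')
    · obtain ⟨h1, h2, h3, h4, -⟩ := h𝓕 B hC.1
      exact ⟨h1, h2, h3, h4⟩
    · obtain ⟨h1, h2, h3, h4, -⟩ := hB B hB'
      exact ⟨h1, h2, h3, h4.trans sdiff_subset⟩
  · refine pairwiseDisjoint_union.2 ⟨hdisj.subset (sep_subset _ _), hBd, ?_⟩
    intro q hq B hB' _
    refine disjoint_left.2 fun x hx hx' => ?_
    exact ((hB B hB').2.2.2.1 hx').2 (mem_biUnion hq (subset_closure hx))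
  · intro x hx
    refine (mem_closure_sUnion_iff (hCf.union hBf)).2 ?_
    by_cases hxR : x ∈ R
    · obtain ⟨B, hB', hxB⟩ := hBR hxR
      exact ⟨B, Or.inr hB', subset_closure hxB⟩
    · have : x ∈ ⋃ q ∈ 𝒞, closure q := by
        by_contra h
        exact hxR ⟨hx, h⟩
      obtain ⟨q, hq, hxq⟩ := mem_iUnion₂.1 this
      exact ⟨q, Or.inl hq, hxq⟩
  · exact fun q hq => ⟨hq.2, (h𝓕 q hq.1).2.2.2.2⟩
  · intro B hB'
    obtain ⟨h1, h2, h3, h4, h5⟩ := hB B hB'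
    by_contra! hcon
    have hQB : Q ⊆ B := by
      refine hQc.isPreconnected.subset_of_closure_inter_subset h1 ?_ ?_
      · obtain ⟨x, hx⟩ := h2.nonempty
        exact ⟨x, (h4 hx).1, hx⟩
      · rintro x ⟨hxB, hxQ⟩
        refine h5 ⟨hxB, hxQ, fun hx => ?_⟩
        obtain ⟨q, hq, hxq⟩ := mem_iUnion₂.1 hx
        exact (hcon q hq).subset ⟨hxB, hxq⟩
    obtain ⟨x, hxK, hxQ⟩ := hK
    obtain ⟨q, hq, hxq⟩ := hKC x ⟨hxK, subset_closure hxQ⟩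
    exact (hcon q hq).subset ⟨subset_closure (hQB hxQ), hxq⟩

/-- The refinement of a single cell into core cells, whose closures stay inside the cell and form
a connected union, and border cells, each of which touches a core cell. -/
structure IsCoreRefinement (P : Set X) (ε : ℝ) (𝒞 ℬ : Set (Set X)) : Prop where
  core_finite : 𝒞.Finite
  border_finite : ℬ.Finite
  cell : ∀ B ∈ 𝒞 ∪ ℬ, IsOpen B ∧ IsConnected B ∧ PropertyS B ∧ B ⊆ P ∧
    ∀ x ∈ B, ∀ y ∈ B, dist x y ≤ ε
  disjoint : (𝒞 ∪ ℬ).PairwiseDisjoint id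
  dense : P ⊆ closure (⋃₀ (𝒞 ∪ ℬ))
  closure_core_subset : ∀ q ∈ 𝒞, closure q ⊆ P
  core_connected : ∃ K, IsPreconnected K ∧ (∀ x ∈ K, ∃ q ∈ 𝒞, x ∈ closure q) ∧
    ∀ q ∈ 𝒞, (closure q ∩ K).Nonempty
  border_meets_core : ∀ B ∈ ℬ, ∃ q ∈ 𝒞, (closure B ∩ closure q).Nonempty

theorem PropertyS.exists_coreRefinement (hX : ThinlyColored X) {P : Set X} (hPo : IsOpen P)
    (hPc : IsConnected P) (hP : PropertyS P) {ε : ℝ} (hε : 0 < ε) :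
    ∃ 𝒞 ℬ, IsCoreRefinement P ε 𝒞 ℬ := by
  obtain ⟨𝒬, hf, h𝒬, hdisj, hdense⟩ := hP.exists_partition hX hPo hε
  have hne : ∀ Q ∈ 𝒬, ∃ x, x ∈ Q := fun Q hQ => (h𝒬 Q hQ).2.1.nonempty
  have : Nonempty X := ⟨hPc.nonempty.some⟩
  choose! c hc using hne
  obtain ⟨K, hKcl, hKc, hcK, hKP⟩ := exists_closed_preconnected_subset hPo hPc (hf.image c)
    (by rintro _ ⟨Q, hQ, rfl⟩; exact (h𝒬 Q hQ).2.2.2.1 (hc Q hQ))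
  obtain ⟨μ, hμ, hμP⟩ := hKcl.isCompact.exists_cthickening_subset_open hPo hKP
  choose! 𝒞 ℬ h1 h2 h3 h4 h5 h6 h7 h8 using fun Q (hQ : Q ∈ 𝒬) =>
    (h𝒬 Q hQ).2.2.1.exists_core_border hX (K := K) (h𝒬 Q hQ).1 (h𝒬 Q hQ).2.1
      ⟨c Q, hcK (mem_image_of_mem c hQ), hc Q hQ⟩ hμ
  have hunion : (⋃ Q ∈ 𝒬, 𝒞 Q) ∪ (⋃ Q ∈ 𝒬, ℬ Q) = ⋃ Q ∈ 𝒬, (𝒞 Q ∪ ℬ Q) := by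
    simp only [iUnion_union_distrib]
  have hcover : ∀ x ∈ P, ∃ Q ∈ 𝒬, x ∈ closure Q := fun x hx =>
    (mem_closure_sUnion_iff hf).1 (hdense hx)
  refine ⟨⋃ Q ∈ 𝒬, 𝒞 Q, ⋃ Q ∈ 𝒬, ℬ Q, hf.biUnion h1, hf.biUnion h2, ?_, ?_, ?_, ?_,
    ⟨K, hKc, ?_, ?_⟩, ?_⟩
  · rw [hunion]
    intro B hB
    obtain ⟨Q, hQ, hB⟩ := mem_iUnion₂.1 hB
    obtain ⟨-, -, -, a4, a5⟩ := h𝒬 Q hQ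
    obtain ⟨b1, b2, b3, b4⟩ := h3 Q hQ B hB
    exact ⟨b1, b2, b3, b4.trans a4, fun x hx y hy => a5 x (b4 hx) y (b4 hy)⟩
  · rw [hunion]
    intro B hB B' hB' hne
    obtain ⟨Q, hQ, hB⟩ := mem_iUnion₂.1 hB
    obtain ⟨Q', hQ', hB'⟩ := mem_iUnion₂.1 hB'
    by_cases hQQ : Q = Q'
    · subst hQQ
      exact h4 Q hQ hB hB' hne
    · have hd : Disjoint Q Q' := hdisj hQ hQ' hQQ
      exact hd.mono (h3 Q hQ B hB).2.2.2 (h3 Q' hQ' B' hB').2.2.2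
  · rw [hunion]
    intro x hx
    obtain ⟨Q, hQ, hxQ⟩ := hcover x hx
    refine closure_mono ?_ (closure_minimal (h5 Q hQ) isClosed_closure hxQ)
    exact sUnion_subset_sUnion fun B hB => mem_biUnion hQ hB
  · intro q hq
    obtain ⟨Q, hQ, hq⟩ := mem_iUnion₂.1 hq
    obtain ⟨⟨z, hzq, hzK⟩, hd⟩ := h6 Q hQ q hq
    intro x hx
    exact hμP (mem_cthickening_of_dist_le x z μ K hzK (dist_le_of_mem_closure hd x hx z hzq))
  · intro x hx
    obtain ⟨Q, hQ, hxQ⟩ := hcover x (hKP hx)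
    obtain ⟨q, hq, hxq⟩ := h7 Q hQ x ⟨hx, hxQ⟩
    exact ⟨q, mem_biUnion hQ hq, hxq⟩
  · intro q hq
    obtain ⟨Q, hQ, hq⟩ := mem_iUnion₂.1 hq
    exact (h6 Q hQ q hq).1
  · intro B hB
    obtain ⟨Q, hQ, hB⟩ := mem_iUnion₂.1 hB
    obtain ⟨q, hq, hqB⟩ := h8 Q hQ B hB
    exact ⟨q, mem_biUnion hQ hq, hqB⟩

end CellRefinement

section Chains

/-- `CellChain 𝒮 w x y c`: the points `x` and `y` are joined by a chain of closures of cells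
from `𝒮` whose total weight is `c`. -/
inductive CellChain {X : Type*} [TopologicalSpace X] (𝒮 : Set (Set X)) (w : Set X → ℝ) :
    X → X → ℝ → Prop
  | single {P : Set X} {x y : X} (hP : P ∈ 𝒮) (hx : x ∈ closure P) (hy : y ∈ closure P) :
      CellChain 𝒮 w x y (w P)
  | cons {P : Set X} {x z y : X} {c : ℝ} (hP : P ∈ 𝒮) (hx : x ∈ closure P) (hz : z ∈ closure P)
      (h : CellChain 𝒮 w z y c) : CellChain 𝒮 w x y (w P + c)

variable {X : Type*} [TopologicalSpace X] {𝒮 𝒮' : Set (Set X)} {w w' : Set X → ℝ} {x y z : X}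
  {c c' : ℝ}

namespace CellChain

lemma trans (h : CellChain 𝒮 w x y c) (h' : CellChain 𝒮 w y z c') :
    CellChain 𝒮 w x z (c + c') := by
  induction h with
  | single hP hx hy => exact cons hP hx hy h'
  | cons hP hx hz _ ih => rw [add_assoc]; exact cons hP hx hz (ih h')

lemma symm (h : CellChain 𝒮 w x y c) : CellChain 𝒮 w y x c := by
  induction h with
  | single hP hx hy => exact single hP hy hx
  | cons hP hx hz _ ih => rw [add_comm]; exact ih.trans (single hP hz hx)

lemma nonneg (h : CellChain 𝒮 w x y c) (hw : ∀ P ∈ 𝒮, 0 ≤ w P) : 0 ≤ c := by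
  induction h with
  | single hP hx hy => exact hw _ hP
  | cons hP hx hz _ ih => exact add_nonneg (hw _ hP) ih

lemma abs_sub_le (h : CellChain 𝒮 w x y c) {f : X → ℝ}
    (hf : ∀ P ∈ 𝒮, ∀ x ∈ closure P, ∀ y ∈ closure P, |f x - f y| ≤ w P) : |f x - f y| ≤ c := by
  induction h with
  | single hP hx hy => exact hf _ hP _ hx _ hy
  | cons hP hx hz _ ih =>
    exact (_root_.abs_sub_le _ _ _).trans (add_le_add (hf _ hP _ hx _ hz) ih)

lemma exists_refine (h : CellChain 𝒮 w x y c)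
    (hr : ∀ P ∈ 𝒮, ∀ u ∈ closure P, ∀ v ∈ closure P, ∃ c ≤ w P, CellChain 𝒮' w' u v c) :
    ∃ c' ≤ c, CellChain 𝒮' w' x y c' := by
  induction h with
  | single hP hx hy => exact hr _ hP _ hx _ hy
  | cons hP hx hz _ ih =>
    obtain ⟨c₁, h₁, H₁⟩ := hr _ hP _ hx _ hz
    obtain ⟨c₂, h₂, H₂⟩ := ih
    exact ⟨c₁ + c₂, add_le_add h₁ h₂, H₁.trans H₂⟩

lemma scale (h : CellChain 𝒮 (fun _ => 1) x y c) {θ : ℝ} (hsub : 𝒮 ⊆ 𝒮')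
    (hθ : ∀ P ∈ 𝒮, w' P = θ) : CellChain 𝒮' w' x y (θ * c) := by
  induction h with
  | single hP hx hy =>
    rw [mul_one, ← hθ _ hP]
    exact single (hsub hP) hx hy
  | cons hP hx hz _ ih =>
    rw [mul_add, mul_one]
    nth_rewrite 1 [← hθ _ hP]
    exact cons (hsub hP) hx hz ih

end CellChain

lemma exists_cellChain_of_preconnected {𝒞 : Set (Set X)} (hf : 𝒞.Finite) {K : Set X}
    (hK : IsPreconnected K) (hKc : ∀ x ∈ K, ∃ q ∈ 𝒞, x ∈ closure q)
    (hKm : ∀ q ∈ 𝒞, (closure q ∩ K).Nonempty) {q q' : Set X} (hq : q ∈ 𝒞) (hq' : q' ∈ 𝒞)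
    (hx : x ∈ closure q) (hy : y ∈ closure q') : ∃ c, CellChain 𝒞 w x y c := by
  set S : Set (Set X) := {p ∈ 𝒞 | ∃ z ∈ closure p, ∃ c, CellChain 𝒞 w x z c} with hS
  have hext : ∀ p ∈ S, ∀ u ∈ closure p, ∃ c, CellChain 𝒞 w x u c := by
    rintro p ⟨hp, z, hz, c, hc⟩ u hu
    exact ⟨_, hc.trans (CellChain.single hp hz hu)⟩
  have hqS : q ∈ S := ⟨hq, x, hx, _, CellChain.single hq hx hx⟩
  by_cases hq'S : q' ∈ S
  · exact hext q' hq'S y hy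
  · exfalso
    have hcl : ∀ T ⊆ 𝒞, IsClosed (⋃ p ∈ T, closure p) := fun T hT =>
      (hf.subset hT).isClosed_biUnion fun _ _ => isClosed_closure
    obtain ⟨z, -, hz, hz'⟩ := isPreconnected_closed_iff.1 hK (⋃ p ∈ S, closure p)
      (⋃ p ∈ 𝒞 \ S, closure p) (hcl _ (sep_subset _ _)) (hcl _ sdiff_subset)
      (by
        intro u hu
        obtain ⟨p, hp, hup⟩ := hKc u hu
        by_cases hpS : p ∈ S
        · exact Or.inl (mem_biUnion hpS hup)
        · exact Or.inr (mem_biUnion (show p ∈ 𝒞 \ S from ⟨hp, hpS⟩) hup))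
      (by
        obtain ⟨u, hu, huK⟩ := hKm q hq
        exact ⟨u, huK, mem_biUnion hqS hu⟩)
      (by
        obtain ⟨u, hu, huK⟩ := hKm q' hq'
        exact ⟨u, huK, mem_biUnion (show q' ∈ 𝒞 \ S from ⟨hq', hq'S⟩) hu⟩)
    obtain ⟨p, hp, hzp⟩ := mem_iUnion₂.1 hz
    obtain ⟨p', ⟨hp', hp'S⟩, hzp'⟩ := mem_iUnion₂.1 hz'
    obtain ⟨c, hc⟩ := hext p hp z hzp
    exact hp'S ⟨hp', z, hzp', c, hc⟩

lemma Set.Finite.exists_pos_le {ι : Type*} {s : Set ι} (hs : s.Finite) {f : ι → ℝ}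
    (hf : ∀ i ∈ s, 0 < f i) : ∃ r > 0, ∀ i ∈ s, r ≤ f i := by
  have := hs.to_subtype
  obtain ⟨r, hr, h⟩ := exists_pos_le_of_finite (fun i : s => f i) fun i => hf i i.2
  exact ⟨r, hr, fun i hi => h ⟨i, hi⟩⟩

lemma exists_bound_cellChain {𝒞 : Set (Set X)} (hf : 𝒞.Finite) (hne : ∀ q ∈ 𝒞, q.Nonempty)
    {K : Set X} (hK : IsPreconnected K) (hKc : ∀ x ∈ K, ∃ q ∈ 𝒞, x ∈ closure q)
    (hKm : ∀ q ∈ 𝒞, (closure q ∩ K).Nonempty) :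
    ∃ N, ∀ q ∈ 𝒞, ∀ q' ∈ 𝒞, ∀ x ∈ closure q, ∀ y ∈ closure q',
      ∃ c ≤ N, CellChain 𝒞 (fun _ => 1) x y c := by
  have hex : ∀ p : Set X × Set X, p ∈ 𝒞 ×ˢ 𝒞 → ∃ N, ∀ x ∈ closure p.1, ∀ y ∈ closure p.2,
      ∃ c ≤ N, CellChain 𝒞 (fun _ => 1) x y c := by
    rintro ⟨q, q'⟩ ⟨hq, hq'⟩
    obtain ⟨u, hu⟩ := hne q hq
    obtain ⟨v, hv⟩ := hne q' hq'
    obtain ⟨c, hc⟩ := exists_cellChain_of_preconnected (w := fun _ => 1) hf hK hKc hKm hq hq'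
      (subset_closure hu) (subset_closure hv)
    refine ⟨1 + c + 1, fun x hx y hy => ⟨_, le_rfl, ?_⟩⟩
    exact ((CellChain.single (w := fun _ => 1) hq hx (subset_closure hu)).trans hc).trans
      (CellChain.single hq' (subset_closure hv) hy)
  choose! N hN using hex
  obtain ⟨M, hM⟩ := ((hf.prod hf).image N).bddAbove
  refine ⟨M, fun q hq q' hq' x hx y hy => ?_⟩
  obtain ⟨c, hc, h⟩ := hN (q, q') ⟨hq, hq'⟩ x hx y hy
  exact ⟨c, hc.trans (hM (mem_image_of_mem N (show (q, q') ∈ 𝒞 ×ˢ 𝒞 from ⟨hq, hq'⟩))), h⟩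

end Chains

section CellPartition

variable {X : Type*} [MetricSpace X]

/-- A finite family of disjoint connected open sets with property S whose closures cover. -/
structure IsCellPartition (𝒮 : Set (Set X)) : Prop where
  finite : 𝒮.Finite
  cell : ∀ P ∈ 𝒮, IsOpen P ∧ IsConnected P ∧ PropertyS P
  disjoint : 𝒮.PairwiseDisjoint id
  cover : ∀ x, ∃ P ∈ 𝒮, x ∈ closure P

lemma IsCellPartition.notMem_of_mem_closure {𝒮 : Set (Set X)} (h : IsCellPartition 𝒮)
    {P P' : Set X} (hP : P ∈ 𝒮) (hP' : P' ∈ 𝒮) (hne : P' ≠ P) {x : X} (hx : x ∈ closure P) :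
    x ∉ P' := fun hx' => by
  have hd : Disjoint P' P := h.disjoint hP' hP hne
  exact (hd.closure_right (h.cell P' hP').1).le_bot ⟨hx', hx⟩

/-- A continuous function can be modified to be constant on prescribed closed subsets of the
cells. -/
lemma IsCellPartition.exists_flatten {𝒮 : Set (Set X)} (h𝒮 : IsCellPartition 𝒮)
    {T : Set X → Set X} (hT : ∀ P ∈ 𝒮, IsClosed (T P) ∧ T P ⊆ P) (h : C(X, ℝ)) (g : Set X → ℝ) :
    ∃ h' : C(X, ℝ), ∀ P ∈ 𝒮, ∃ s : X → ℝ, (∀ x, 0 ≤ s x ∧ s x ≤ 1) ∧ (∀ x ∈ T P, s x = 1) ∧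
      ∀ x ∈ closure P, h' x = h x + s x * (g P - h x) := by
  classical
  have hU : ∀ P ∈ 𝒮, ∃ s : C(X, ℝ), EqOn s 0 Pᶜ ∧ EqOn s 1 (T P) ∧ ∀ x, s x ∈ Icc (0 : ℝ) 1 :=
    fun P hP => exists_continuous_zero_one_of_isClosed (h𝒮.cell P hP).1.isClosed_compl
      (hT P hP).1 (disjoint_compl_left_iff_subset.2 (hT P hP).2)
  choose! s hs0 hs1 hs using hU
  refine ⟨h + ∑ P ∈ h𝒮.finite.toFinset, s P * (ContinuousMap.const X (g P) - h), fun P hP =>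
    ⟨s P, hs P hP, hs1 P hP, fun x hx => ?_⟩⟩
  rw [ContinuousMap.add_apply, ContinuousMap.sum_apply,
    Finset.sum_eq_single_of_mem P (h𝒮.finite.mem_toFinset.2 hP)]
  · simp
  · intro P' hP' hne
    have := hs0 P' (h𝒮.finite.mem_toFinset.1 hP')
      (h𝒮.notMem_of_mem_closure hP (h𝒮.finite.mem_toFinset.1 hP') hne hx)
    simp [this]

/-- A continuous function on a nonempty compact set takes values centered around the middle of its
range. -/
lemma IsCompact.exists_center {S : Set X} (hS : IsCompact S) (hne : S.Nonempty) (h : C(X, ℝ)) :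
    ∃ g, ∃ x ∈ S, ∃ y ∈ S, ∀ z ∈ S, |h z - g| ≤ |h x - h y| / 2 := by
  obtain ⟨x, hx, hxm⟩ := hS.exists_isMaxOn hne h.continuous.continuousOn
  obtain ⟨y, hy, hym⟩ := hS.exists_isMinOn hne h.continuous.continuousOn
  refine ⟨(h x + h y) / 2, x, hx, y, hy, fun z hz => ?_⟩
  have h1 := isMaxOn_iff.1 hxm z hz
  have h2 := isMinOn_iff.1 hym z hz
  rw [abs_of_nonneg (by linarith : 0 ≤ h x - h y), abs_le]
  constructor <;> linarith

end CellPartition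

section RefinementStep

variable {X : Type*} [MetricSpace X] [CompactSpace X] [LocallyConnectedSpace X] [Nonempty X]

/-- The weight of the refined cells can be chosen such that links are refined without extra cost,
and such that a finite family of functions can be kept below the weights. -/
theorem IsCellPartition.exists_refinement (hX : ThinlyColored X) {𝒮 : Set (Set X)}
    (h𝒮 : IsCellPartition 𝒮) {w : Set X → ℝ} (hw : ∀ P ∈ 𝒮, 0 < w P) {H : Set C(X, ℝ)}
    (hHf : H.Finite)
    (hH : ∀ h ∈ H, ∀ P ∈ 𝒮, ∀ x ∈ closure P, ∀ y ∈ closure P, |h x - h y| < w P)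
    {ε τ : ℝ} (hε : 0 < ε) (hτ : 0 < τ) :
    ∃ (𝒮' : Set (Set X)) (w' : Set X → ℝ), IsCellPartition 𝒮' ∧
      (∀ Q ∈ 𝒮', 0 < w' Q ∧ ∃ P ∈ 𝒮, w' Q ≤ w P / 2) ∧
      (∀ Q ∈ 𝒮', ∀ x ∈ closure Q, ∀ y ∈ closure Q, dist x y ≤ ε) ∧
      (∀ P ∈ 𝒮, ∀ u ∈ closure P, ∀ v ∈ closure P, ∃ c ≤ w P, CellChain 𝒮' w' u v c) ∧
      ∃ Θ : C(X, ℝ) → C(X, ℝ), ∀ h ∈ H,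
        (∀ Q ∈ 𝒮', ∀ x ∈ closure Q, ∀ y ∈ closure Q, |Θ h x - Θ h y| < w' Q) ∧
        ∀ v, (∀ P ∈ 𝒮, ∀ x ∈ closure P, ∀ y ∈ closure P, |h x - h y| ≤ v) →
          (∀ Q ∈ 𝒮', ∀ x ∈ closure Q, ∀ y ∈ closure Q, |Θ h x - Θ h y| ≤ v / 2 + τ) ∧
          ∀ x, |Θ h x - h x| ≤ v / 2 := by
  classical
  -- centers and slack of the functions
  choose! g a ha b hb hgab using fun (h : C(X, ℝ)) P (hP : P ∈ 𝒮) =>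
    (isClosed_closure (s := P)).isCompact.exists_center (h𝒮.cell P hP).2.1.nonempty.closure h
  obtain ⟨κ₀, hκ₀, hκ₀le⟩ := (hHf.prod h𝒮.finite).exists_pos_le
    (f := fun p => (w p.2 - |p.1 (a p.1 p.2) - p.1 (b p.1 p.2)|) / (2 * w p.2)) (by
      rintro ⟨h, P⟩ ⟨hh, hP⟩
      have h1 := hH h hh P hP _ (ha h P hP) _ (hb h P hP)
      have h2 := hw P hP
      exact div_pos (by simpa using h1) (by simpa using h2))
  set κ := min κ₀ (1 / 4) with hκdef
  have hκ : 0 < κ := lt_min hκ₀ (by norm_num)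
  have hκ4 : κ ≤ 1 / 4 := min_le_right _ _
  have hslack : ∀ h ∈ H, ∀ P ∈ 𝒮, |h (a h P) - h (b h P)| ≤ (1 - 2 * κ) * w P := by
    intro h hh P hP
    have h1 : κ ≤ _ := (min_le_left _ _).trans (hκ₀le (h, P) ⟨hh, hP⟩)
    have h2 := hw P hP
    rw [le_div_iff₀ (by simpa using h2)] at h1
    simp only at h1
    linarith
  obtain ⟨m, hm, hmw⟩ := h𝒮.finite.exists_pos_le hw
  -- a mesh on which the functions hardly vary
  set τ' := min τ (κ * m / 4) with hτ'def
  have hτ' : 0 < τ' := lt_min hτ (by positivity)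
  have hunif : ∀ h : C(X, ℝ), ∃ δ > 0, ∀ x y, dist x y ≤ δ → |h x - h y| ≤ τ' := by
    intro h
    obtain ⟨δ, hδ, H⟩ := Metric.uniformContinuous_iff.1
      (CompactSpace.uniformContinuous_of_continuous h.continuous) τ' hτ'
    refine ⟨δ / 2, half_pos hδ, fun x y hxy => ?_⟩
    have := H (lt_of_le_of_lt hxy (half_lt_self hδ))
    rw [Real.dist_eq] at this
    exact this.le
  choose δ hδ hδh using hunif
  obtain ⟨δ₀, hδ₀, hδ₀le⟩ := hHf.exists_pos_le fun h _ => hδ h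
  set μ := min ε δ₀ with hμdef
  have hμ : 0 < μ := lt_min hε hδ₀
  choose! 𝒞 ℬ hR using fun P (hP : P ∈ 𝒮) =>
    (h𝒮.cell P hP).2.2.exists_coreRefinement hX (h𝒮.cell P hP).1 (h𝒮.cell P hP).2.1 hμ
  set 𝒮' := ⋃ P ∈ 𝒮, (𝒞 P ∪ ℬ P) with h𝒮'
  have hmem' : ∀ Q ∈ 𝒮', ∃ P ∈ 𝒮, Q ∈ 𝒞 P ∪ ℬ P := fun Q hQ => by simpa [h𝒮'] using hQ
  have huniq : ∀ Q, ∀ P ∈ 𝒮, ∀ P' ∈ 𝒮, Q ∈ 𝒞 P ∪ ℬ P → Q ∈ 𝒞 P' ∪ ℬ P' → P = P' := by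
    intro Q P hP P' hP' h1 h2
    by_contra hne
    have hd : Disjoint P P' := h𝒮.disjoint hP hP' hne
    obtain ⟨x, hx⟩ := ((hR P hP).cell Q h1).2.1.nonempty
    exact hd.le_bot ⟨((hR P hP).cell Q h1).2.2.2.1 hx, ((hR P' hP').cell Q h2).2.2.2.1 hx⟩
  choose! par hpar hQpar using hmem'
  have hbound : ∀ P ∈ 𝒮, ∃ N, ∀ q ∈ 𝒞 P, ∀ q' ∈ 𝒞 P, ∀ x ∈ closure q, ∀ y ∈ closure q',
      ∃ c ≤ N, CellChain (𝒞 P) (fun _ => 1) x y c := by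
    intro P hP
    obtain ⟨K, hK, hKc, hKm⟩ := (hR P hP).core_connected
    exact exists_bound_cellChain (hR P hP).core_finite
      (fun q hq => ((hR P hP).cell q (Or.inl hq)).2.1.nonempty) hK hKc hKm
  choose! N hN using hbound
  obtain ⟨θ₀, hθ₀, hθ₀le⟩ := h𝒮.finite.exists_pos_le
    (f := fun P => κ * w P / (|N P| + 1)) (fun P hP => by have := hw P hP; positivity)
  set θ := min θ₀ (m / 4) with hθdef
  have hθ : 0 < θ := lt_min hθ₀ (by positivity)
  have hθw : ∀ P ∈ 𝒮, θ ≤ (1 - κ) * w P / 2 := by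
    intro P hP
    have h1 : θ ≤ m / 4 := min_le_right _ _
    have h2 := hmw P hP
    nlinarith
  have hθN : ∀ P ∈ 𝒮, ∀ c ≤ N P, θ * c ≤ κ * w P := by
    intro P hP c hc
    have h1 : θ ≤ _ := (min_le_left _ _).trans (hθ₀le P hP)
    rw [le_div_iff₀ (by positivity)] at h1
    have h2 : θ * c ≤ θ * (|N P| + 1) := by
      gcongr
      linarith [le_abs_self (N P)]
    linarith
  set w' : Set X → ℝ := fun Q => if Q ∈ ⋃ P ∈ 𝒮, 𝒞 P then θ else (1 - κ) * w (par Q) / 2 with hw'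
  have hw'C : ∀ P ∈ 𝒮, ∀ Q ∈ 𝒞 P, w' Q = θ := fun P hP Q hQ => if_pos (mem_biUnion hP hQ)
  have hw'le : ∀ P ∈ 𝒮, ∀ Q ∈ 𝒞 P ∪ ℬ P, w' Q ≤ (1 - κ) * w P / 2 := by
    intro P hP Q hQ
    have hQ' : Q ∈ 𝒮' := mem_biUnion hP hQ
    simp only [hw']
    split_ifs with hc
    · exact hθw P hP
    · rw [huniq Q (par Q) (hpar Q hQ') P hP (hQpar Q hQ') hQ]
  have hcoverP : ∀ P ∈ 𝒮, ∀ x ∈ closure P, ∃ Q ∈ 𝒞 P ∪ ℬ P, x ∈ closure Q := by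
    intro P hP x hx
    exact (mem_closure_sUnion_iff ((hR P hP).core_finite.union (hR P hP).border_finite)).1
      (closure_minimal (hR P hP).dense isClosed_closure hx)
  refine ⟨𝒮', w', ⟨?_, ?_, ?_, ?_⟩, ?_, ?_, ?_, ?_⟩
  · exact h𝒮.finite.biUnion fun P hP => (hR P hP).core_finite.union (hR P hP).border_finite
  · intro Q hQ
    obtain ⟨h1, h2, h3, -⟩ := (hR _ (hpar Q hQ)).cell Q (hQpar Q hQ)
    exact ⟨h1, h2, h3⟩
  · intro Q hQ Q' hQ' hne
    by_cases h : par Q = par Q'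
    · exact (hR _ (hpar Q hQ)).disjoint (hQpar Q hQ) (h ▸ hQpar Q' hQ') hne
    · have hd : Disjoint (par Q) (par Q') := h𝒮.disjoint (hpar Q hQ) (hpar Q' hQ') h
      exact hd.mono ((hR _ (hpar Q hQ)).cell Q (hQpar Q hQ)).2.2.2.1
        ((hR _ (hpar Q' hQ')).cell Q' (hQpar Q' hQ')).2.2.2.1
  · intro x
    obtain ⟨P, hP, hx⟩ := h𝒮.cover x
    obtain ⟨Q, hQ, hxQ⟩ := hcoverP P hP x hx
    exact ⟨Q, mem_biUnion hP hQ, hxQ⟩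
  · intro Q hQ
    have hwp := hw _ (hpar Q hQ)
    refine ⟨?_, par Q, hpar Q hQ, ?_⟩
    · simp only [hw']
      split_ifs
      · exact hθ
      · have : 0 < 1 - κ := by linarith
        positivity
    · have := hw'le _ (hpar Q hQ) Q (hQpar Q hQ)
      nlinarith
  · intro Q hQ x hx y hy
    exact (dist_le_of_mem_closure ((hR _ (hpar Q hQ)).cell Q (hQpar Q hQ)).2.2.2.2 x hx y hy).trans
      (min_le_left _ _)
  · intro P hP u hu v hv
    have hsub : 𝒞 P ∪ ℬ P ⊆ 𝒮' := fun Q hQ => mem_biUnion hP hQ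
    have key : ∀ u ∈ closure P, ∃ q ∈ 𝒞 P, ∃ u' ∈ closure q, ∃ c ≤ (1 - κ) * w P / 2,
        CellChain 𝒮' w' u u' c := by
      intro u hu
      obtain ⟨Q, hQ, huQ⟩ := hcoverP P hP u hu
      have hle := hw'le P hP Q hQ
      rcases hQ with hQ | hQ
      · exact ⟨Q, hQ, u, huQ, w' Q, hle, CellChain.single (hsub (Or.inl hQ)) huQ huQ⟩
      · obtain ⟨q, hq, u', hu'Q, hu'q⟩ := (hR P hP).border_meets_core Q hQ
        exact ⟨q, hq, u', hu'q, w' Q, hle, CellChain.single (hsub (Or.inr hQ)) huQ hu'Q⟩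
    obtain ⟨q, hq, u', hu', c, hc, hcu⟩ := key u hu
    obtain ⟨q', hq', v', hv', c', hc', hcv⟩ := key v hv
    obtain ⟨n, hn, hnc⟩ := hN P hP q hq q' hq' u' hu' v' hv'
    have hmid : CellChain 𝒮' w' u' v' (θ * n) :=
      hnc.scale (subset_union_left.trans hsub) (hw'C P hP)
    exact ⟨c + θ * n + c', by linarith [hθN P hP n hn], (hcu.trans hmid).trans hcv.symm⟩
  · choose Θ hΘ using fun h : C(X, ℝ) => h𝒮.exists_flatten (T := fun P => ⋃ q ∈ 𝒞 P, closure q)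
      (fun P hP => ⟨(hR P hP).core_finite.isClosed_biUnion fun _ _ => isClosed_closure,
        iUnion₂_subset (hR P hP).closure_core_subset⟩) h (g h)
    refine ⟨Θ, fun h hh => ?_⟩
    have hcore : ∀ P ∈ 𝒮, ∀ Q ∈ 𝒞 P, ∀ x ∈ closure Q, Θ h x = g h P := by
      intro P hP Q hQ x hx
      obtain ⟨s, -, hs1, hsx⟩ := hΘ h P hP
      rw [hsx x (subset_closure ((hR P hP).closure_core_subset Q hQ hx)),
        hs1 x (mem_biUnion hQ hx)]
      ring
    have hosc : ∀ P ∈ 𝒮, ∀ Q ∈ 𝒞 P ∪ ℬ P, ∀ x ∈ closure Q, ∀ y ∈ closure Q,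
        |Θ h x - Θ h y| ≤ |h (a h P) - h (b h P)| / 2 + τ' := by
      intro P hP Q hQ x hx y hy
      obtain ⟨s, hs, -, hsx⟩ := hΘ h P hP
      obtain ⟨-, -, -, hQP, hQd⟩ := (hR P hP).cell Q hQ
      have hxP := closure_mono hQP hx
      have hyP := closure_mono hQP hy
      have e1 : |h x - h y| ≤ τ' := hδh h x y
        (((dist_le_of_mem_closure hQd x hx y hy).trans (min_le_right _ _)).trans (hδ₀le h hh))
      have e2 := hgab h P hP y hyP
      rw [hsx x hxP, hsx y hyP]
      have e3 : h x + s x * (g h P - h x) - (h y + s y * (g h P - h y)) =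
          (s y - s x) * (h y - g h P) + (1 - s x) * (h x - h y) := by ring
      rw [e3]
      refine (abs_add_le _ _).trans (add_le_add ?_ ?_)
      · rw [abs_mul]
        have : |s y - s x| ≤ 1 := abs_le.2 ⟨by linarith [(hs x).2, (hs y).1],
          by linarith [(hs x).1, (hs y).2]⟩
        exact (mul_le_of_le_one_left (abs_nonneg _) this).trans e2
      · rw [abs_mul]
        have : |1 - s x| ≤ 1 := abs_le.2 ⟨by linarith [(hs x).2], by linarith [(hs x).1]⟩
        exact (mul_le_of_le_one_left (abs_nonneg _) this).trans e1
    refine ⟨?_, fun v hv => ⟨?_, ?_⟩⟩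
    · intro Q hQ x hx y hy
      by_cases hQC : Q ∈ ⋃ P ∈ 𝒮, 𝒞 P
      · obtain ⟨P, hP, hQP⟩ := mem_iUnion₂.1 hQC
        rw [hcore P hP Q hQP x hx, hcore P hP Q hQP y hy, hw'C P hP Q hQP]
        simpa using hθ
      · have h1 := hosc _ (hpar Q hQ) Q (hQpar Q hQ) x hx y hy
        have h2 := hslack h hh _ (hpar Q hQ)
        have h3 := hmw _ (hpar Q hQ)
        have h4 : τ' ≤ κ * m / 4 := min_le_right _ _
        have h5 : w' Q = (1 - κ) * w (par Q) / 2 := if_neg hQC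
        have h6 : κ * m ≤ κ * w (par Q) := by gcongr
        have h7 : 0 < κ * m := by positivity
        rw [h5]
        linarith
    · intro Q hQ x hx y hy
      have h1 := hosc _ (hpar Q hQ) Q (hQpar Q hQ) x hx y hy
      have h2 := hv _ (hpar Q hQ) _ (ha h _ (hpar Q hQ)) _ (hb h _ (hpar Q hQ))
      have h3 : τ' ≤ τ := min_le_left _ _
      linarith
    · intro x
      obtain ⟨P, hP, hx⟩ := h𝒮.cover x
      obtain ⟨s, hs, -, hsx⟩ := hΘ h P hP
      have h1 := hgab h P hP x hx
      have h2 := hv P hP _ (ha h P hP) _ (hb h P hP)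
      rw [hsx x hx, add_sub_cancel_left, abs_mul, abs_of_nonneg (hs x).1, abs_sub_comm]
      exact (mul_le_of_le_one_left (abs_nonneg _) (hs x).2).trans (by linarith)

end RefinementStep

section Resolution

variable {X : Type*} [MetricSpace X]

/-- A weighted cell partition with a finite family of continuous functions whose variation on the
cells is controlled by the weights, and a tolerance for later modifications of these functions. -/
structure CellStage (X : Type*) [MetricSpace X] where
  cells : Set (Set X)
  weight : Set X → ℝ
  fns : Set C(X, ℝ)
  tol : ℝ
  isCellPartition : IsCellPartition cells
  weight_pos : ∀ P ∈ cells, 0 < weight P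
  fns_finite : fns.Finite
  fns_lt : ∀ h ∈ fns, ∀ P ∈ cells, ∀ x ∈ closure P, ∀ y ∈ closure P, |h x - h y| < weight P
  tol_pos : 0 < tol

/-- The stage `S'` refines the stage `S` to mesh `ρ` and also takes care of a multiple of `f`. -/
structure CellStage.IsNext (f : C(X, ℝ)) (ρ : ℝ) (S S' : CellStage X) : Prop where
  tol_le : S'.tol ≤ S.tol / 2
  weight_le : ∀ Q ∈ S'.cells, ∃ P ∈ S.cells, S'.weight Q ≤ S.weight P / 2
  mesh : ∀ Q ∈ S'.cells, ∀ x ∈ closure Q, ∀ y ∈ closure Q, dist x y ≤ ρ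
  link : ∀ P ∈ S.cells, ∀ u ∈ closure P, ∀ v ∈ closure P,
    ∃ c ≤ S.weight P, CellChain S'.cells S'.weight u v c
  move : ∀ h ∈ S.fns, ∃ h' ∈ S'.fns, ∀ v,
    (∀ P ∈ S.cells, ∀ x ∈ closure P, ∀ y ∈ closure P, |h x - h y| ≤ v) →
      (∀ Q ∈ S'.cells, ∀ x ∈ closure Q, ∀ y ∈ closure Q, |h' x - h' y| ≤ v / 2 + S.tol / 2) ∧
      ∀ x, |h' x - h x| ≤ v / 2
  new : ∃ a > 0, a • f ∈ S'.fns ∧ S'.tol ≤ a * ρ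

/-- A sequence of finite weighted families of cells, each refining the previous one without
increasing the costs of chains, whose chain costs tend to zero exactly on the diagonal. -/
structure IsChainResolution (𝒮 : ℕ → Set (Set X)) (w : ℕ → Set X → ℝ) : Prop where
  finite : ∀ n, (𝒮 n).Finite
  cover : ∀ n x, ∃ P ∈ 𝒮 n, x ∈ closure P
  weight_pos : ∀ n, ∀ P ∈ 𝒮 n, 0 < w n P
  weight_le : ∀ n, ∀ P ∈ 𝒮 n, w n P ≤ (1 / 2) ^ n
  link : ∀ n, ∀ P ∈ 𝒮 n, ∀ u ∈ closure P, ∀ v ∈ closure P,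
    ∃ c ≤ w n P, CellChain (𝒮 (n + 1)) (w (n + 1)) u v c
  exists_chain : ∀ x y, ∃ c, CellChain (𝒮 0) (w 0) x y c
  exists_le : ∀ x y, x ≠ y → ∃ r > 0, ∀ n c, CellChain (𝒮 n) (w n) x y c → r ≤ c

lemma exists_cellChain_of_le {𝒮 : ℕ → Set (Set X)} {w : ℕ → Set X → ℝ}
    (hlink : ∀ n, ∀ P ∈ 𝒮 n, ∀ u ∈ closure P, ∀ v ∈ closure P,
      ∃ c ≤ w n P, CellChain (𝒮 (n + 1)) (w (n + 1)) u v c)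
    {m n : ℕ} (hmn : m ≤ n) {x y : X} {c : ℝ} (h : CellChain (𝒮 m) (w m) x y c) :
    ∃ c' ≤ c, CellChain (𝒮 n) (w n) x y c' := by
  induction n, hmn using Nat.le_induction with
  | base => exact ⟨c, le_rfl, h⟩
  | succ n _ ih =>
    obtain ⟨c', hc', h'⟩ := ih
    obtain ⟨c₂, hc₂, hchain⟩ := h'.exists_refine (hlink n)
    exact ⟨c₂, hc₂.trans hc', hchain⟩

/-- The functions of a stage bound the chain costs of all later stages from below. -/
lemma CellStage.abs_sub_le_of_cellChain {S : ℕ → CellStage X} {f : ℕ → C(X, ℝ)} {ρ : ℕ → ℝ}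
    (hS : ∀ n, (S n).IsNext (f n) (ρ n) (S (n + 1))) (k : ℕ) :
    ∀ (n : ℕ) (h : C(X, ℝ)) (v : ℝ), h ∈ (S n).fns →
      (∀ P ∈ (S n).cells, ∀ x ∈ closure P, ∀ y ∈ closure P, |h x - h y| ≤ v) →
      ∀ x y c, CellChain (S (n + k)).cells (S (n + k)).weight x y c →
        |h x - h y| ≤ c + 2 * (v + (S n).tol) := by
  induction k with
  | zero =>
    intro n h v hh hv x y c hc
    obtain ⟨P, hP, hx⟩ := (S n).isCellPartition.cover x
    have hv0 : 0 ≤ v := (abs_nonneg _).trans (hv P hP x hx x hx)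
    have h1 := hc.abs_sub_le (f := h) fun P hP x hx y hy =>
      ((S n).fns_lt h hh P hP x hx y hy).le
    linarith [(S n).tol_pos]
  | succ k ih =>
    intro n h v hh hv x y c hc
    obtain ⟨h', hh', hmove⟩ := (hS n).move h hh
    obtain ⟨hv', hd⟩ := hmove v hv
    have h1 := ih (n + 1) h' _ hh' hv' x y c (by rwa [add_assoc, add_comm 1 k])
    have h2 := hd x
    have h3 := hd y
    rw [abs_sub_comm] at h2
    have h4 : |h x - h y| ≤ |h x - h' x| + |h' x - h' y| + |h' y - h y| := by
      have := abs_add_three (h x - h' x) (h' x - h' y) (h' y - h y)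
      rwa [show h x - h' x + (h' x - h' y) + (h' y - h y) = h x - h y by ring] at this
    linarith [(hS n).tol_le]

variable [CompactSpace X] [LocallyConnectedSpace X]

lemma propertyS_univ : PropertyS (univ : Set X) := by
  intro δ hδ
  choose N hNo hNc hzN _ hNd using fun z : X =>
    exists_small_connected_nhd isOpen_univ (mem_univ z) hδ
  obtain ⟨t, -, ht⟩ := isCompact_univ.elim_nhds_subcover N
    fun z _ => (hNo z).mem_nhds (hzN z)
  refine ⟨N '' t, t.finite_toSet.image _, ?_, ?_⟩
  · rwa [sUnion_image]
  · rintro _ ⟨z, -, rfl⟩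
    exact ⟨(hNc z).isPreconnected, subset_univ _, hNd z⟩

lemma CellStage.exists_isNext [Nonempty X] (hX : ThinlyColored X) (S : CellStage X) (f : C(X, ℝ))
    {ρ : ℝ} (hρ : 0 < ρ) : ∃ S', S.IsNext f ρ S' := by
  obtain ⟨𝒮', w', h1, h2, h3, h4, Θ, hΘ⟩ := S.isCellPartition.exists_refinement hX S.weight_pos
    S.fns_finite S.fns_lt hρ (half_pos S.tol_pos)
  obtain ⟨m, hm, hmw⟩ := h1.finite.exists_pos_le fun Q hQ => (h2 Q hQ).1
  have hden : 0 < 2 * ‖f‖ + 1 := by positivity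
  set a := m / (2 * ‖f‖ + 1) with ha
  have ha0 : 0 < a := div_pos hm hden
  refine ⟨⟨𝒮', w', insert (a • f) (Θ '' S.fns), min (S.tol / 2) (a * ρ), h1,
    fun Q hQ => (h2 Q hQ).1, (S.fns_finite.image Θ).insert _, ?_,
    lt_min (half_pos S.tol_pos) (mul_pos ha0 hρ)⟩,
    min_le_left _ _, fun Q hQ => (h2 Q hQ).2, h3, h4,
    fun h hh => ⟨Θ h, mem_insert_of_mem _ (mem_image_of_mem _ hh), (hΘ h hh).2⟩,
    a, ha0, mem_insert _ _, min_le_right _ _⟩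
  rintro h (rfl | ⟨h, hh, rfl⟩)
  · intro P hP x _ y _
    have e1 : |f x - f y| ≤ 2 * ‖f‖ := by
      have := f.dist_le_two_norm x y
      rwa [Real.dist_eq] at this
    have e2 : a * (2 * ‖f‖ + 1) = m := div_mul_cancel₀ _ hden.ne'
    have e3 : (a • f) x - (a • f) y = a * (f x - f y) := by simp; ring
    rw [e3, abs_mul, abs_of_pos ha0]
    have e4 : a * |f x - f y| ≤ a * (2 * ‖f‖) := by gcongr
    linarith [hmw P hP]
  · exact (hΘ h hh).1

theorem exists_isChainResolution [ConnectedSpace X] (hX : ThinlyColored X) :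
    ∃ (𝒮 : ℕ → Set (Set X)) (w : ℕ → Set X → ℝ), IsChainResolution 𝒮 w := by
  set p := TopologicalSpace.denseSeq X with hp
  set f : ℕ → C(X, ℝ) := fun n => ⟨fun x => dist (p n.unpair.1) x, by fun_prop⟩ with hf
  have hρ : ∀ n : ℕ, (0 : ℝ) < (1 / 2) ^ n := fun n => by positivity
  choose next hnext using fun (n : ℕ) (S : CellStage X) => S.exists_isNext hX (f n) (hρ n)
  let S₀ : CellStage X :=
    { cells := {univ}
      weight := fun _ => 1
      fns := ∅
      tol := 1
      isCellPartition :=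
        { finite := finite_singleton _
          cell := by
            rintro P rfl
            exact ⟨isOpen_univ, isConnected_univ, propertyS_univ⟩
          disjoint := pairwiseDisjoint_singleton _ _
          cover := fun x => ⟨univ, rfl, by simp⟩ }
      weight_pos := fun _ _ => one_pos
      fns_finite := finite_empty
      fns_lt := fun h hh => absurd hh (notMem_empty h)
      tol_pos := one_pos }
  let S : ℕ → CellStage X := fun n => Nat.rec S₀ (fun n T => next n T) n
  have hS : ∀ n, (S n).IsNext (f n) ((1 / 2) ^ n) (S (n + 1)) := fun n => hnext n (S n)
  refine ⟨fun n => (S n).cells, fun n => (S n).weight, fun n => (S n).isCellPartition.finite,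
    fun n => (S n).isCellPartition.cover, fun n => (S n).weight_pos, ?_, fun n => (hS n).link, ?_, ?_⟩
  · intro n
    induction n with
    | zero => exact fun P _ => by simp [S, S₀]
    | succ n ih =>
      intro Q hQ
      obtain ⟨P, hP, hPQ⟩ := (hS n).weight_le Q hQ
      have := ih P hP
      rw [pow_succ]
      linarith
  · exact fun x y => ⟨_, CellChain.single (P := univ) (by simp [S, S₀]) (by simp) (by simp)⟩
  · intro x y hxy
    have hd : 0 < dist x y := dist_pos.2 hxy
    obtain ⟨i, hi⟩ := Metric.denseRange_iff.1 (TopologicalSpace.denseRange_denseSeq X) x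
      (dist x y / 8) (by positivity)
    obtain ⟨j, hj⟩ := exists_pow_lt_of_lt_one (show 0 < dist x y / 16 by positivity)
      (show (1 / 2 : ℝ) < 1 by norm_num)
    set n := Nat.pair i j with hn
    have hfn : ∀ z, f n z = dist (p i) z := fun z => by simp [hf, hn]
    have hnj : (1 / 2 : ℝ) ^ n ≤ (1 / 2) ^ j :=
      pow_le_pow_of_le_one (by norm_num) (by norm_num) (Nat.right_le_pair i j)
    obtain ⟨a, ha, haf, hatol⟩ := (hS n).new
    refine ⟨a * (dist x y / 2), by positivity, fun k c hc => ?_⟩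
    obtain ⟨c', hc'c, hc'⟩ := exists_cellChain_of_le (𝒮 := fun n => (S n).cells)
      (w := fun n => (S n).weight) (fun n => (hS n).link) (Nat.le_add_left k (n + 1)) hc
    have hdiff : ∀ u v, |(a • f n) u - (a • f n) v| = a * |dist (p i) u - dist (p i) v| := by
      intro u v
      rw [ContinuousMap.smul_apply, ContinuousMap.smul_apply, ← smul_sub, smul_eq_mul, abs_mul,
        abs_of_pos ha, hfn, hfn]
    have key := CellStage.abs_sub_le_of_cellChain hS k (n + 1) (a • f n) (a * (1 / 2) ^ n) haf
      (by
        intro P hP u hu v hv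
        rw [hdiff]
        gcongr
        refine le_trans ?_ ((hS n).mesh P hP u hu v hv)
        rw [dist_comm (p i), dist_comm (p i)]
        exact abs_dist_sub_le u v (p i))
      x y c' hc'
    rw [hdiff] at key
    have e1 : dist x y * (3 / 4) ≤ |dist (p i) x - dist (p i) y| := by
      rw [abs_sub_comm]
      refine le_trans ?_ (le_abs_self _)
      have e0 : dist (p i) x < dist x y / 8 := by rwa [dist_comm]
      linarith [dist_triangle_left x y (p i)]
    have e2 : a * (dist x y * (3 / 4)) ≤ a * |dist (p i) x - dist (p i) y| := by gcongr
    have e3 : a * (1 / 2) ^ n ≤ a * (dist x y / 16) := by gcongr; linarith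
    nlinarith

end Resolution

section LengthSpace

open Filter Topology in
/-- In a compact space, points joined by almost Lipschitz maps of constant `D` are joined by a
Lipschitz path. -/
lemma exists_lipschitz_of_approx {Y : Type*} [MetricSpace Y] [CompactSpace Y] {D : ℝ} {x y : Y}
    (G : ℕ → unitInterval → Y) (h0 : ∀ n, G n 0 = x) (h1 : ∀ n, G n 1 = y) {ε : ℕ → ℝ}
    (hε : Tendsto ε atTop (𝓝 0))
    (hG : ∀ n s t, dist (G n s) (G n t) ≤ |(s : ℝ) - t| * (D + ε n) + ε n) :
    ∃ γ : unitInterval → Y, γ 0 = x ∧ γ 1 = y ∧ ∀ s t, dist (γ s) (γ t) ≤ |(s : ℝ) - t| * D := by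
  set U : Ultrafilter ℕ := hyperfilter ℕ with hU
  have hUle : (U : Filter ℕ) ≤ atTop := by
    rw [← Nat.cofinite_eq_atTop]
    exact hyperfilter_le_cofinite
  have hlim : ∀ t, ∃ z, Tendsto (fun n => G n t) U (𝓝 z) := fun t =>
    ⟨_, (U.map fun n => G n t).le_nhds_lim⟩
  choose γ hγ using hlim
  refine ⟨γ, ?_, ?_, fun s t => ?_⟩
  · exact tendsto_nhds_unique (hγ 0) (by simp only [h0]; exact tendsto_const_nhds)
  · exact tendsto_nhds_unique (hγ 1) (by simp only [h1]; exact tendsto_const_nhds)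
  · refine le_of_tendsto_of_tendsto ((hγ s).dist (hγ t)) ?_ (Eventually.of_forall fun n => hG n s t)
    have hεU := hε.mono_left hUle
    simpa using ((tendsto_const_nhds (x := D)).add hεU).const_mul |(s : ℝ) - t| |>.add hεU

/-- A compact metric space is a length space if its points are joined by almost optimal almost
paths. -/
theorem isLengthSpace_of_approx {Y : Type} [MetricSpace Y] [CompactSpace Y]
    (h : ∀ (x y : Y) (ε : ℝ), 0 < ε → ∃ (C : ℝ) (g : ℝ → Y), 0 ≤ C ∧ C ≤ dist x y + ε ∧ g 0 = x ∧
      g C = y ∧ ∀ s t, 0 ≤ s → s ≤ t → t ≤ C → dist (g s) (g t) ≤ t - s + ε) :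
    IsLengthSpace Y := by
  intro x y
  refine le_antisymm (le_iInf fun γ => ?_) ?_
  · have := eVariationOn.edist_le γ (mem_univ (0 : unitInterval)) (mem_univ 1)
    simpa [pathLength] using this
  · choose C g hC0 hC hg0 hgC hg using fun n : ℕ =>
      h x y (1 / ((n : ℝ) + 1)) Nat.one_div_pos_of_nat
    obtain ⟨γ, hγ0, hγ1, hγ⟩ := exists_lipschitz_of_approx (D := dist x y) (x := x) (y := y)
      (fun n t => g n (t * C n)) (by simpa using hg0) (by simpa using hgC)
      tendsto_one_div_add_atTop_nhds_zero_nat (by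
        intro n s t
        wlog hst : s ≤ t generalizing s t
        · rw [dist_comm, abs_sub_comm]
          exact this t s (le_of_not_ge hst)
        have hst' : (s : ℝ) ≤ t := hst
        rw [abs_sub_comm, abs_of_nonneg (sub_nonneg.2 hst')]
        have h1 := hg n (s * C n) (t * C n) (mul_nonneg s.2.1 (hC0 n))
          (mul_le_mul_of_nonneg_right hst' (hC0 n)) (mul_le_of_le_one_left (hC0 n) t.2.2)
        have h2 : (t - s : ℝ) * C n ≤ (t - s) * (dist x y + 1 / ((n : ℝ) + 1)) :=
          mul_le_mul_of_nonneg_left (hC n) (sub_nonneg.2 hst')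
        linarith)
    have hlip : LipschitzWith (nndist x y) γ := LipschitzWith.of_dist_le_mul fun s t => by
      rw [coe_nndist, mul_comm, Subtype.dist_eq, Real.dist_eq]
      exact hγ s t
    refine (iInf_le _ (⟨⟨γ, hlip.continuous⟩, hγ0, hγ1⟩ : Path x y)).trans ?_
    change eVariationOn γ univ ≤ edist x y
    have hproj : LipschitzOnWith (nndist x y) (IccExtend zero_le_one γ) univ :=
      (hlip.comp (LipschitzWith.projIcc zero_le_one)).weaken (by simp) |>.lipschitzOnWith
    have heq : γ = IccExtend zero_le_one γ ∘ ((↑) : unitInterval → ℝ) := by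
      funext t
      simp
    have hval : eVariationOn ((↑) : unitInterval → ℝ) univ ≤ 1 := by
      have := (MonotoneOn.eVariationOn_eq (f := ((↑) : unitInterval → ℝ)) (s := univ)
        (fun a _ b _ hab => hab) (mem_univ 0) (mem_univ 1)).le
      have hIcc : Icc (0 : unitInterval) 1 = univ := 
        eq_univ_of_forall fun t => ⟨t.2.1, t.2.2⟩
      simpa [hIcc] using this
    rw [heq]
    refine (hproj.comp_eVariationOn_le (mapsTo_univ _ _)).trans ?_
    rw [edist_nndist]
    exact mul_le_of_le_one_right' hval

end LengthSpace

section ChainMetric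

lemma CellChain.exists_almost_path {X : Type*} [TopologicalSpace X] {𝒮 : Set (Set X)}
    {w : Set X → ℝ} {x y : X} {c W : ℝ} (h : CellChain 𝒮 w x y c) {d : X → X → ℝ}
    (hd0 : ∀ x, d x x = 0) (htri : ∀ x y z, d x z ≤ d x y + d y z)
    (hw : ∀ P ∈ 𝒮, 0 < w P ∧ w P ≤ W)
    (hdw : ∀ P ∈ 𝒮, ∀ x ∈ closure P, ∀ y ∈ closure P, d x y ≤ w P) :
    ∃ g : ℝ → X, g 0 = x ∧ g c = y ∧ (∀ t, 0 ≤ t → t ≤ c → d x (g t) ≤ t + W) ∧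
      ∀ s t, 0 ≤ s → s ≤ t → t ≤ c → d (g s) (g t) ≤ t - s + 2 * W := by
  induction h with
  | @single P x y hP hx hy =>
    obtain ⟨h0, hW⟩ := hw P hP
    have hxy := hdw P hP x hx y hy
    refine ⟨fun t => if t < w P then x else y, by simp [h0], by simp, ?_, ?_⟩
    · intro t ht _
      simp only
      split_ifs <;> linarith [hd0 x]
    · intro s t _ hst _
      simp only
      split_ifs <;> linarith [hd0 x, hd0 y]
  | @cons P x z y c hP hx hz hc ih =>
    obtain ⟨h0, hW⟩ := hw P hP
    have hxz := hdw P hP x hx z hz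
    have hc0 := hc.nonneg fun Q hQ => (hw Q hQ).1.le
    obtain ⟨g, hg0, hgc, hg1, hg2⟩ := ih
    have key : ∀ t, w P ≤ t → t ≤ w P + c → d x (g (t - w P)) ≤ w P + (t - w P + W) := by
      intro t ht htc
      linarith [htri x z (g (t - w P)), hg1 (t - w P) (by linarith) (by linarith)]
    refine ⟨fun t => if t < w P then x else g (t - w P), by simp [h0], ?_, ?_, ?_⟩
    · simp [hc0, hgc]
    · intro t ht htc
      simp only
      split_ifs with h1
      · linarith [hd0 x]
      · linarith [key t (not_lt.1 h1) htc]
    · intro s t hs hst htc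
      simp only
      split_ifs with h1 h2 h2
      · linarith [hd0 x]
      · linarith [key t (not_lt.1 h2) htc]
      · linarith
      · have := hg2 (s - w P) (t - w P) (by linarith) (by linarith) (by linarith)
        linarith

variable {X : Type*} [MetricSpace X] {𝒮 : ℕ → Set (Set X)} {w : ℕ → Set X → ℝ}

/-- The infimum of the costs of chains joining two points. -/
noncomputable def chainDist (𝒮 : ℕ → Set (Set X)) (w : ℕ → Set X → ℝ) (x y : X) : ℝ :=
  sInf {c | ∃ n, CellChain (𝒮 n) (w n) x y c}

namespace IsChainResolution

lemma chainDist_le (h : IsChainResolution 𝒮 w) {x y : X} {n : ℕ} {c : ℝ}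
    (hc : CellChain (𝒮 n) (w n) x y c) : chainDist 𝒮 w x y ≤ c :=
  csInf_le ⟨0, fun _ ⟨n, hn⟩ => hn.nonneg fun P hP => (h.weight_pos n P hP).le⟩ ⟨n, hc⟩

lemma le_chainDist (h : IsChainResolution 𝒮 w) {x y : X} {r : ℝ}
    (hr : ∀ n c, CellChain (𝒮 n) (w n) x y c → r ≤ c) : r ≤ chainDist 𝒮 w x y := by
  obtain ⟨c, hc⟩ := h.exists_chain x y
  exact le_csInf ⟨c, 0, hc⟩ fun c ⟨n, hn⟩ => hr n c hn

lemma exists_chain_lt (h : IsChainResolution 𝒮 w) (x y : X) {ε : ℝ} (hε : 0 < ε) (m : ℕ) :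
    ∃ n ≥ m, ∃ c < chainDist 𝒮 w x y + ε, CellChain (𝒮 n) (w n) x y c := by
  obtain ⟨c, hc⟩ := h.exists_chain x y
  obtain ⟨c, ⟨n, hn⟩, hlt⟩ := exists_lt_of_csInf_lt (s := {c | ∃ n, CellChain (𝒮 n) (w n) x y c})
    ⟨c, 0, hc⟩ (lt_add_of_pos_right (chainDist 𝒮 w x y) hε)
  obtain ⟨c', hc', h'⟩ := exists_cellChain_of_le h.link (le_max_left n m) hn
  exact ⟨max n m, le_max_right _ _, c', hc'.trans_lt hlt, h'⟩

lemma chainDist_self (h : IsChainResolution 𝒮 w) (x : X) : chainDist 𝒮 w x x = 0 := by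
  refine le_antisymm (le_of_forall_pos_le_add fun ε hε => ?_)
    (h.le_chainDist fun n c hc => hc.nonneg fun P hP => (h.weight_pos n P hP).le)
  obtain ⟨n, hn⟩ := exists_pow_lt_of_lt_one hε (show (1 / 2 : ℝ) < 1 by norm_num)
  obtain ⟨P, hP, hx⟩ := h.cover n x
  linarith [h.chainDist_le (CellChain.single hP hx hx), h.weight_le n P hP]

lemma chainDist_comm (h : IsChainResolution 𝒮 w) (x y : X) :
    chainDist 𝒮 w x y = chainDist 𝒮 w y x :=
  le_antisymm (h.le_chainDist fun _ _ hc => h.chainDist_le hc.symm)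
    (h.le_chainDist fun _ _ hc => h.chainDist_le hc.symm)

lemma chainDist_triangle (h : IsChainResolution 𝒮 w) (x y z : X) :
    chainDist 𝒮 w x z ≤ chainDist 𝒮 w x y + chainDist 𝒮 w y z := by
  refine le_of_forall_pos_le_add fun ε hε => ?_
  obtain ⟨n, -, c, hc, hxy⟩ := h.exists_chain_lt x y (half_pos hε) 0
  obtain ⟨m, hm, c', hc', hyz⟩ := h.exists_chain_lt y z (half_pos hε) n
  obtain ⟨c₂, hc₂, hxy'⟩ := exists_cellChain_of_le h.link hm hxy
  linarith [h.chainDist_le (hxy'.trans hyz)]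

lemma eq_of_chainDist_eq_zero (h : IsChainResolution 𝒮 w) {x y : X}
    (hxy : chainDist 𝒮 w x y = 0) : x = y := by
  by_contra hne
  obtain ⟨r, hr, hle⟩ := h.exists_le x y hne
  linarith [h.le_chainDist hle]

open Filter Topology in
lemma eventually_chainDist_le (h : IsChainResolution 𝒮 w) (x : X) (n : ℕ) :
    ∀ᶠ y in 𝓝 x, chainDist 𝒮 w y x ≤ (1 / 2) ^ n := by
  have hcl : IsClosed (⋃ P ∈ {P ∈ 𝒮 n | x ∉ closure P}, closure P) :=
    ((h.finite n).subset (sep_subset _ _)).isClosed_biUnion fun _ _ => isClosed_closure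
  have hx : x ∉ ⋃ P ∈ {P ∈ 𝒮 n | x ∉ closure P}, closure P := fun hx => by
    obtain ⟨P, hP, hxP⟩ := mem_iUnion₂.1 hx
    exact hP.2 hxP
  filter_upwards [hcl.isOpen_compl.mem_nhds hx] with y hy
  obtain ⟨P, hP, hyP⟩ := h.cover n y
  have hxP : x ∈ closure P := by
    by_contra hxP
    exact hy (mem_biUnion (show P ∈ {P ∈ 𝒮 n | x ∉ closure P} from ⟨hP, hxP⟩) hyP)
  exact (h.chainDist_le (CellChain.single hP hyP hxP)).trans (h.weight_le n P hP)

end IsChainResolution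

/-- A copy of a type, to be equipped with another metric. -/
structure Remetrized (X : Type*) where
  /-- The underlying point. -/
  val : X

/-- A chain resolution gives a metric. -/
noncomputable abbrev IsChainResolution.metricSpace (h : IsChainResolution 𝒮 w) :
    MetricSpace (Remetrized X) where
  dist a b := chainDist 𝒮 w a.val b.val
  dist_self a := h.chainDist_self a.val
  dist_comm a b := h.chainDist_comm a.val b.val
  dist_triangle a b c := h.chainDist_triangle a.val b.val c.val
  eq_of_dist_eq_zero {a b} hab := by
    cases a
    cases b
    congr
    exact h.eq_of_chainDist_eq_zero hab

theorem IsChainResolution.exists_lengthSpace {X : Type} [MetricSpace X] [CompactSpace X]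
    {𝒮 : ℕ → Set (Set X)} {w : ℕ → Set X → ℝ} (h : IsChainResolution 𝒮 w) :
    ∃ (Y : Type) (m : MetricSpace Y), letI := m;
      CompactSpace Y ∧ IsLengthSpace Y ∧ Nonempty (X ≃ₜ Y) := by
  refine ⟨Remetrized X, h.metricSpace, ?_⟩
  let := h.metricSpace
  have hdist : ∀ a b : Remetrized X, dist a b = chainDist 𝒮 w a.val b.val := fun _ _ => rfl
  let e : X ≃ Remetrized X := ⟨Remetrized.mk, Remetrized.val, fun _ => rfl, fun _ => rfl⟩
  have he : Continuous e := by
    refine continuous_iff_continuousAt.2 fun x => Metric.tendsto_nhds.2 fun ε hε => ?_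
    obtain ⟨n, hn⟩ := exists_pow_lt_of_lt_one hε (show (1 / 2 : ℝ) < 1 by norm_num)
    exact (h.eventually_chainDist_le x n).mono fun y hy => lt_of_le_of_lt hy hn
  let E : X ≃ₜ Remetrized X := he.homeoOfEquivCompactToT2
  have hcomp : CompactSpace (Remetrized X) := E.compactSpace
  refine ⟨hcomp, isLengthSpace_of_approx fun x y ε hε => ?_, ⟨E⟩⟩
  obtain ⟨m, hm⟩ := exists_pow_lt_of_lt_one (half_pos hε) (show (1 / 2 : ℝ) < 1 by norm_num)
  obtain ⟨n, hmn, c, hc, hchain⟩ := h.exists_chain_lt x.val y.val hε m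
  obtain ⟨g, hg0, hgc, -, hg⟩ := hchain.exists_almost_path h.chainDist_self h.chainDist_triangle
    (fun P hP => ⟨h.weight_pos n P hP, h.weight_le n P hP⟩)
    (fun P hP x hx y hy => h.chainDist_le (CellChain.single hP hx hy))
  have hnm : (1 / 2 : ℝ) ^ n ≤ (1 / 2) ^ m :=
    pow_le_pow_of_le_one (by norm_num) (by norm_num) hmn
  refine ⟨c, fun t => ⟨g t⟩, hchain.nonneg fun P hP => (h.weight_pos n P hP).le, hc.le,
    congrArg Remetrized.mk hg0, congrArg Remetrized.mk hgc, fun s t hs hst ht => ?_⟩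
  rw [hdist]
  linarith [hg s t hs hst ht]

end ChainMetric

section Lacunary

open scoped BoundedContinuousFunction

/-- The union of the intervals of length `3h/2` starting at the points `(2m + b)h`, `m` an
integer. -/
def band (h b : ℝ) : Set ℝ := {t | ∃ m : ℤ, (2 * m + b) * h < t ∧ t < (2 * m + b + 3 / 2) * h}

lemma isOpen_band (h b : ℝ) : IsOpen (band h b) := by
  simp only [band, ofPred_exists]
  exact isOpen_iUnion fun m => isOpen_Ioo

lemma abs_sub_le_of_isPreconnected_of_subset_band {h b : ℝ} (hh : 0 < h) {H : Set ℝ}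
    (hH : IsPreconnected H) (hsub : H ⊆ band h b) {x y : ℝ} (hx : x ∈ H) (hy : y ∈ H) :
    |x - y| ≤ 3 / 2 * h := by
  wlog hxy : x ≤ y generalizing x y
  · rw [abs_sub_comm]
    exact this hy hx (le_of_not_ge hxy)
  rw [abs_sub_comm, abs_of_nonneg (sub_nonneg.2 hxy)]
  obtain ⟨m, hm₁, hm₂⟩ := hsub hx
  by_contra! hlt
  obtain ⟨m', h₁, h₂⟩ := hsub (hH.Icc_subset hx hy
    (show (2 * m + b + 3 / 2) * h ∈ Icc x y from ⟨hm₂.le, by linarith⟩))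
  have h₃ := lt_of_mul_lt_mul_right h₁ hh.le
  have h₄ := lt_of_mul_lt_mul_right h₂ hh.le
  have h₅ : m < m' := by
    exact_mod_cast (show (m : ℝ) < m' by linarith)
  have h₆ : m' < m + 1 := by
    exact_mod_cast (show (m' : ℝ) < m + 1 by linarith)
  omega

lemma exists_mem_band {h : ℝ} (hh : 0 < h) (t : ℝ) : ∃ b : Fin 2, t ∈ band h (b : ℕ) := by
  have h₁ := Int.ceil_lt_add_one (t / h)
  have h₂ := Int.le_ceil (t / h)
  have key : ∀ s : ℝ, (s < t / h → s * h < t) ∧ (t / h < s → t < s * h) := fun s =>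
    ⟨(lt_div_iff₀ hh).1, (div_lt_iff₀ hh).1⟩
  obtain ⟨m, hm | hm⟩ := Int.even_or_odd' (⌈t / h⌉ - 1)
  · have hm' : (⌈t / h⌉ : ℝ) = 2 * m + 1 := by exact_mod_cast (by omega : ⌈t / h⌉ = 2 * m + 1)
    exact ⟨0, m, (key _).1 (by simp; linarith), (key _).2 (by simp; linarith)⟩
  · have hm' : (⌈t / h⌉ : ℝ) = 2 * m + 2 := by exact_mod_cast (by omega : ⌈t / h⌉ = 2 * m + 2)
    exact ⟨1, m, (key _).1 (by simp; linarith), (key _).2 (by simp; linarith)⟩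

/-- Subsets of the lacunary box `∏ [0, 16⁻ⁿ]` are thinly colored. -/
lemma thinlyColored_of_lacunary {Z : Set (ℕ →ᵇ ℝ)}
    (hZ : ∀ z ∈ Z, ∀ n, z n ∈ Icc (0 : ℝ) ((1 / 16) ^ n)) : ThinlyColored Z := by
  intro η hη
  obtain ⟨k, hk⟩ := exists_pow_lt_of_lt_one (show 0 < 2 / 3 * η by positivity)
    (show (1 / 8 : ℝ) < 1 by norm_num)
  set h : ℝ := (1 / 16) ^ k with hh
  have hpos : 0 < h := by positivity
  let O : (Fin k → Fin 2) → Set Z := fun c => {z | ∀ n : Fin k, z.1 n ∈ band h (c n : ℕ)}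
  have hcont : ∀ n : ℕ, Continuous fun z : Z => z.1 n := fun n =>
    (continuous_eval_const (F := ℕ →ᵇ ℝ) n).comp continuous_subtype_val
  refine ⟨Finset.univ.toList.map O, 3 / 2 * h, by positivity, ?_, ?_, fun z => ?_, ?_⟩
  · have h2 : (2 : ℝ) ^ k * h = (1 / 8) ^ k := by
      rw [hh, ← mul_pow]
      norm_num
    simp only [List.length_map, Finset.length_toList, Finset.card_univ, Fintype.card_pi,
      Fintype.card_fin, Finset.prod_const]
    push_cast
    linarith
  · simp only [List.mem_map, Finset.mem_toList, Finset.mem_univ, true_and, forall_exists_index,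
      forall_apply_eq_imp_iff]
    intro c
    simp only [O, ofPred_forall]
    exact isOpen_iInter_of_finite fun n => (isOpen_band _ _).preimage (hcont n)
  · choose c hc using fun n : Fin k => exists_mem_band hpos (z.1 n)
    exact ⟨O c, List.mem_map.2 ⟨c, by simp, rfl⟩, hc⟩
  · simp only [List.mem_map, Finset.mem_toList, Finset.mem_univ, true_and, forall_exists_index,
      forall_apply_eq_imp_iff]
    intro c H hHO hH x hx y hy
    refine (BoundedContinuousFunction.dist_le (by positivity)).2 fun n => ?_
    rw [Real.dist_eq]
    rcases lt_or_ge n k with hn | hn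
    · refine abs_sub_le_of_isPreconnected_of_subset_band hpos
        (hH.image _ (hcont n).continuousOn) (b := (c ⟨n, hn⟩ : ℕ)) ?_
        (mem_image_of_mem _ hx) (mem_image_of_mem _ hy)
      rintro _ ⟨z, hz, rfl⟩
      exact hHO hz ⟨n, hn⟩
    · have hle : (1 / 16 : ℝ) ^ n ≤ h := pow_le_pow_of_le_one (by norm_num) (by norm_num) hn
      have hx' := hZ x x.2 n
      have hy' := hZ y y.2 n
      rw [abs_le]
      constructor <;> linarith [hx'.1, hx'.2, hy'.1, hy'.2, hpos]

/-- A compact metric space embeds in the lacunary box. -/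
lemma exists_homeomorph_thinlyColored (X : Type) [MetricSpace X] [Nonempty X] [CompactSpace X] :
    ∃ Z : Set (ℕ →ᵇ ℝ), ThinlyColored Z ∧ Nonempty (X ≃ₜ Z) := by
  let u := TopologicalSpace.denseSeq X
  let f : X → ℕ → ℝ := fun x n => (1 / 16) ^ n * min 1 (dist x (u n))
  have hf : ∀ x n, f x n ∈ Icc (0 : ℝ) ((1 / 16) ^ n) := fun x n =>
    ⟨by positivity, mul_le_of_le_one_right (by positivity) (min_le_left _ _)⟩
  have hf1 : ∀ x n, f x n ∈ Icc (0 : ℝ) 1 := fun x n =>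
    ⟨(hf x n).1, (hf x n).2.trans (pow_le_one₀ (by norm_num) (by norm_num))⟩
  let φ : X → (ℕ →ᵇ ℝ) := fun x => BoundedContinuousFunction.ofNormedAddCommGroupDiscrete (f x) 1
    fun n => by
      rw [Real.norm_eq_abs, abs_of_nonneg (hf1 x n).1]
      exact (hf1 x n).2
  have hφ : ∀ x n, φ x n = f x n := fun _ _ => rfl
  have hcont : Continuous φ := by
    refine (LipschitzWith.of_dist_le_mul (K := 1) fun x y => ?_).continuous
    refine (BoundedContinuousFunction.dist_le (by positivity)).2 fun n => ?_
    rw [hφ, hφ, Real.dist_eq, ← mul_sub, abs_mul, abs_of_nonneg (by positivity)]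
    refine mul_le_mul (pow_le_one₀ (by norm_num) (by norm_num)) ?_ (abs_nonneg _) zero_le_one
    refine (abs_min_sub_min_le_max _ _ _ _).trans ?_
    rw [sub_self, abs_zero, max_eq_right (abs_nonneg _)]
    exact abs_dist_sub_le x y (u n)
  have hinj : Function.Injective φ := by
    intro x y hxy
    by_contra hne
    have hd : 0 < min 1 (dist x y) := lt_min one_pos (dist_pos.2 hne)
    obtain ⟨n, hn⟩ := (TopologicalSpace.denseRange_denseSeq X).exists_dist_lt x (half_pos hd)
    change dist x (u n) < _ at hn
    have hval : min 1 (dist x (u n)) = min 1 (dist y (u n)) :=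
      mul_left_cancel₀ (by positivity : ((1 / 16 : ℝ) ^ n) ≠ 0) (DFunLike.congr_fun hxy n)
    have h1 := min_le_left 1 (dist x y)
    have h2 := min_le_right 1 (dist x y)
    have htri := dist_triangle_right x y (u n)
    rw [min_eq_right (by linarith)] at hval
    rcases min_choice 1 (dist y (u n)) with h | h <;> rw [h] at hval <;> linarith
  refine ⟨range φ, thinlyColored_of_lacunary ?_,
    ⟨(hcont.isClosedEmbedding hinj).isEmbedding.toHomeomorph⟩⟩
  rintro _ ⟨x, rfl⟩ n
  exact hf x n

end Lacunary

/-- Every Peano space (nonempty compact, connected, locally connected metric space)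
is homeomorphic to a compact length space. -/
theorem peano_homeomorphic_compact_length_space
    (X : Type) [MetricSpace X] [Nonempty X] [CompactSpace X] [ConnectedSpace X]
    [LocallyConnectedSpace X] :
    ∃ (Y : Type) (m : MetricSpace Y), letI := m;
      CompactSpace Y ∧ IsLengthSpace Y ∧ Nonempty (X ≃ₜ Y) := by
  obtain ⟨Z, hZ, ⟨e⟩⟩ := exists_homeomorph_thinlyColored X
  have : CompactSpace Z := e.compactSpace
  have : ConnectedSpace Z := e.surjective.connectedSpace e.continuous
  have : LocallyConnectedSpace Z := e.symm.locallyConnectedSpace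
  obtain ⟨𝒮, w, h⟩ := exists_isChainResolution hZ
  obtain ⟨Y, m, hY, hlen, ⟨E⟩⟩ := h.exists_lengthSpace
  exact ⟨Y, m, hY, hlen, ⟨e.trans E⟩⟩
end

section
/- If X is a Peano space and (T_n) is a sequence of pairwise distinct maximal cyclic subsets of X, then diam(T_n) → 0. -/
open Metric Set Filter

/-- A Jordan curve: a subset homeomorphic to the circle. -/
def IsJordanCurve {X : Type} [TopologicalSpace X] (J : Set X) : Prop :=
  Nonempty (AddCircle (1 : ℝ) ≃ₜ J)

/-- A set is cyclicly connected if every pair of its points lies on a Jordan curve in it. -/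
def CyclicallyConnected {X : Type} [TopologicalSpace X] (C : Set X) : Prop :=
  ∀ x ∈ C, ∀ y ∈ C, ∃ J : Set X, J ⊆ C ∧ IsJordanCurve J ∧ x ∈ J ∧ y ∈ J

/-- A maximal cyclic subset: non-degenerate, cyclicly connected, and not a proper subset
of any cyclicly connected subset. -/
def MaximalCyclic {X : Type} [TopologicalSpace X] (T : Set X) : Prop :=
  ¬ T.Subsingleton ∧ CyclicallyConnected T ∧
    ∀ C : Set X, CyclicallyConnected C → T ⊆ C → C = T

/-- `A` is an arc from `a` to `b`; the one-point arc is allowed when `a = b`. -/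
def IsArcBetween {X : Type} [TopologicalSpace X] (A : Set X) (a b : X) : Prop :=
  ∃ (u v : ℝ) (f : ℝ → X), u ≤ v ∧ ContinuousOn f (Icc u v) ∧ InjOn f (Icc u v) ∧
    f u = a ∧ f v = b ∧ f '' Icc u v = A

section Arcs

variable {X : Type} [TopologicalSpace X] {A B F J : Set X} {a b c x : X}

theorem exists_continuousOn_concat {u v w : ℝ} (huv : u ≤ v) (hvw : v ≤ w) {f g : ℝ → X}
    (hf : ContinuousOn f (Icc u v)) (hg : ContinuousOn g (Icc v w)) (hfg : f v = g v) :
    ∃ h : ℝ → X, ContinuousOn h (Icc u w) ∧ EqOn h f (Icc u v) ∧ EqOn h g (Icc v w) := by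
  have h1 : EqOn (fun t => if t ≤ v then f t else g t) f (Icc u v) := fun t ht => by
    simp [ht.2]
  have h2 : EqOn (fun t => if t ≤ v then f t else g t) g (Icc v w) := fun t ht => by
    rcases ht.1.eq_or_lt with rfl | h
    · simpa using hfg
    · simp [not_le.2 h]
  refine ⟨fun t => if t ≤ v then f t else g t, ?_, h1, h2⟩
  rw [← Icc_union_Icc_eq_Icc huv hvw]
  exact (hf.congr h1).union_of_isClosed (hg.congr h2) isClosed_Icc isClosed_Icc

namespace IsArcBetween

theorem left_mem (h : IsArcBetween A a b) : a ∈ A := by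
  obtain ⟨u, v, f, huv, -, -, rfl, -, rfl⟩ := h
  exact mem_image_of_mem f ⟨le_rfl, huv⟩

theorem right_mem (h : IsArcBetween A a b) : b ∈ A := by
  obtain ⟨u, v, f, huv, -, -, -, rfl, rfl⟩ := h
  exact mem_image_of_mem f ⟨huv, le_rfl⟩

theorem isCompact (h : IsArcBetween A a b) : IsCompact A := by
  obtain ⟨u, v, f, -, hf, -, -, -, rfl⟩ := h
  exact isCompact_Icc.image_of_continuousOn hf

/-- The parametrization of an arc may be started at any real number. -/
theorem exists_param (h : IsArcBetween A a b) (u : ℝ) :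
    ∃ (v : ℝ) (f : ℝ → X), u ≤ v ∧ ContinuousOn f (Icc u v) ∧ InjOn f (Icc u v) ∧
      f u = a ∧ f v = b ∧ f '' Icc u v = A := by
  obtain ⟨s, t, f, hst, hf, hinj, rfl, rfl, rfl⟩ := h
  have himg : (fun r => r + (s - u)) '' Icc u (u + (t - s)) = Icc s t := by
    rw [image_add_const_Icc]; congr 1 <;> ring
  have hmaps : MapsTo (fun r => r + (s - u)) (Icc u (u + (t - s))) (Icc s t) := by
    rw [← himg]; exact mapsTo_image _ _
  refine ⟨u + (t - s), f ∘ fun r => r + (s - u), by linarith, ?_, ?_, ?_, ?_, ?_⟩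
  · exact hf.comp (by fun_prop) hmaps
  · exact hinj.comp (add_left_injective _).injOn hmaps
  · simp
  · simp only [Function.comp_apply]
    congr 1
    ring
  · rw [image_comp, himg]

protected theorem symm (h : IsArcBetween A a b) : IsArcBetween A b a := by
  obtain ⟨s, t, f, hst, hf, hinj, rfl, rfl, rfl⟩ := h
  have himg : Neg.neg '' Icc (-t) (-s) = Icc s t := by simp
  have hmaps : MapsTo Neg.neg (Icc (-t) (-s)) (Icc s t) := by
    rw [← himg]; exact mapsTo_image _ _
  refine ⟨-t, -s, f ∘ Neg.neg, by linarith, hf.comp (by fun_prop) hmaps,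
    hinj.comp neg_injective.injOn hmaps, by simp, by simp, ?_⟩
  rw [image_comp, himg]

protected theorem trans (hA : IsArcBetween A a b) (hB : IsArcBetween B b c)
    (hAB : A ∩ B ⊆ {b}) : IsArcBetween (A ∪ B) a c := by
  obtain ⟨u, v, f, huv, hf, hfi, rfl, rfl, rfl⟩ := hA
  obtain ⟨w, g, hvw, hg, hgi, hgv, rfl, rfl⟩ := hB.exists_param v
  obtain ⟨h, hh, h1, h2⟩ := exists_continuousOn_concat huv hvw hf hg hgv.symm
  have key : ∀ s ∈ Icc u v, ∀ t ∈ Icc v w, h s = h t → s = t := by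
    intro s hs t ht hst
    have e1 := h1 hs
    have e2 := h2 ht
    have hm : h s = f v := hAB ⟨e1 ▸ mem_image_of_mem f hs, by
      rw [hst, e2]; exact mem_image_of_mem g ht⟩
    have s1 : s = v := hfi hs ⟨huv, le_rfl⟩ (e1 ▸ hm)
    have s2 : t = v := hgi ht ⟨le_rfl, hvw⟩ (by rw [← e2, ← hst, hm, hgv])
    rw [s1, s2]
  refine ⟨u, w, h, huv.trans hvw, hh, ?_, h1 ⟨le_rfl, huv⟩, h2 ⟨hvw, le_rfl⟩, ?_⟩
  · rw [← Icc_union_Icc_eq_Icc huv hvw]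
    rintro s (hs | hs) t (ht | ht) hst
    · exact hfi hs ht (by rw [← h1 hs, ← h1 ht, hst])
    · exact key s hs t ht hst
    · exact (key t ht s hs hst.symm).symm
    · exact hgi hs ht (by rw [← h2 hs, ← h2 ht, hst])
  · rw [← Icc_union_Icc_eq_Icc huv hvw, image_union, h1.image_eq, h2.image_eq]

theorem exists_split (h : IsArcBetween A a b) (hx : x ∈ A) :
    ∃ P Q, IsArcBetween P a x ∧ IsArcBetween Q x b ∧ P ∪ Q = A ∧ P ∩ Q = {x} := by
  obtain ⟨u, v, f, huv, hf, hfi, rfl, rfl, rfl⟩ := h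
  obtain ⟨t, ht, rfl⟩ := hx
  have s1 : Icc u t ⊆ Icc u v := Icc_subset_Icc_right ht.2
  have s2 : Icc t v ⊆ Icc u v := Icc_subset_Icc_left ht.1
  refine ⟨f '' Icc u t, f '' Icc t v, ⟨u, t, f, ht.1, hf.mono s1, hfi.mono s1, rfl, rfl, rfl⟩,
    ⟨t, v, f, ht.2, hf.mono s2, hfi.mono s2, rfl, rfl, rfl⟩, ?_, ?_⟩
  · rw [← image_union, Icc_union_Icc_eq_Icc ht.1 ht.2]
  · rw [← hfi.image_inter s1 s2, Icc_inter_Icc_eq_singleton ht.1 ht.2, image_singleton]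

/-- The initial part of an arc up to the first point of a closed set. -/
theorem exists_first_hit (h : IsArcBetween A a b) (hF : IsClosed F) (hAF : (A ∩ F).Nonempty) :
    ∃ P q, IsArcBetween P a q ∧ P ⊆ A ∧ P ∩ F = {q} := by
  obtain ⟨u, v, f, huv, hf, hfi, rfl, rfl, rfl⟩ := h
  have hcl : IsCompact (Icc u v ∩ f ⁻¹' F) :=
    isCompact_Icc.of_isClosed_subset (hf.preimage_isClosed_of_isClosed isClosed_Icc hF)
      inter_subset_left
  obtain ⟨_, ⟨s, hs, rfl⟩, hsF⟩ := hAF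
  obtain ⟨t, ⟨ht, htF⟩, hmin⟩ := hcl.exists_isLeast ⟨s, hs, hsF⟩
  have s1 : Icc u t ⊆ Icc u v := Icc_subset_Icc_right ht.2
  refine ⟨f '' Icc u t, f t, ⟨u, t, f, ht.1, hf.mono s1, hfi.mono s1, rfl, rfl, rfl⟩,
    image_mono s1, ?_⟩
  ext z
  constructor
  · rintro ⟨⟨r, hr, rfl⟩, hrF⟩
    rw [le_antisymm hr.2 (hmin ⟨s1 hr, hrF⟩)]
    exact mem_singleton _
  · rintro rfl
    exact ⟨mem_image_of_mem f ⟨ht.1, le_rfl⟩, htF⟩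

end IsArcBetween

theorem IsJordanCurve.isCompact (h : IsJordanCurve J) : IsCompact J := by
  obtain ⟨φ⟩ := h
  rw [isCompact_iff_compactSpace]
  exact φ.compactSpace

theorem IsJordanCurve.exists_arcs (h : IsJordanCurve J) (ha : a ∈ J) (hb : b ∈ J) (hab : a ≠ b) :
    ∃ P Q, IsArcBetween P a b ∧ IsArcBetween Q a b ∧ P ∪ Q = J ∧ P ∩ Q = {a, b} := by
  obtain ⟨φ⟩ := h
  set ψ : ℝ → X := fun t => φ ((t : AddCircle (1 : ℝ)) + φ.symm ⟨a, ha⟩) with hψ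
  have hψc : Continuous ψ := by
    have : Continuous fun t : ℝ => (t : AddCircle (1 : ℝ)) := AddCircle.continuous_mk' 1
    fun_prop
  have hψeq : ∀ s t : ℝ, ψ s = ψ t ↔ (s : AddCircle (1 : ℝ)) = t := fun s t => by
    simp [hψ, Subtype.coe_inj]
  have hψ0 : ψ 0 = a := by simp [hψ]
  have hψ1 : ψ 1 = a := by
    rw [← hψ0, hψeq]; simp [AddCircle.coe_period]
  have hinj0 : InjOn ψ (Ico 0 1) := fun s hs t ht hst =>
    (AddCircle.coe_eq_coe_iff_of_mem_Ico (p := (1 : ℝ)) (a := 0) (by simpa using hs)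
      (by simpa using ht)).1 ((hψeq s t).1 hst)
  have hinj1 : InjOn ψ (Ioc 0 1) := fun s hs t ht hst =>
    (AddCircle.coe_eq_coe_iff_of_mem_Ioc (p := (1 : ℝ)) (a := 0) (by simpa using hs)
      (by simpa using ht)).1 ((hψeq s t).1 hst)
  have hsurj : ∀ z ∈ J, ∃ t ∈ Ico (0 : ℝ) 1, ψ t = z := by
    intro z hz
    obtain ⟨t, ht, hte⟩ := AddCircle.coe_image_Ico_eq (1 : ℝ) 0 ▸
      mem_univ (φ.symm ⟨z, hz⟩ - φ.symm ⟨a, ha⟩)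
    refine ⟨t, by simpa using ht, ?_⟩
    simp [hψ, hte]
  have hmem : ∀ t, ψ t ∈ J := fun t => Subtype.coe_prop _
  obtain ⟨t, ht, rfl⟩ := hsurj b hb
  have ht0 : 0 < t := ht.1.lt_of_ne fun h => hab (by rw [← h, hψ0])
  refine ⟨ψ '' Icc 0 t, ψ '' Icc t 1, ⟨0, t, ψ, ht.1, hψc.continuousOn,
    hinj0.mono (Icc_subset_Ico_right ht.2), hψ0, rfl, rfl⟩,
    IsArcBetween.symm ⟨t, 1, ψ, ht.2.le, hψc.continuousOn,
    hinj1.mono (Icc_subset_Ioc_left ht0), rfl, hψ1, rfl⟩, ?_, ?_⟩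
  · rw [← image_union, Icc_union_Icc_eq_Icc ht.1 ht.2.le]
    refine Subset.antisymm (image_subset_iff.2 fun s _ => hmem s) fun z hz => ?_
    obtain ⟨s, hs, rfl⟩ := hsurj z hz
    exact mem_image_of_mem ψ ⟨hs.1, hs.2.le⟩
  · ext z
    constructor
    · rintro ⟨⟨s, hs, rfl⟩, r, hr, hrs⟩
      rcases hr.2.eq_or_lt with rfl | hr1
      · left; rw [← hrs, hψ1]
      · have : r = s := hinj0 ⟨ht.1.trans hr.1, hr1⟩ ⟨hs.1, hs.2.trans_lt ht.2⟩ hrs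
        right
        rw [mem_singleton_iff, le_antisymm hs.2 (this ▸ hr.1)]
    · rintro (rfl | rfl)
      · exact ⟨⟨0, ⟨le_rfl, ht.1⟩, hψ0⟩, ⟨1, ⟨ht.2.le, le_rfl⟩, hψ1⟩⟩
      · exact ⟨⟨t, ⟨ht.1, le_rfl⟩, rfl⟩, ⟨t, ⟨le_rfl, ht.2.le⟩, rfl⟩⟩

theorem IsArcBetween.isJordanCurve_union [T2Space X] (hA : IsArcBetween A a b)
    (hB : IsArcBetween B a b) (hab : a ≠ b) (hAB : A ∩ B ⊆ {a, b}) :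
    IsJordanCurve (A ∪ B) := by
  obtain ⟨v, f, huv, hf, hfi, rfl, rfl, rfl⟩ := hA.exists_param 0
  obtain ⟨w, g, hvw, hg, hgi, hgv, hgw, rfl⟩ := hB.symm.exists_param v
  obtain ⟨h, hh, h1, h2⟩ := exists_continuousOn_concat huv hvw hf hg hgv.symm
  have hv : 0 < v := huv.lt_of_ne fun e => hab (by rw [e])
  have hw : 0 < w := hv.trans_le hvw
  have h0 : h 0 = f 0 := h1 ⟨le_rfl, huv⟩
  have hw0 : h w = f 0 := by rw [h2 ⟨hvw, le_rfl⟩, hgw]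
  have key : ∀ s ∈ Icc 0 v, ∀ t ∈ Ico v w, h s = h t → s = t := by
    intro s hs t ht hst
    have ht' := Ico_subset_Icc_self ht
    have e1 := h1 hs
    have e2 := h2 ht'
    have hm : h s = f 0 ∨ h s = f v := hAB ⟨e1 ▸ mem_image_of_mem f hs, by
      rw [hst, e2]; exact mem_image_of_mem g ht'⟩
    rcases hm with hm | hm
    · exact absurd (hgi ht' ⟨hvw, le_rfl⟩ (by rw [← e2, ← hst, hm, hgw])) ht.2.ne
    · have s1 : s = v := hfi hs ⟨huv, le_rfl⟩ (e1 ▸ hm)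
      have s2 : t = v := hgi ht' ⟨le_rfl, hvw⟩ (by rw [← e2, ← hst, hm, hgv])
      rw [s1, s2]
  have hinj : InjOn h (Ico 0 w) := by
    rw [← Ico_union_Ico_eq_Ico huv hvw]
    rintro s (hs | hs) t (ht | ht) hst
    · have hs := Ico_subset_Icc_self hs
      have ht := Ico_subset_Icc_self ht
      exact hfi hs ht (by rw [← h1 hs, ← h1 ht, hst])
    · exact key s (Ico_subset_Icc_self hs) t ht hst
    · exact (key t (Ico_subset_Icc_self ht) s hs hst.symm).symm
    · have hs := Ico_subset_Icc_self hs
      have ht := Ico_subset_Icc_self ht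
      exact hgi hs ht (by rw [← h2 hs, ← h2 ht, hst])
  have himg : h '' Icc 0 w = f '' Icc 0 v ∪ g '' Icc v w := by
    rw [← Icc_union_Icc_eq_Icc huv hvw, image_union, h1.image_eq, h2.image_eq]
  set k : ℝ → X := fun t => h (w * t) with hk
  have hkmem : ∀ t ∈ Ico (0 : ℝ) 1, w * t ∈ Ico 0 w := fun t ht =>
    ⟨mul_nonneg hw.le ht.1, by nlinarith [ht.2]⟩
  have hkc : ContinuousOn k (Icc 0 (0 + 1)) :=
    hh.comp (by fun_prop) fun t ht => ⟨mul_nonneg hw.le ht.1, by nlinarith [ht.2]⟩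
  have hF := AddCircle.liftIco_continuous (p := (1 : ℝ)) (a := 0) (f := k)
    (by simp [hk, h0, hw0]) hkc
  have hlift : ∀ t ∈ Ico (0 : ℝ) 1, AddCircle.liftIco 1 0 k (t : AddCircle (1 : ℝ)) = k t :=
    fun t ht => AddCircle.liftIco_coe_apply (by simpa using ht)
  have hrep : ∀ z : AddCircle (1 : ℝ), ∃ t ∈ Ico (0 : ℝ) 1, (t : AddCircle (1 : ℝ)) = z := by
    intro z
    obtain ⟨t, ht, hte⟩ := AddCircle.coe_image_Ico_eq (1 : ℝ) 0 ▸ mem_univ z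
    exact ⟨t, by simpa using ht, hte⟩
  have hFi : Function.Injective (AddCircle.liftIco 1 0 k) := by
    intro y z hyz
    obtain ⟨s, hs, rfl⟩ := hrep y
    obtain ⟨t, ht, rfl⟩ := hrep z
    rw [hlift s hs, hlift t ht] at hyz
    rw [mul_left_cancel₀ hw.ne' (hinj (hkmem s hs) (hkmem t ht) hyz)]
  have hrange : range (AddCircle.liftIco 1 0 k) = f '' Icc 0 v ∪ g '' Icc v w := by
    rw [← himg]
    ext z
    constructor
    · rintro ⟨y, rfl⟩
      obtain ⟨s, hs, rfl⟩ := hrep y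
      rw [hlift s hs]
      exact mem_image_of_mem h (Ico_subset_Icc_self (hkmem s hs))
    · rintro ⟨s, hs, rfl⟩
      rcases hs.2.eq_or_lt with rfl | hsw
      · refine ⟨((0 : ℝ) : AddCircle (1 : ℝ)), ?_⟩
        rw [hlift 0 ⟨le_rfl, one_pos⟩, hw0]
        simp [hk, h0]
      · refine ⟨((s / w : ℝ) : AddCircle (1 : ℝ)), ?_⟩
        rw [hlift _ ⟨div_nonneg hs.1 hw.le, (div_lt_one hw).2 hsw⟩]
        simp [hk, mul_div_cancel₀ s hw.ne']
  rw [← hrange]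
  exact ⟨(hF.isClosedEmbedding hFi).isEmbedding.toHomeomorph⟩

end Arcs

section Cyclic

variable {X : Type} [TopologicalSpace X] {A C C₁ C₂ E F J : Set X} {a b p q x y : X}

theorem IsJordanCurve.cyclicallyConnected (h : IsJordanCurve J) : CyclicallyConnected J :=
  fun _ hx _ hy => ⟨J, Subset.rfl, h, hx, hy⟩

theorem CyclicallyConnected.exists_arc_hit_ne (hC : CyclicallyConnected C) (hF : IsClosed F)
    (hy : y ∈ C) (hyF : y ∉ F) (hq : q ∈ C) (hqF : q ∈ F) (hqp : q ≠ p) :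
    ∃ P e, IsArcBetween P y e ∧ P ⊆ C ∧ P ∩ F = {e} ∧ e ≠ p := by
  obtain ⟨J, hJC, hJ, hyJ, hqJ⟩ := hC y hy q hq
  obtain ⟨P, Q, hP, hQ, hPQ, hi⟩ := hJ.exists_arcs hyJ hqJ (by rintro rfl; exact hyF hqF)
  obtain ⟨P', e, hP', hPP', hPe⟩ := hP.exists_first_hit hF ⟨q, hP.right_mem, hqF⟩
  obtain ⟨Q', e', hQ', hQQ', hQe⟩ := hQ.exists_first_hit hF ⟨q, hQ.right_mem, hqF⟩
  have hPC : P ⊆ C := (subset_union_left.trans hPQ.subset).trans hJC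
  have hQC : Q ⊆ C := (subset_union_right.trans hPQ.subset).trans hJC
  by_cases he : e = p
  · refine ⟨Q', e', hQ', hQQ'.trans hQC, hQe, ?_⟩
    rintro rfl
    have h1 : e ∈ P ∩ Q := ⟨hPP' hP'.right_mem, he ▸ hQQ' hQ'.right_mem⟩
    have h2 : e ∈ F := (hPe.symm.subset rfl).2
    rcases hi.subset h1 with rfl | rfl
    · exact hyF h2
    · exact hqp he
  · exact ⟨P', e, hP', hPP'.trans hPC, hPe, he⟩

/-- The part of an arc between two closed sets which it meets. -/
theorem IsArcBetween.exists_bridge {F G : Set X} (hA : IsArcBetween A a b) (hF : IsClosed F)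
    (hG : IsClosed G) (ha : a ∈ F) (hb : b ∈ G) :
    ∃ P p q, IsArcBetween P p q ∧ P ⊆ A ∧ P ∩ F = {p} ∧ P ∩ G = {q} := by
  obtain ⟨Q, p, hQ, hQA, hQF⟩ := hA.symm.exists_first_hit hF ⟨a, hA.left_mem, ha⟩
  obtain ⟨P, q, hP, hPQ, hPG⟩ := hQ.symm.exists_first_hit hG ⟨b, hQ.left_mem, hb⟩
  refine ⟨P, p, q, hP, hPQ.trans hQA, Subset.antisymm ?_ ?_, hPG⟩
  · exact (inter_subset_inter_left F hPQ).trans hQF.subset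
  · rintro _ rfl
    exact ⟨hP.left_mem, (hQF.symm.subset rfl).2⟩

variable [T2Space X]

/-- A point of a cyclicly connected set outside a closed set which contains two points of it lies
on an arc that meets the closed set exactly in its two distinct end points. -/
theorem CyclicallyConnected.exists_arc_through (hC : CyclicallyConnected C) (hF : IsClosed F)
    (hy : y ∈ C) (hyF : y ∉ F) (hp : p ∈ C) (hpF : p ∈ F) (hq : q ∈ C) (hqF : q ∈ F)
    (hpq : p ≠ q) :
    ∃ A a b, IsArcBetween A a b ∧ a ≠ b ∧ A ⊆ C ∧ y ∈ A ∧ A ∩ F = {a, b} := by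
  obtain ⟨J, hJC, hJ, hyJ, hpJ⟩ := hC y hy p hp
  obtain ⟨P₀, Q₀, hP₀, hQ₀, hPQ₀, hi₀⟩ := hJ.exists_arcs hyJ hpJ (by rintro rfl; exact hyF hpF)
  obtain ⟨P, e, hP, hPP₀, hPe⟩ := hP₀.exists_first_hit hF ⟨p, hP₀.right_mem, hpF⟩
  obtain ⟨Q, e', hQ, hQQ₀, hQe⟩ := hQ₀.exists_first_hit hF ⟨p, hQ₀.right_mem, hpF⟩
  have hPC : P ⊆ C := hPP₀.trans ((subset_union_left.trans hPQ₀.subset).trans hJC)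
  have hQC : Q ⊆ C := hQQ₀.trans ((subset_union_right.trans hPQ₀.subset).trans hJC)
  have hi : P ∩ Q ⊆ {y, p} := (inter_subset_inter hPP₀ hQQ₀).trans hi₀.subset
  have heF : e ∈ F := (hPe.symm.subset rfl).2
  by_cases hee : e = e'
  · subst hee
    obtain rfl : e = p := (hi ⟨hP.right_mem, hQ.right_mem⟩).resolve_left
      (by rintro rfl; exact hyF heF)
    clear hi₀ hPQ₀ hP₀ hQ₀ hPP₀ hQQ₀
    obtain ⟨R₀, f, hR₀, hR₀C, hR₀F, hfe⟩ := hC.exists_arc_hit_ne hF hy hyF hq hqF hpq.symm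
    obtain ⟨R, z, hR, hRR₀, hRz⟩ := hR₀.symm.exists_first_hit
      (hP.isCompact.isClosed.union hQ.isCompact.isClosed) ⟨y, hR₀.left_mem, .inl hP.left_mem⟩
    have hzR : z ∈ R := hR.right_mem
    have hRF : ∀ w ∈ R, w ∈ F → w = f := fun w hw hwF => hR₀F.subset ⟨hRR₀ hw, hwF⟩
    have hfF : f ∈ F := (hR₀F.symm.subset rfl).2
    have hze : z ≠ e := by
      rintro rfl
      exact hfe (hRF _ hzR heF).symm
    have hRC : R ⊆ C := hRR₀.trans hR₀C
    -- the two arcs from `y` play symmetric roles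
    have main : ∀ P Q : Set X, IsArcBetween P y e → IsArcBetween Q y e → P ⊆ C → Q ⊆ C →
        P ∩ F = {e} → Q ∩ F = {e} → P ∩ Q ⊆ {y, e} → R ∩ (P ∪ Q) = {z} → z ∈ P →
        ∃ A a b, IsArcBetween A a b ∧ a ≠ b ∧ A ⊆ C ∧ y ∈ A ∧ A ∩ F = {a, b} := by
      intro P Q hP hQ hPC hQC hPe hQe hi hRz hzP
      obtain ⟨S, S', hS, hS', hSS, hSi⟩ := hP.exists_split hzP
      have hSP : S ⊆ P := subset_union_left.trans hSS.subset
      have heS : e ∉ S := fun h => hze (hSi.subset ⟨h, hS'.right_mem⟩).symm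
      have hSQ : S ∩ Q ⊆ {y} := fun w hw =>
        (hi ⟨hSP hw.1, hw.2⟩).resolve_right (by rintro rfl; exact heS hw.1)
      have h1 := hS.symm.trans hQ hSQ
      have h2 := hR.trans h1 ((inter_subset_inter_right R (union_subset_union_left Q hSP)).trans
        hRz.subset)
      refine ⟨_, f, e, h2, hfe, union_subset hRC (union_subset (hSP.trans hPC) hQC),
        .inr (.inr hQ.left_mem), ?_⟩
      ext w
      constructor
      · rintro ⟨hw | hw | hw, hwF⟩
        · exact .inl (hRF w hw hwF)
        · exact .inr (hPe.subset ⟨hSP hw, hwF⟩)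
        · exact .inr (hQe.subset ⟨hw, hwF⟩)
      · rintro (rfl | rfl)
        · exact ⟨.inl hR.left_mem, hfF⟩
        · exact ⟨.inr (.inr hQ.right_mem), heF⟩
    rcases (hRz.symm.subset rfl).2 with hz | hz
    · exact main P Q hP hQ hPC hQC hPe hQe hi hRz hz
    · exact main Q P hQ hP hQC hPC hQe hPe (inter_comm P Q ▸ hi) (union_comm P Q ▸ hRz) hz
  · have hi' : P ∩ Q ⊆ {y} := by
      intro w hw
      refine (hi hw).resolve_right ?_
      rintro rfl
      exact hee ((hPe.subset ⟨hw.1, hpF⟩).symm.trans (hQe.subset ⟨hw.2, hpF⟩))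
    refine ⟨P ∪ Q, e, e', hP.symm.trans hQ hi', hee, union_subset hPC hQC, .inl hP.left_mem, ?_⟩
    rw [union_inter_distrib_right, hPe, hQe]
    rfl

theorem CyclicallyConnected.exists_arc_between_through (hC : CyclicallyConnected C)
    (ha : a ∈ C) (hb : b ∈ C) (hab : a ≠ b) (hx : x ∈ C) :
    ∃ A, IsArcBetween A a b ∧ A ⊆ C ∧ x ∈ A := by
  by_cases hxab : x ∈ ({a, b} : Set X)
  · obtain ⟨J, hJC, hJ, haJ, hbJ⟩ := hC a ha b hb
    obtain ⟨P, Q, hP, -, hPQ, -⟩ := hJ.exists_arcs haJ hbJ hab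
    refine ⟨P, hP, (subset_union_left.trans hPQ.subset).trans hJC, ?_⟩
    rcases hxab with rfl | rfl
    exacts [hP.left_mem, hP.right_mem]
  · obtain ⟨A, a', b', hA, hab', hAC, hxA, hi⟩ := hC.exists_arc_through
      (toFinite {a, b}).isClosed hx hxab ha (.inl rfl) hb (.inr rfl) hab
    have h1 : a' = a ∨ a' = b := (hi.symm.subset (.inl rfl)).2
    have h2 : b' = a ∨ b' = b := (hi.symm.subset (.inr rfl)).2
    rcases h1 with rfl | rfl <;> rcases h2 with rfl | rfl
    · exact absurd rfl hab'
    · exact ⟨A, hA, hAC, hxA⟩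
    · exact ⟨A, hA.symm, hAC, hxA⟩
    · exact (hab' rfl).elim

/-- Attaching an arc at two distinct points preserves cyclic connectedness. -/
theorem CyclicallyConnected.union_arc (hC : CyclicallyConnected C) (hE : IsArcBetween E a b)
    (hab : a ≠ b) (hEC : E ∩ C = {a, b}) : CyclicallyConnected (C ∪ E) := by
  have ha : a ∈ C := (hEC.symm.subset (.inl rfl)).2
  have hb : b ∈ C := (hEC.symm.subset (.inr rfl)).2
  have key : ∀ x ∈ C, ∃ J ⊆ C ∪ E, IsJordanCurve J ∧ x ∈ J ∧ E ⊆ J := by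
    intro x hx
    obtain ⟨D, hD, hDC, hxD⟩ := hC.exists_arc_between_through ha hb hab hx
    refine ⟨D ∪ E, union_subset_union_left E hDC, hD.isJordanCurve_union hE hab ?_, .inl hxD,
      subset_union_right⟩
    exact fun w hw => hEC.subset ⟨hw.2, hDC hw.1⟩
  rintro x (hx | hx) y (hy | hy)
  · obtain ⟨J, hJC, hJ⟩ := hC x hx y hy
    exact ⟨J, hJC.trans subset_union_left, hJ⟩
  · obtain ⟨J, hJC, hJ, hxJ, hEJ⟩ := key x hx
    exact ⟨J, hJC, hJ, hxJ, hEJ hy⟩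
  · obtain ⟨J, hJC, hJ, hyJ, hEJ⟩ := key y hy
    exact ⟨J, hJC, hJ, hEJ hx, hyJ⟩
  · obtain ⟨J, hJC, hJ, -, hEJ⟩ := key a ha
    exact ⟨J, hJC, hJ, hEJ hx, hEJ hy⟩

/-- The union of two cyclicly connected sets with two common points is cyclicly connected. -/
theorem CyclicallyConnected.union (h₁ : CyclicallyConnected C₁) (h₂ : CyclicallyConnected C₂)
    (hp : p ∈ C₁ ∩ C₂) (hq : q ∈ C₁ ∩ C₂) (hpq : p ≠ q) : CyclicallyConnected (C₁ ∪ C₂) := by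
  have key : ∀ x ∈ C₁, ∀ y ∈ C₂, ∃ J ⊆ C₁ ∪ C₂, IsJordanCurve J ∧ x ∈ J ∧ y ∈ J := by
    intro x hx y hy
    obtain ⟨F, hFC, hFcl, hF, hpF, hqF, hxF⟩ : ∃ F ⊆ C₁, IsClosed F ∧ CyclicallyConnected F ∧
        p ∈ F ∧ q ∈ F ∧ x ∈ F := by
      obtain ⟨J, hJC, hJ, hpJ, hqJ⟩ := h₁ p hp.1 q hq.1
      by_cases hxJ : x ∈ J
      · exact ⟨J, hJC, hJ.isCompact.isClosed, hJ.cyclicallyConnected, hpJ, hqJ, hxJ⟩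
      · obtain ⟨A, a, b, hA, hab, hAC, hxA, hi⟩ := h₁.exists_arc_through hJ.isCompact.isClosed
          hx hxJ hp.1 hpJ hq.1 hqJ hpq
        exact ⟨J ∪ A, union_subset hJC hAC, hJ.isCompact.isClosed.union hA.isCompact.isClosed,
          hJ.cyclicallyConnected.union_arc hA hab hi, .inl hpJ, .inl hqJ, .inr hxA⟩
    by_cases hyF : y ∈ F
    · obtain ⟨J, hJF, hJ⟩ := hF x hxF y hyF
      exact ⟨J, (hJF.trans hFC).trans subset_union_left, hJ⟩
    · obtain ⟨A, a, b, hA, hab, hAC, hyA, hi⟩ := h₂.exists_arc_through hFcl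
        hy hyF hp.2 hpF hq.2 hqF hpq
      obtain ⟨J, hJF, hJ⟩ := hF.union_arc hA hab hi x (.inl hxF) y (.inr hyA)
      exact ⟨J, hJF.trans (union_subset_union hFC hAC), hJ⟩
  rintro x (hx | hx) y (hy | hy)
  · obtain ⟨J, hJC, hJ⟩ := h₁ x hx y hy
    exact ⟨J, hJC.trans subset_union_left, hJ⟩
  · exact key x hx y hy
  · obtain ⟨J, hJC, hJ, hyJ, hxJ⟩ := key y hy x hx
    exact ⟨J, hJC, hJ, hxJ, hyJ⟩
  · obtain ⟨J, hJC, hJ⟩ := h₂ x hx y hy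
    exact ⟨J, hJC.trans subset_union_right, hJ⟩

theorem MaximalCyclic.eq_of_two_common {S T : Set X} (hS : MaximalCyclic S) (hT : MaximalCyclic T)
    (hp : p ∈ S ∩ T) (hq : q ∈ S ∩ T) (hpq : p ≠ q) : S = T := by
  have h := hS.2.1.union hT.2.1 hp hq hpq
  rw [← hS.2.2 _ h subset_union_left, hT.2.2 _ h subset_union_right]

/-- Two maximal cyclic sets which are joined by two disjoint arcs coincide. -/
theorem MaximalCyclic.eq_of_disjoint_arcs {S T B : Set X} {a' b' : X} (hS : MaximalCyclic S)
    (hT : MaximalCyclic T) (hA : IsArcBetween A a a') (hB : IsArcBetween B b b')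
    (hAB : Disjoint A B) (ha : a ∈ S) (hb : b ∈ S) (ha' : a' ∈ T) (hb' : b' ∈ T) : S = T := by
  have hne : ∀ {u v}, u ∈ A → v ∈ B → u ≠ v := fun hu hv => hAB.ne_of_mem hu hv
  obtain ⟨J, hJS, hJ, haJ, hbJ⟩ := hS.2.1 a ha b hb
  obtain ⟨K, hKT, hK, haK, hbK⟩ := hT.2.1 a' ha' b' hb'
  by_contra hST
  have hJK : ∀ u ∈ J ∩ K, ∀ v ∈ J ∩ K, u = v := fun u hu v hv => by
    by_contra huv
    exact hST (hS.eq_of_two_common hT ⟨hJS hu.1, hKT hu.2⟩ ⟨hJS hv.1, hKT hv.2⟩ huv)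
  obtain ⟨P, p, p', hP, hPA, hPJ, hPK⟩ :=
    hA.exists_bridge hJ.isCompact.isClosed hK.isCompact.isClosed haJ haK
  obtain ⟨Q, q, q', hQ, hQB, hQJ, hQK⟩ :=
    hB.exists_bridge hJ.isCompact.isClosed hK.isCompact.isClosed hbJ hbK
  have hpJ : p ∈ J := (hPJ.symm.subset rfl).2
  have hqJ : q ∈ J := (hQJ.symm.subset rfl).2
  have hpK : p' ∈ K := (hPK.symm.subset rfl).2
  have hqK : q' ∈ K := (hQK.symm.subset rfl).2
  have hpq : p ≠ q := hne (hPA hP.left_mem) (hQB hQ.left_mem)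
  have hpq' : p' ≠ q' := hne (hPA hP.right_mem) (hQB hQ.right_mem)
  obtain ⟨D, hD, hDK, hDJ⟩ : ∃ D, IsArcBetween D p' q' ∧ D ⊆ K ∧ D ∩ J ⊆ {p', q'} := by
    obtain ⟨D₁, D₂, h₁, h₂, hD, hi⟩ := hK.exists_arcs hpK hqK hpq'
    by_cases h : D₁ ∩ J ⊆ {p', q'}
    · exact ⟨D₁, h₁, subset_union_left.trans hD.subset, h⟩
    · obtain ⟨u, hu, hun⟩ := not_subset.1 h
      refine ⟨D₂, h₂, subset_union_right.trans hD.subset, fun v hv => ?_⟩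
      have huv : u = v := hJK u ⟨hu.2, hD.subset (.inl hu.1)⟩ v ⟨hv.2, hD.subset (.inr hv.1)⟩
      exact absurd (hi.subset ⟨hu.1, huv ▸ hv.1⟩) hun
  have hDQ : D ∩ Q ⊆ {q'} := fun w hw => hQK.subset ⟨hw.2, hDK hw.1⟩
  have hPDQ : P ∩ (D ∪ Q) ⊆ {p'} := by
    rintro w ⟨hwP, hw | hw⟩
    · exact hPK.subset ⟨hwP, hDK hw⟩
    · exact absurd rfl (hne (hPA hwP) (hQB hw))
  have hE : IsArcBetween (P ∪ (D ∪ Q)) p q := hP.trans (hD.trans hQ.symm hDQ) hPDQ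
  have hEJ : (P ∪ (D ∪ Q)) ∩ J = {p, q} := by
    ext w
    constructor
    · rintro ⟨hw | hw | hw, hwJ⟩
      · exact .inl (hPJ.subset ⟨hw, hwJ⟩)
      · rcases hDJ ⟨hw, hwJ⟩ with rfl | rfl
        · exact .inl (hPJ.subset ⟨hP.right_mem, hwJ⟩)
        · exact .inr (hQJ.subset ⟨hQ.right_mem, hwJ⟩)
      · exact .inr (hQJ.subset ⟨hw, hwJ⟩)
    · rintro (rfl | rfl)
      · exact ⟨.inl hP.left_mem, hpJ⟩
      · exact ⟨.inr (.inr hQ.left_mem), hqJ⟩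
  have hG := hS.2.1.union (hJ.cyclicallyConnected.union_arc hE hpq hEJ)
    (p := a) (q := b) ⟨ha, .inl haJ⟩ ⟨hb, .inl hbJ⟩ (hne hA.left_mem hB.left_mem)
  have hSG := hS.2.2 _ hG subset_union_left
  have hES : P ∪ (D ∪ Q) ⊆ S := by
    rw [← hSG]
    exact subset_union_right.trans subset_union_right
  exact hST (hS.eq_of_two_common hT ⟨hES (.inl hP.right_mem), hKT hpK⟩
    ⟨hES (.inr (.inr hQ.right_mem)), hKT hqK⟩ hpq')

end Cyclic

section PathToArc

variable {X : Type}

/-- Every path can be restricted to a closed set of times on which it takes the same value at the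
two ends of each gap, and on which no other coincidences occur. -/
theorem exists_closed_set_of_times [TopologicalSpace X] [T2Space X] {f : ℝ → X}
    (hf : Continuous f) :
    ∃ K : Set ℝ, IsClosed K ∧ K ⊆ Icc 0 1 ∧ 0 ∈ K ∧ 1 ∈ K ∧
      ∀ s ∈ K, ∀ u ∈ K, s < u → (f s = f u ↔ ∀ k ∈ K, k ≤ s ∨ u ≤ k) := by
  let 𝒮 : Set (Set ℝ) := {K | IsClosed K ∧ K ⊆ Icc 0 1 ∧ 0 ∈ K ∧ 1 ∈ K ∧
    ∀ s ∈ K, ∀ u ∈ K, s < u → (∀ k ∈ K, k ≤ s ∨ u ≤ k) → f s = f u}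
  obtain ⟨K, ⟨hK, hKI, hK0, hK1, hgap⟩, hmin⟩ : ∃ K, Minimal (· ∈ 𝒮) K := by
    refine zorn_superset 𝒮 fun c hc hchain => ?_
    rcases c.eq_empty_or_nonempty with rfl | hne
    · refine ⟨Icc 0 1, ⟨isClosed_Icc, Subset.rfl, by simp, by simp, fun s hs u hu hsu h => ?_⟩,
        by simp⟩
      rcases h ((s + u) / 2) ⟨by linarith [hs.1, hu.1], by linarith [hs.2, hu.2]⟩ with h | h <;>
        linarith
    · refine ⟨⋂₀ c, ⟨isClosed_sInter fun K hK => (hc hK).1,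
        (sInter_subset_of_mem hne.some_mem).trans (hc hne.some_mem).2.1,
        fun K hK => (hc hK).2.2.1, fun K hK => (hc hK).2.2.2.1, fun s hs u hu hsu h => ?_⟩,
        fun K hK => sInter_subset_of_mem hK⟩
      obtain ⟨t, hst, htu⟩ := exists_between hsu
      let M : c → Set (ℝ × ℝ) := fun K =>
        ((K.1 ∩ Icc s t) ×ˢ (K.1 ∩ Icc t u)) ∩ {z | f z.1 = f z.2}
      have hMcl : IsClosed {z : ℝ × ℝ | f z.1 = f z.2} :=
        isClosed_eq (hf.comp continuous_fst) (hf.comp continuous_snd)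
      have hMc : ∀ K, IsCompact (M K) := fun K =>
        ((isCompact_Icc.inter_left (hc K.2).1).prod
          (isCompact_Icc.inter_left (hc K.2).1)).inter_right hMcl
      have hMne : ∀ K, (M K).Nonempty := by
        rintro ⟨K, hK⟩
        obtain ⟨a, ⟨haK, ha⟩, hamax⟩ := (isCompact_Icc.inter_left (hc hK).1).exists_isGreatest
          ⟨s, hs K hK, left_mem_Icc.2 hst.le⟩
        obtain ⟨b, ⟨hbK, hb⟩, hbmin⟩ := (isCompact_Icc.inter_left (hc hK).1).exists_isLeast
          ⟨u, hu K hK, right_mem_Icc.2 htu.le⟩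
        refine ⟨(a, b), ⟨⟨haK, ha⟩, ⟨hbK, hb⟩⟩, ?_⟩
        rcases (ha.2.trans hb.1).eq_or_lt with e | hab
        · exact congrArg f e
        · refine (hc hK).2.2.2.2 a haK b hbK hab fun k hk => ?_
          rcases le_total k t with hkt | hkt
          · rcases le_total s k with hsk | hsk
            · exact .inl (hamax ⟨hk, hsk, hkt⟩)
            · exact .inl (hsk.trans ha.1)
          · rcases le_total k u with hku | hku
            · exact .inr (hbmin ⟨hk, hkt, hku⟩)
            · exact .inr (hb.2.trans hku)
      have hMmono : ∀ K L : c, K.1 ⊆ L.1 → M K ⊆ M L := fun K L hKL =>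
        inter_subset_inter_left _ (prod_mono (inter_subset_inter_left _ hKL)
          (inter_subset_inter_left _ hKL))
      have hdir : Directed (· ⊇ ·) M := by
        intro K L
        rcases hchain.total K.2 L.2 with h | h
        · exact ⟨K, Subset.rfl, hMmono K L h⟩
        · exact ⟨L, hMmono L K h, Subset.rfl⟩
      have : Nonempty c := hne.to_subtype
      obtain ⟨⟨a, b⟩, hab⟩ := IsCompact.nonempty_iInter_of_directed_nonempty_isCompact_isClosed M
        hdir hMne hMc fun K => (hMc K).isClosed
      have hab' := fun K : c => mem_iInter.1 hab K
      have hi := hab' ⟨_, hne.some_mem⟩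
      have ha : a = s := by
        rcases h a (fun K hK => (hab' ⟨K, hK⟩).1.1.1) with h | h
        · exact le_antisymm h hi.1.1.2.1
        · exact absurd (h.trans hi.1.1.2.2) (not_le.2 htu)
      have hb : b = u := by
        rcases h b (fun K hK => (hab' ⟨K, hK⟩).1.2.1) with h | h
        · exact absurd (hi.1.2.2.1.trans h) (not_le.2 hst)
        · exact le_antisymm hi.1.2.2.2 h
      rw [← ha, ← hb]
      exact hi.2
  refine ⟨K, hK, hKI, hK0, hK1, fun s hs u hu hsu => ⟨fun hfs k hk => ?_, hgap s hs u hu hsu⟩⟩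
  have hmem : K \ Ioo s u ∈ 𝒮 := by
    refine ⟨hK.sdiff isOpen_Ioo, sdiff_subset.trans hKI,
      ⟨hK0, fun h => (hKI hs).1.not_gt h.1⟩, ⟨hK1, fun h => (hKI hu).2.not_gt h.2⟩, ?_⟩
    intro a ha b hb hab h
    by_cases hKab : ∀ k ∈ K, k ≤ a ∨ b ≤ k
    · exact hgap a ha.1 b hb.1 hab hKab
    · push Not at hKab
      obtain ⟨k, hk, hak, hkb⟩ := hKab
      have hksu : k ∈ Ioo s u := by
        by_contra hn
        rcases h k ⟨hk, hn⟩ with h | h <;> linarith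
      have hsa : s ≤ a := (h s ⟨hs, by simp⟩).resolve_right (by linarith [hksu.1])
      have hbu : b ≤ u := (h u ⟨hu, by simp⟩).resolve_left (by linarith [hksu.2])
      have has : a ≤ s := by
        by_contra hn
        exact ha.2 ⟨not_le.1 hn, hak.trans hksu.2⟩
      have hub : u ≤ b := by
        by_contra hn
        exact hb.2 ⟨hksu.1.trans hkb, not_le.1 hn⟩
      rw [le_antisymm has hsa, le_antisymm hbu hub, hfs]
  by_contra! hn
  exact (hmin hmem sdiff_subset hk).2 hn

/-- The image of a path contains an arc with the same end points. -/
theorem exists_arc_subset_path [MetricSpace X] [CompactSpace X] {f : ℝ → X}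
    (hf : Continuous f) : ∃ A ⊆ f '' Icc 0 1, IsArcBetween A (f 0) (f 1) := by
  have : Nonempty X := ⟨f 0⟩
  obtain ⟨K, hK, hKI, hK0, hK1, hgap⟩ := exists_closed_set_of_times hf
  have hKc : IsCompact K := isCompact_Icc.of_isClosed_subset hK hKI
  let d : ℕ → X := TopologicalSpace.denseSeq X
  let S : ℝ → Set X := fun t => f '' (K ∩ Iic t)
  have hSne : ∀ t ∈ K, (S t).Nonempty := fun t ht => ⟨f t, mem_image_of_mem f ⟨ht, self_mem_Iic⟩⟩
  have hSmono : ∀ s t, s ≤ t → S s ⊆ S t := fun s t hst =>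
    image_mono (inter_subset_inter_right K (Iic_subset_Iic.2 hst))
  have hSc : ∀ t, IsClosed (S t) := fun t => ((hKc.inter_right isClosed_Iic).image hf).isClosed
  let m : ℕ → ℝ → ℝ := fun i t => (1 / 2) ^ i * -infDist (d i) (S t)
  let W : ℝ → ℝ := fun t => ∑' i, m i t
  have hmmono : ∀ i, ∀ s ∈ K, ∀ t, s ≤ t → m i s ≤ m i t := fun i s hs t hst =>
    mul_le_mul_of_nonneg_left
      (neg_le_neg (infDist_le_infDist_of_subset (hSmono s t hst) (hSne s hs))) (by positivity)
  have hmbound : ∀ i, ∀ t ∈ K, ‖m i t‖ ≤ (1 / 2) ^ i * diam (univ : Set X) := by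
    intro i t ht
    rw [norm_mul, norm_neg, Real.norm_of_nonneg (by positivity), Real.norm_of_nonneg infDist_nonneg]
    gcongr
    exact (infDist_le_dist_of_mem (show f t ∈ S t from mem_image_of_mem f ⟨ht, self_mem_Iic⟩)).trans
      (dist_le_diam_of_mem isCompact_univ.isBounded (mem_univ _) (mem_univ _))
  have hsum : Summable fun i : ℕ => ((1 / 2 : ℝ)) ^ i * diam (univ : Set X) :=
    summable_geometric_two.mul_right _
  have hmsum : ∀ t ∈ K, Summable fun i => m i t := fun t ht =>
    hsum.of_norm_bounded fun i => hmbound i t ht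
  have hWmono : ∀ s ∈ K, ∀ t ∈ K, s ≤ t → W s ≤ W t := fun s hs t ht hst =>
    (hmsum s hs).tsum_le_tsum (fun i => hmmono i s hs t hst) (hmsum t ht)
  have hWcont : ContinuousOn W K := by
    refine continuousOn_tsum (fun i => continuousOn_const.mul (ContinuousOn.neg ?_)) hsum hmbound
    have huc := Metric.uniformContinuousOn_iff.1 (hKc.uniformContinuousOn_of_continuous
      hf.continuousOn)
    have key : ∀ ε > 0, ∃ δ > 0, ∀ s ∈ K, ∀ t ∈ K, s ≤ t → t - s < δ →
        infDist (d i) (S s) ≤ infDist (d i) (S t) + ε := by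
      intro ε hε
      obtain ⟨δ, hδ, h⟩ := huc ε hε
      refine ⟨δ, hδ, fun s hs t ht hst hts => ?_⟩
      rw [← sub_le_iff_le_add, le_infDist (hSne t ht)]
      rintro _ ⟨k, ⟨hkK, hkt⟩, rfl⟩
      rcases le_total k s with hks | hks
      · linarith [infDist_le_dist_of_mem (x := d i)
          (show f k ∈ S s from mem_image_of_mem f ⟨hkK, hks⟩)]
      · have h1 := infDist_le_dist_of_mem (x := d i)
          (show f s ∈ S s from mem_image_of_mem f ⟨hs, self_mem_Iic⟩)
        have h2 := h k hkK s hs (by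
          rw [Real.dist_eq, abs_of_nonneg (by linarith)]
          linarith [mem_Iic.1 hkt])
        linarith [dist_triangle (d i) (f k) (f s)]
    rw [Metric.continuousOn_iff]
    intro t ht ε hε
    obtain ⟨δ, hδ, h⟩ := key (ε / 2) (half_pos hε)
    refine ⟨δ, hδ, fun s hs hst => ?_⟩
    rw [Real.dist_eq, abs_lt] at hst ⊢
    rcases le_total s t with hle | hle
    · have h1 := h s hs t ht hle (by linarith)
      have h2 := infDist_le_infDist_of_subset (x := d i) (hSmono s t hle) (hSne s hs)
      constructor <;> linarith
    · have h1 := h t ht s hs hle (by linarith)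
      have h2 := infDist_le_infDist_of_subset (x := d i) (hSmono t s hle) (hSne t ht)
      constructor <;> linarith
  have hWf : ∀ s ∈ K, ∀ t ∈ K, s < t → (W s = W t ↔ f s = f t) := by
    intro s hs t ht hst
    constructor
    · contrapose!
      intro hne
      refine ne_of_lt ?_
      have hnot : f t ∉ S s := by
        rintro ⟨k, ⟨hkK, hks⟩, hk⟩
        rcases (hgap k hkK t ht (lt_of_le_of_lt hks hst)).1 hk s hs with h | h
        · exact hne (le_antisymm hks h ▸ hk)
        · exact h.not_gt hst
      have hρ := ((hSc s).notMem_iff_infDist_pos (hSne s hs)).1 hnot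
      obtain ⟨i, hi⟩ := (TopologicalSpace.denseRange_denseSeq X).exists_dist_lt (f t)
        (div_pos hρ (zero_lt_three' ℝ))
      refine Summable.tsum_lt_tsum (i := i) (fun j => hmmono j s hs t hst.le) ?_
        (hmsum s hs) (hmsum t ht)
      refine mul_lt_mul_of_pos_left (neg_lt_neg ?_) (by positivity)
      have h1 := infDist_le_dist_of_mem (x := d i)
        (show f t ∈ S t from mem_image_of_mem f ⟨ht, self_mem_Iic⟩)
      have h2 := infDist_le_infDist_add_dist (s := S s) (x := f t) (y := d i)
      rw [dist_comm] at h1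
      change dist (f t) (d i) < _ at hi
      linarith
    · intro hfs
      have hSS : S s = S t := by
        refine Subset.antisymm (hSmono s t hst.le) ?_
        rintro _ ⟨k, ⟨hkK, hkt⟩, rfl⟩
        rcases (hgap s hs t ht hst).1 hfs k hkK with h | h
        · exact mem_image_of_mem f ⟨hkK, h⟩
        · exact ⟨s, ⟨hs, self_mem_Iic⟩, by rw [hfs, le_antisymm h hkt]⟩
      simp only [W, m, hSS]
  have hWf' : ∀ s ∈ K, ∀ t ∈ K, (W s = W t ↔ f s = f t) := by
    intro s hs t ht
    rcases lt_trichotomy s t with h | rfl | h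
    · exact hWf s hs t ht h
    · simp
    · rw [eq_comm, hWf t ht s hs h, eq_comm]
  have hWI : ∀ k ∈ K, W k ∈ Icc (W 0) (W 1) := fun k hk =>
    ⟨hWmono 0 hK0 k hk (hKI hk).1, hWmono k hk 1 hK1 (hKI hk).2⟩
  have hsurj : ∀ y ∈ Icc (W 0) (W 1), ∃ k ∈ K, W k = y := by
    intro y hy
    obtain ⟨s, ⟨hs, hsy⟩, hsmax⟩ := (hKc.of_isClosed_subset
      (hWcont.preimage_isClosed_of_isClosed hK isClosed_Iic)
      inter_subset_left).exists_isGreatest ⟨0, hK0, hy.1⟩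
    obtain ⟨u, ⟨hu, huy⟩, humin⟩ := (hKc.of_isClosed_subset
      (hWcont.preimage_isClosed_of_isClosed hK isClosed_Ici)
      inter_subset_left).exists_isLeast ⟨1, hK1, hy.2⟩
    refine ⟨s, hs, le_antisymm hsy ?_⟩
    rcases le_or_gt u s with hus | hsu
    · exact le_trans huy (hWmono u hu s hs hus)
    · have hfe : f s = f u := (hgap s hs u hu hsu).2 fun k hk =>
        (le_total (W k) y).imp (fun h => hsmax ⟨hk, h⟩) fun h => humin ⟨hk, h⟩
      rw [(hWf s hs u hu hsu).2 hfe]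
      exact huy
  choose! σ hσK hσ using hsurj
  have hγ : ∀ k ∈ K, f (σ (W k)) = f k := fun k hk =>
    (hWf' _ (hσK _ (hWI k hk)) k hk).1 (hσ _ (hWI k hk))
  refine ⟨(f ∘ σ) '' Icc (W 0) (W 1), ?_, W 0, W 1, f ∘ σ, hWmono 0 hK0 1 hK1 zero_le_one,
    ?_, ?_, hγ 0 hK0, hγ 1 hK1, rfl⟩
  · rintro _ ⟨y, hy, rfl⟩
    exact mem_image_of_mem f (hKI (hσK y hy))
  · rw [continuousOn_iff_isClosed]
    intro Z hZ
    refine ⟨W '' (K ∩ f ⁻¹' Z), ((hKc.inter_right (hZ.preimage hf)).image_of_continuousOn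
      (hWcont.mono inter_subset_left)).isClosed, ?_⟩
    ext y
    constructor
    · rintro ⟨hyZ, hy⟩
      exact ⟨⟨σ y, ⟨hσK y hy, hyZ⟩, hσ y hy⟩, hy⟩
    · rintro ⟨⟨k, ⟨hk, hkZ⟩, rfl⟩, hy⟩
      refine ⟨?_, hy⟩
      change f (σ (W k)) ∈ Z
      rwa [hγ k hk]
  · intro y hy z hz hyz
    rw [← hσ y hy, ← hσ z hz]
    exact (hWf' _ (hσK y hy) _ (hσK z hz)).2 hyz

end PathToArc

section LocalPaths

variable {X : Type} [MetricSpace X]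

/-- Points of a connected set are joined in it by finite chains with arbitrarily small steps. -/
theorem IsPreconnected.exists_chain {C : Set X} (hC : IsPreconnected C) {δ : ℝ} (hδ : 0 < δ)
    {x y : X} (hx : x ∈ C) (hy : y ∈ C) :
    ∃ (e : ℕ → X) (n : ℕ), e 0 = x ∧ (∀ j ≥ n, e j = y) ∧ (∀ j, e j ∈ C) ∧
      ∀ j, dist (e j) (e (j + 1)) < δ := by
  have h : Relation.ReflTransGen (fun a b => a ∈ C ∧ dist a b < δ) x y := by
    refine hC.induction₂' _ (fun z hz => ?_) (fun _ _ _ _ _ _ => Relation.ReflTransGen.trans) hx hy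
    filter_upwards [self_mem_nhdsWithin, mem_nhdsWithin_of_mem_nhds (ball_mem_nhds z hδ)]
      with w hw hwz
    exact ⟨.single ⟨hz, by rwa [dist_comm]⟩, .single ⟨hw, hwz⟩⟩
  induction h using Relation.ReflTransGen.head_induction_on with
  | refl => exact ⟨fun _ => y, 0, rfl, fun _ _ => rfl, fun _ => hy, fun _ => by simpa using hδ⟩
  | @head a b hab hby ih =>
    have hb : b ∈ C := by
      rcases hby.cases_head with rfl | ⟨c, hc, -⟩
      exacts [hy, hc.1]
    obtain ⟨e, n, he0, hen, heC, hed⟩ := ih hb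
    refine ⟨fun j => Nat.casesOn j a e, n + 1, rfl, ?_, ?_, ?_⟩
    · rintro (_ | j) hj
      · omega
      · exact hen j (by omega)
    · rintro (_ | j)
      exacts [hx, heC j]
    · rintro (_ | j)
      · simpa [he0] using hab.2
      · exact hed j

theorem exists_pos_forall_dist_lt_preconnected [CompactSpace X] [LocallyConnectedSpace X] {ε : ℝ}
    (hε : 0 < ε) : ∃ δ > 0, ∀ x y : X, dist x y < δ →
      ∃ C, IsPreconnected C ∧ x ∈ C ∧ y ∈ C ∧ C ⊆ ball x ε := by
  have h := fun z : X => locallyConnectedSpace_iff_subsets_isOpen_isConnected.1 ‹_› z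
    (ball z (ε / 2)) (ball_mem_nhds z (half_pos hε))
  choose V hVb hVo hzV hVc using h
  obtain ⟨δ, hδ, H⟩ := lebesgue_number_lemma_of_metric isCompact_univ hVo
    fun z _ => mem_iUnion.2 ⟨z, hzV z⟩
  refine ⟨δ, hδ, fun x y hxy => ?_⟩
  obtain ⟨z, hz⟩ := H x (mem_univ x)
  have hx : x ∈ V z := hz (mem_ball_self hδ)
  refine ⟨V z, (hVc z).isPreconnected, hx, hz (by rwa [mem_ball, dist_comm]), fun w hw => ?_⟩
  have h1 := mem_ball.1 (hVb z hw)
  have h2 := mem_ball.1 (hVb z hx)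
  rw [mem_ball]
  linarith [dist_triangle_right w x z]

/-- Refinement of a finite chain, each step being replaced by the same number of smaller steps. -/
theorem exists_chain_refinement {δ δ' ε : ℝ} (hδ' : 0 < δ') (hε : 0 < ε)
    (H : ∀ x y : X, dist x y < δ → ∃ C, IsPreconnected C ∧ x ∈ C ∧ y ∈ C ∧ C ⊆ ball x ε)
    {N : ℕ} {c : ℕ → X} (hc : ∀ i < N, dist (c i) (c (i + 1)) < δ) :
    ∃ (m : ℕ) (c' : ℕ → X), 0 < m ∧ c' 0 = c 0 ∧ c' (N * m) = c N ∧
      (∀ k < N * m, dist (c' k) (c' (k + 1)) < δ') ∧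
      ∀ k ≤ N * m, dist (c (k / m)) (c' k) < ε := by
  have h : ∀ i, ∃ (e : ℕ → X) (n : ℕ), e 0 = c i ∧ (i < N → (∀ j ≥ n, e j = c (i + 1)) ∧
      (∀ j, e j ∈ ball (c i) ε) ∧ ∀ j, dist (e j) (e (j + 1)) < δ') := by
    intro i
    by_cases hi : i < N
    · obtain ⟨C, hC, hx, hy, hCε⟩ := H _ _ (hc i hi)
      obtain ⟨e, n, h0, h1, h2, h3⟩ := hC.exists_chain hδ' hx hy
      exact ⟨e, n, h0, fun _ => ⟨h1, fun j => hCε (h2 j), h3⟩⟩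
    · exact ⟨fun _ => c i, 0, rfl, fun h => absurd h hi⟩
  choose e n he0 he using h
  obtain ⟨m, hm0, hm⟩ : ∃ m, 0 < m ∧ ∀ i < N, n i ≤ m :=
    ⟨(Finset.range N).sup n + 1, Nat.succ_pos _, fun i hi =>
      (Finset.le_sup (Finset.mem_range.2 hi)).trans (Nat.le_succ _)⟩
  refine ⟨m, fun k => e (k / m) (k % m), hm0, by simp [he0], by simp [hm0, he0], ?_, ?_⟩
  · intro k hk
    have hi : k / m < N := Nat.div_lt_of_lt_mul (by rwa [mul_comm])
    obtain ⟨h1, h2, h3⟩ := he _ hi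
    have hkm : m * (k / m) + k % m = k := Nat.div_add_mod k m
    have hlt := Nat.mod_lt k hm0
    rcases (Nat.succ_le_of_lt hlt).lt_or_eq with h | h
    · obtain ⟨e1, e2⟩ : (k + 1) / m = k / m ∧ (k + 1) % m = k % m + 1 :=
        (Nat.div_mod_unique hm0).2 ⟨by omega, h⟩
      simp only [e1, e2]
      exact h3 _
    · have hk1 : k + 1 = m * (k / m + 1) := by
        rw [mul_add, mul_one]; omega
      have e1 : (k + 1) / m = k / m + 1 := by rw [hk1, Nat.mul_div_cancel_left _ hm0]
      have e2 : (k + 1) % m = 0 := by rw [hk1, Nat.mul_mod_right]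
      simp only [e1, e2, he0]
      have := h3 (k % m)
      rwa [h1 (k % m + 1) (by rw [Nat.succ_eq_add_one] at h; rw [h]; exact hm _ hi)] at this
  · intro k hk
    rcases hk.lt_or_eq with hk | rfl
    · have hi : k / m < N := Nat.div_lt_of_lt_mul (by rwa [mul_comm])
      rw [dist_comm]
      exact (he _ hi).2.1 _
    · simp [hm0, he0, hε]

/-- Compact locally connected metric spaces are uniformly locally path connected. -/
theorem exists_pos_forall_dist_lt_path [CompactSpace X] [LocallyConnectedSpace X] {ε : ℝ}
    (hε : 0 < ε) : ∃ δ > 0, ∀ x y : X, dist x y < δ →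
      ∃ f : ℝ → X, Continuous f ∧ f 0 = x ∧ f 1 = y ∧ ∀ t ∈ Icc (0 : ℝ) 1, dist x (f t) < ε := by
  have hr : ∀ n : ℕ, 0 < ε / 3 / 2 / 2 ^ n := fun n => by positivity
  have h : ∀ n : ℕ, ∃ δ > 0, δ ≤ ε / 3 / 2 / 2 ^ n ∧ ∀ x y : X, dist x y < δ →
      ∃ C, IsPreconnected C ∧ x ∈ C ∧ y ∈ C ∧ C ⊆ ball x (ε / 3 / 2 / 2 ^ n) := by
    intro n
    obtain ⟨δ, hδ, H⟩ := exists_pos_forall_dist_lt_preconnected (X := X) (hr n)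
    exact ⟨min δ _, lt_min hδ (hr n), min_le_right _ _, fun x y hxy =>
      H x y (hxy.trans_le (min_le_left _ _))⟩
  choose δ hδ hδr H using h
  refine ⟨δ 0, hδ 0, fun x y hxy => ?_⟩
  let Good : ℕ → ℕ × (ℕ → X) → Prop := fun n p => 0 < p.1 ∧ p.2 0 = x ∧ p.2 p.1 = y ∧
    ∀ i < p.1, dist (p.2 i) (p.2 (i + 1)) < δ n
  have hstep : ∀ n p, ∃ p' : ℕ × (ℕ → X), Good n p → Good (n + 1) p' ∧ ∃ m, 0 < m ∧
      p'.1 = p.1 * m ∧ ∀ k ≤ p'.1, dist (p.2 (k / m)) (p'.2 k) < ε / 3 / 2 / 2 ^ n := by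
    rintro n ⟨N, c⟩
    by_cases hg : Good n (N, c)
    · obtain ⟨hN, h0, h1, h2⟩ := hg
      obtain ⟨m, c', hm, h0', h1', h2', h3'⟩ :=
        exists_chain_refinement (hδ (n + 1)) (hr n) (H n) h2
      exact ⟨(N * m, c'), fun _ => ⟨⟨Nat.mul_pos hN hm, h0'.trans h0, h1'.trans h1, h2'⟩,
        m, hm, rfl, h3'⟩⟩
    · exact ⟨(N, c), fun h => absurd h hg⟩
  choose next hnext using hstep
  let p : ℕ → ℕ × (ℕ → X) := fun n => Nat.rec (1, fun i => if i = 0 then x else y) next n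
  have hgood : ∀ n, Good n (p n) := by
    intro n
    induction n with
    | zero =>
      refine ⟨one_pos, rfl, rfl, fun i hi => ?_⟩
      obtain rfl : i = 0 := Nat.lt_one_iff.1 hi
      exact hxy
    | succ n ih => exact (hnext n _ ih).1
  have hrel := fun n => (hnext n _ (hgood n)).2
  let F : ℕ → ℝ → X := fun n t => (p n).2 ⌊(p n).1 * t⌋₊
  have hFstep : ∀ t ∈ Icc (0 : ℝ) 1, ∀ n, dist (F n t) (F (n + 1) t) ≤ ε / 3 / 2 / 2 ^ n := by
    intro t ht n
    obtain ⟨m, hm, hpm, hd⟩ := hrel n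
    have hm' : (m : ℝ) ≠ 0 := by positivity
    have hfl : ⌊((p n).1 : ℝ) * t⌋₊ = ⌊((p (n + 1)).1 : ℝ) * t⌋₊ / m := by
      rw [← Nat.floor_div_natCast]
      congr 1
      change _ = ((next n (p n)).1 : ℝ) * t / m
      rw [hpm]
      push_cast
      field_simp
    have hle : ⌊((p (n + 1)).1 : ℝ) * t⌋₊ ≤ (p (n + 1)).1 :=
      Nat.floor_le_of_le (mul_le_of_le_one_right (Nat.cast_nonneg _) ht.2)
    simp only [F, hfl]
    exact (hd _ hle).le
  have hlim : ∀ t ∈ Icc (0 : ℝ) 1, ∃ z, Tendsto (fun n => F n t) atTop (nhds z) := fun t ht =>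
    cauchySeq_tendsto_of_complete (cauchySeq_of_le_geometric_two (hFstep t ht))
  have : Nonempty X := ⟨x⟩
  choose! g hg using hlim
  have hgF : ∀ t ∈ Icc (0 : ℝ) 1, ∀ n, dist (F n t) (g t) ≤ ε / 3 / 2 ^ n := fun t ht =>
    dist_le_of_le_geometric_two_of_tendsto (hFstep t ht) (hg t ht)
  have hFnear : ∀ n, ∀ s ∈ Icc (0 : ℝ) 1, ∀ t ∈ Icc (0 : ℝ) 1, s ≤ t → t - s < 1 / (p n).1 →
      dist (F n s) (F n t) < δ n := by
    intro n s hs t ht hst hts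
    obtain ⟨hN, -, -, hd⟩ := hgood n
    have hN' : (0 : ℝ) < (p n).1 := Nat.cast_pos.2 hN
    have h1 : ((p n).1 : ℝ) * t < (p n).1 * s + 1 := by
      rw [lt_div_iff₀ hN'] at hts
      linarith
    have h2 : ⌊((p n).1 : ℝ) * s⌋₊ ≤ ⌊((p n).1 : ℝ) * t⌋₊ :=
      Nat.floor_mono (mul_le_mul_of_nonneg_left hst hN'.le)
    have h3 : ⌊((p n).1 : ℝ) * t⌋₊ ≤ ⌊((p n).1 : ℝ) * s⌋₊ + 1 := by
      rw [← Nat.floor_add_one (mul_nonneg hN'.le hs.1)]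
      exact Nat.floor_mono h1.le
    have h4 : ⌊((p n).1 : ℝ) * t⌋₊ ≤ (p n).1 :=
      Nat.floor_le_of_le (mul_le_of_le_one_right (Nat.cast_nonneg _) ht.2)
    rcases h2.eq_or_lt with h | h
    · simp only [F, h, dist_self]
      exact hδ n
    · have h5 : ⌊((p n).1 : ℝ) * t⌋₊ = ⌊((p n).1 : ℝ) * s⌋₊ + 1 := le_antisymm h3 h
      simp only [F, h5]
      exact hd _ (by omega)
  have hgc : ContinuousOn g (Icc 0 1) := by
    rw [Metric.continuousOn_iff]
    intro t ht η hη
    obtain ⟨n, hn⟩ : ∃ n : ℕ, ε * (1 / 2) ^ n < η := by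
      obtain ⟨n, hn⟩ := exists_pow_lt_of_lt_one (div_pos hη hε) (one_half_lt_one (α := ℝ))
      exact ⟨n, by rwa [lt_div_iff₀' hε] at hn⟩
    have hN : (0 : ℝ) < (p n).1 := Nat.cast_pos.2 (hgood n).1
    refine ⟨1 / (p n).1, by positivity, fun s hs hst => ?_⟩
    have hF : dist (F n s) (F n t) < δ n := by
      rw [Real.dist_eq, abs_lt] at hst
      rcases le_total s t with h | h
      · exact hFnear n s hs t ht h (by linarith)
      · rw [dist_comm]
        exact hFnear n t ht s hs h (by linarith)
    have h1 := hgF s hs n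
    have h2 := hgF t ht n
    have h3 := hδr n
    have h4 := dist_triangle4 (g s) (F n s) (F n t) (g t)
    rw [dist_comm (g s) (F n s)] at h4
    have h5 : ε / 3 / 2 ^ n = ε * (1 / 2) ^ n / 3 := by
      rw [one_div, inv_pow]; ring
    have h6 : ε / 3 / 2 / 2 ^ n = ε * (1 / 2) ^ n / 6 := by
      rw [one_div, inv_pow]; ring
    have h7 : 0 < ε * (1 / 2 : ℝ) ^ n := by positivity
    linarith
  have hI0 : (0 : ℝ) ∈ Icc (0 : ℝ) 1 := by simp
  have hI1 : (1 : ℝ) ∈ Icc (0 : ℝ) 1 := by simp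
  have hF0 : ∀ n, F n 0 = x := fun n => by simpa [F] using (hgood n).2.1
  have hF1 : ∀ n, F n 1 = y := fun n => by simpa [F] using (hgood n).2.2.1
  have hg0 : g 0 = x := tendsto_nhds_unique (hg 0 hI0) (by simp [hF0])
  have hg1 : g 1 = y := tendsto_nhds_unique (hg 1 hI1) (by simp [hF1])
  refine ⟨fun t => g (projIcc 0 1 zero_le_one t), ?_, by simpa using hg0, by simpa using hg1, ?_⟩
  · exact hgc.comp_continuous (continuous_subtype_val.comp continuous_projIcc) fun t =>
      (projIcc 0 1 zero_le_one t).2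
  · intro t ht
    simp only [projIcc_of_mem _ ht]
    have h1 : dist x (F 0 t) < ε / 3 := by
      rcases ht.2.eq_or_lt with rfl | ht1
      · rw [hF1]
        have := hδr 0
        simp only [pow_zero, div_one] at this
        linarith
      · have : F 0 t = x := by
          have hfl : ⌊t⌋₊ = 0 := Nat.floor_eq_zero.2 ht1
          simp [F, p, hfl]
        rw [this, dist_self]
        positivity
    have h2 := hgF t ht 0
    simp only [pow_zero, div_one] at h2
    linarith [dist_triangle x (F 0 t) (g t)]

end LocalPaths

theorem exists_pos_forall_dist_lt_arc {X : Type} [MetricSpace X] [CompactSpace X]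
    [LocallyConnectedSpace X] {ε : ℝ} (hε : 0 < ε) :
    ∃ δ > 0, ∀ x y : X, dist x y < δ → ∃ A ⊆ ball x ε, IsArcBetween A x y := by
  obtain ⟨δ, hδ, h⟩ := exists_pos_forall_dist_lt_path (X := X) hε
  refine ⟨δ, hδ, fun x y hxy => ?_⟩
  obtain ⟨f, hf, rfl, rfl, hfε⟩ := h x y hxy
  obtain ⟨A, hA, hA'⟩ := exists_arc_subset_path hf
  refine ⟨A, fun z hz => ?_, hA'⟩
  obtain ⟨t, ht, rfl⟩ := hA hz
  rw [mem_ball, dist_comm]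
  exact hfε t ht

/-- If `(T n)` is a sequence of pairwise distinct maximal cyclic subsets of a Peano
space `X`, then `diam (T n) → 0`. -/
theorem diam_maximalCyclic_tendsto_zero
    (X : Type) [MetricSpace X] [CompactSpace X] [ConnectedSpace X] [LocallyConnectedSpace X]
    (T : ℕ → Set X) (hinj : Function.Injective T) (hmax : ∀ n, MaximalCyclic (T n)) :
    Tendsto (fun n => Metric.diam (T n)) atTop (nhds 0) := by
  rw [Metric.tendsto_atTop]
  by_contra! hcon
  obtain ⟨ε, hε, hfreq⟩ := hcon
  have hpts : ∀ N, ∃ n ≥ N, ∃ z : X × X, z.1 ∈ T n ∧ z.2 ∈ T n ∧ ε / 2 < dist z.1 z.2 := by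
    intro N
    obtain ⟨n, hn, hd⟩ := hfreq N
    refine ⟨n, hn, ?_⟩
    by_contra! hz
    have := diam_le_of_forall_dist_le (half_pos hε).le fun x hx y hy => hz (x, y) hx hy
    rw [Real.dist_eq, sub_zero, abs_of_nonneg diam_nonneg] at hd
    linarith
  choose ν hν z hz₁ hz₂ hz using hpts
  obtain ⟨δ, hδ, harc⟩ := exists_pos_forall_dist_lt_arc (X := X) (show 0 < ε / 4 by positivity)
  obtain ⟨w, -, φ, hφ, hlim⟩ := isCompact_univ.tendsto_subseq fun n => mem_univ (z n)
  obtain ⟨N, hN⟩ := Metric.cauchySeq_iff'.1 hlim.cauchySeq δ hδ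
  obtain ⟨M, hM, hne⟩ : ∃ M ≥ N, ν (φ M) ≠ ν (φ N) := by
    refine ⟨max N (ν (φ N) + 1), le_max_left _ _, ne_of_gt ?_⟩
    exact (Nat.lt_of_succ_le (le_max_right _ _)).trans_le ((hφ.id_le _).trans (hν _))
  have hd := max_lt_iff.1 (hN M hM)
  obtain ⟨A, hAb, hA⟩ := harc _ _ ((dist_comm _ _).trans_lt hd.1)
  obtain ⟨B, hBb, hB⟩ := harc _ _ ((dist_comm _ _).trans_lt hd.2)
  have hAB : Disjoint A B := by
    refine (ball_disjoint_ball ?_).mono hAb hBb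
    have := hz (φ N)
    change _ ≤ dist (z (φ N)).1 (z (φ N)).2
    linarith
  exact hne (hinj ((hmax _).eq_of_disjoint_arcs (hmax _) hA hB hAB (hz₁ _) (hz₂ _) (hz₁ _)
    (hz₂ _))).symm
end
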